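/- arXiv:2409.09346 — 3 statements merged into one kernel-verified Lean document; each statement's English description precedes it below -/
import Mathlib

section
/- Let c > 𝐝 be an integer and set A = ⊕_{n≥0} (Iⁿ)_{cn} and B = ⊕_{n≥0} (Jⁿ)_{cn}, the (c,1)-diagonal subalgebras, which are standard graded k-algebras with A ⊆ B. If f_{{Iⁿ}}(c) = f_{{Jⁿ}}(c), then the canonical inclusion A ↪ B is an integral extension of rings, i.e., every element of B is integral over A. -/
/-!
Suppose some `b ∈ J_c` gives an element `x = bX` of `B ⊆ R[X]` that is not integral over `A`. Then
`x⁻¹` is a nonzero nonunit of the domain `A[x⁻¹]` (inside the fraction field of `R[X]`), because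
`x ∈ A[x⁻¹]` would make `x` integral over `A`. Since `c > 𝐝`, the ideal `I` has a nonzero form `g` of
degree `c - 1`, and `r ↦ r gᵐ Xᵐ` for `r ∈ R_m` embeds `R` in `A`; so `A[x⁻¹]` contains a polynomial
ring in `d = dim R` variables. By a principal ideal theorem for affine domains (`aux_algInd_quot`),
the quotient `Q = A[x⁻¹] ⧸ (x⁻¹)`, which is a quotient of `A`, contains `d - 1` algebraically
independent elements; hence the images in `Q` of the graded pieces of `A` of index at most `n` have
total dimension at least a positive multiple of `n ^ (d - 1)` (`aux_piece_count`).

The subspace `∑_j (I^(n-j))_{c(n-j)} bʲ` of `(Jⁿ)_{cn}` is filtered by the powers of `b`. An element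
`a ∈ A` of index `n - i` with `a bⁱ` in the span of the lower steps is divisible by `x⁻¹`, so it
vanishes in `Q`. Therefore the `i`-th step contributes at least the dimension of the image in `Q` of
the piece of index `n - i`, while the step `i = 0` is `(Iⁿ)_{cn}` itself (`aux_filtration`). So
`ℓ((Jⁿ)_{cn})` exceeds `ℓ((Iⁿ)_{cn})` by at least a positive multiple of `n ^ (d - 1)`. Both are
`O(n ^ (d - 1))` by `aux_hilbert_bound`, and so the density functions differ at `c`.

Hence every `bX` with `b ∈ J_c` is integral over `A`, and these elements generate `B` because
`c ≥ 𝐝` (`aux_comp_pow`).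
-/

open Filter Polynomial MeasureTheory

noncomputable section DensityDefs

variable (k : Type*) [Field k] {R : Type*} [CommRing R] [Algebra k R]

/-- The degree-`m` homogeneous component of an ideal `I` of a graded algebra,
as a `k`-subspace of `R`. -/
def idealComp (𝒜 : ℕ → Submodule k R) (I : Ideal R) (m : ℕ) : Submodule k R :=
  (Submodule.restrictScalars k I) ⊓ 𝒜 m

/-- `ℓ_k((I)_m)`, the `k`-dimension of the degree-`m` component of `I`. -/
def compLen (𝒜 : ℕ → Submodule k R) (I : Ideal R) (m : ℕ) : ℕ :=
  Module.finrank k (idealComp k 𝒜 I m)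

/-- The adic density function `f_{{Iⁿ}}(x) = limsup_n d!·ℓ_k((Iⁿ)_{⌊xn⌋})/n^(d-1)`. -/
def adicDensity (𝒜 : ℕ → Submodule k R) (I : Ideal R) (d : ℕ) (x : ℝ) : ℝ :=
  Filter.limsup (fun n : ℕ =>
    (Nat.factorial d : ℝ) * (compLen k 𝒜 (I ^ n) (⌊x * (n : ℝ)⌋₊)) / (n : ℝ) ^ (d - 1))
    Filter.atTop

/-- `I` can be generated by homogeneous elements of degree at most `D`. -/
def GeneratedInDegLE (𝒜 : ℕ → Submodule k R) (I : Ideal R) (D : ℕ) : Prop :=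
  ∃ s : Set R, I = Ideal.span s ∧ ∀ r ∈ s, ∃ i ≤ D, r ∈ 𝒜 i

/-- The standard graded hypotheses: `R₀ = k·1`, `R` is generated in degree one, and
the degree-one piece is finitely generated (so `R` is a finitely generated `k`-algebra). -/
def IsStandardGraded (𝒜 : ℕ → Submodule k R) : Prop :=
  𝒜 0 = Submodule.span k {(1 : R)} ∧ (∀ n : ℕ, 𝒜 (n + 1) = 𝒜 1 * 𝒜 n) ∧ (𝒜 1).FG

/-- `r` satisfies an equation of integral dependence over the ideal `I`:
`r^n + a₁ r^(n-1) + ⋯ + aₙ = 0` with `aᵢ ∈ Iⁱ`. -/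
def IsIntOverIdeal {R : Type*} [CommRing R] (I : Ideal R) (r : R) : Prop :=
  ∃ n : ℕ, 0 < n ∧ ∃ a : ℕ → R, (∀ i, 1 ≤ i → i ≤ n → a i ∈ I ^ i) ∧
    r ^ n + ∑ i ∈ Finset.Icc 1 n, a i * r ^ (n - i) = 0

/-- The integral closure `Ī` of an ideal `I` (the set of elements integral over `I`
is an ideal, so taking the span does not change the set). -/
def intCl {R : Type*} [CommRing R] (I : Ideal R) : Ideal R :=
  Ideal.span {r | IsIntOverIdeal I r}

/-- The height of an ideal: the infimum of the heights of the primes containing it. -/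
def idealHeight {R : Type*} [CommRing R] (I : Ideal R) : ℕ∞ :=
  ⨅ p ∈ {p : PrimeSpectrum R | I ≤ p.asIdeal}, Order.height p

/-- The saturation `I :_R M^∞ = ⋃_t (I :_R M^t)`. -/
def satIdeal {R : Type*} [CommRing R] (I M : Ideal R) : Ideal R :=
  ⨆ t : ℕ, Submodule.colon (I : Submodule R R) ((M ^ t : Ideal R) : Submodule R R)

/-- The saturation density function `f_{{Ĩⁿ}}(x) = limsup_n d!·ℓ_k((Iⁿ:M^∞)_{⌊xn⌋})/n^(d-1)`. -/
def satDensity (𝒜 : ℕ → Submodule k R) (I M : Ideal R) (d : ℕ) (x : ℝ) : ℝ :=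
  Filter.limsup (fun n : ℕ =>
    (Nat.factorial d : ℝ) * (compLen k 𝒜 (satIdeal (I ^ n) M) (⌊x * (n : ℝ)⌋₊)) /
      (n : ℝ) ^ (d - 1)) Filter.atTop

/-- The `k`-dimension of the quotient `A/B` of two `k`-subspaces.  For ideals `B ⊆ A`
of a standard graded `k`-algebra whose quotient has finite length, this agrees with the
length `ℓ_R(A/B)`, since the residue field at the irrelevant maximal ideal is `k`. -/
def quotDim {R : Type*} [CommRing R] [Algebra k R] (A B : Submodule k R) : ℕ :=
  Module.finrank k (↥A ⧸ Submodule.comap A.subtype B)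

/-- The epsilon multiplicity `ε(I) = limsup_n d!·ℓ((Iⁿ : M^∞)/Iⁿ)/n^d`. -/
def epsMult {R : Type*} [CommRing R] [Algebra k R] (I M : Ideal R) (d : ℕ) : ℝ :=
  Filter.limsup (fun n : ℕ =>
    (Nat.factorial d : ℝ) *
      (quotDim k (Submodule.restrictScalars k (satIdeal (I ^ n) M))
        (Submodule.restrictScalars k (I ^ n))) / (n : ℝ) ^ d) Filter.atTop

/-- The integers `e i` are the RA-multiplicities of `I` (in dimension `d`, with `D` a
bound for the generating degrees of `I`): for `m ≥ D·n + m₀` and `n ≥ n₀` the length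
`ℓ_k((Iⁿ)_m)` agrees with a numerical polynomial of total degree `d-1` whose
top-degree homogeneous part is `Σᵢ (e i)/(i!(d-1-i)!)·mⁱ·n^(d-1-i)`. -/
def HasRAMult (𝒜 : ℕ → Submodule k R) (I : Ideal R) (d D : ℕ) (e : ℕ → ℤ) : Prop :=
  ∃ (a : ℕ → ℕ → ℚ) (m₀ n₀ : ℕ),
    (∀ i j, d - 1 < i + j → a i j = 0) ∧
    (∀ i, i ≤ d - 1 →
      a i (d - 1 - i) = (e i : ℚ) / ((Nat.factorial i : ℚ) * (Nat.factorial (d - 1 - i) : ℚ))) ∧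
    (∀ m n : ℕ, n₀ ≤ n → D * n + m₀ ≤ m →
      (compLen k 𝒜 (I ^ n) m : ℚ) =
        ∑ i ∈ Finset.range d, ∑ j ∈ Finset.range d, a i j * (m : ℚ) ^ i * (n : ℚ) ^ j)

/-- `L` is the Hilbert–Samuel multiplicity of the `(c,1)`-diagonal subalgebra
`R[It]_{Δ(c,1)} = ⊕ₙ (Iⁿ)_{cn}`, i.e. `L = lim_n (d-1)!·ℓ_k((Iⁿ)_{cn})/n^(d-1)`. -/
def HasDiagMult (𝒜 : ℕ → Submodule k R) (I : Ideal R) (d c : ℕ) (L : ℝ) : Prop :=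
  Filter.Tendsto (fun n : ℕ =>
    (Nat.factorial (d - 1) : ℝ) * (compLen k 𝒜 (I ^ n) (c * n)) / (n : ℝ) ^ (d - 1))
    Filter.atTop (nhds L)

/-- The degree-`s` homogeneous component of `S = R[Y]` where `Y` has degree `1`:
polynomials `p` with `p.coeff t ∈ 𝒜 (s - t)` for `t ≤ s` and `p.coeff t = 0` for `t > s`. -/
def polyGrade (𝒜 : ℕ → Submodule k R) (s : ℕ) : Submodule k (Polynomial R) :=
  ⨅ t : ℕ, Submodule.comap ((Polynomial.lcoeff R t).restrictScalars k)
    (if t ≤ s then 𝒜 (s - t) else ⊥)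

/-- `ℓ_k((𝖨ⁿ)_s)` where `𝖨 = IS ⊆ S = R[Y]`. -/
def polyCompLen (𝒜 : ℕ → Submodule k R) (I : Ideal R) (n s : ℕ) : ℕ :=
  Module.finrank k
    ↥((Submodule.restrictScalars k ((Ideal.map (Polynomial.C : R →+* Polynomial R) I) ^ n)) ⊓
      polyGrade k 𝒜 s)

/-- `L` is the Hilbert–Samuel multiplicity of the `(c,1)`-diagonal subalgebra
`S[𝖨t]_{Δ(c,1)} = ⊕ₙ (𝖨ⁿ)_{cn}` of the Rees algebra over `S = R[Y]`,
i.e. `L = lim_n d!·ℓ_k((𝖨ⁿ)_{cn})/n^d`. -/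
def HasPolyDiagMult (𝒜 : ℕ → Submodule k R) (I : Ideal R) (d c : ℕ) (L : ℝ) : Prop :=
  Filter.Tendsto (fun n : ℕ =>
    (Nat.factorial d : ℝ) * (polyCompLen k 𝒜 I n (c * n)) / (n : ℝ) ^ d)
    Filter.atTop (nhds L)

/-- The integers `em i` are the mixed multiplicities `e_i(M|a)` of the pair `(M, a)`
in a ring `T` of dimension `e`: for `u, v ≫ 0`, `ℓ_T(M^u a^v / M^(u+1) a^v)` agrees with
a numerical polynomial of total degree `e-1` whose top-degree homogeneous part is
`Σᵢ (em i)/(i!(e-1-i)!)·u^(e-1-i)·vⁱ`.  (Lengths are recorded as `k`-dimensions, which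
agree with `ℓ_T` since the residue field is `k`.) -/
def HasMixedMult {T : Type*} [CommRing T] [Algebra k T] (M a : Ideal T) (e : ℕ)
    (em : ℕ → ℤ) : Prop :=
  ∃ (c : ℕ → ℕ → ℚ) (u₀ v₀ : ℕ),
    (∀ i j, e - 1 < i + j → c i j = 0) ∧
    (∀ i, i ≤ e - 1 →
      c (e - 1 - i) i = (em i : ℚ) / ((Nat.factorial i : ℚ) * (Nat.factorial (e - 1 - i) : ℚ))) ∧
    (∀ u v : ℕ, u₀ ≤ u → v₀ ≤ v →
      (quotDim k (Submodule.restrictScalars k ((M ^ u * a ^ v : Ideal T) : Submodule T T))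
          (Submodule.restrictScalars k ((M ^ (u + 1) * a ^ v : Ideal T) : Submodule T T)) : ℚ) =
        ∑ i ∈ Finset.range e, ∑ j ∈ Finset.range e, c i j * (u : ℚ) ^ i * (v : ℚ) ^ j)

end DensityDefs

/-! ### Divisibility in integral extensions and the principal ideal theorem -/

/-- An injective integral extension preserves Krull dimension: incomparability gives `≤`, lying over
and going up give `≥`. -/
theorem aux_ringKrullDim_eq {P S : Type*} [CommRing P] [CommRing S] [Algebra P S]
    [Algebra.IsIntegral P S] (hinj : Function.Injective (algebraMap P S)) :
    ringKrullDim S = ringKrullDim P := by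
  apply le_antisymm
  · refine Order.krullDim_le_of_strictMono (PrimeSpectrum.comap (algebraMap P S)) ?_
    intro p q hpq
    exact Ideal.IsIntegral.comap_lt_comap hpq
  · refine iSup_le fun l => ?_
    obtain ⟨Q, -, hQ, hQl⟩ := Ideal.exists_ideal_over_prime_of_isIntegral (S := S)
      (RelSeries.head l).asIdeal ⊥ (by
        rw [Ideal.comap_bot_of_injective _ hinj]; exact bot_le)
    have : Q.LiesOver (RelSeries.head l).asIdeal := ⟨hQl.symm⟩
    obtain ⟨L, hL, -, -⟩ := Ideal.exists_ltSeries_of_hasGoingUp (S := S) l Q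
    rw [← hL]
    exact le_iSup (fun L : LTSeries (PrimeSpectrum S) => ((L.length : ℕ) : WithBot ℕ∞)) L

/-- A norm argument. Let `P` be a normal domain and `S` an integral domain extension. If `u` divides
`g ∈ P` in `S`, then the constant term of the minimal polynomial of `u` divides a power of `g` in
`P`. With `u * h = g`, reversing and rescaling the minimal polynomial of `u` by powers of `g` gives a
multiple of the minimal polynomial of `h`, of the same degree by symmetry in `u` and `h`; hence it is
a constant multiple, and comparing constant terms gives the claim. -/
theorem aux_dvd_pow {P S : Type*} [CommRing P] [IsDomain P] [IsIntegrallyClosed P]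
    [CommRing S] [IsDomain S] [Algebra P S] [Algebra.IsIntegral P S]
    (hinj : Function.Injective (algebraMap P S)) (u h : S) (g : P) (hg : g ≠ 0)
    (huh : u * h = algebraMap P S g) :
    (minpoly P u).coeff 0 ∣ g ^ (minpoly P u).natDegree := by
  have : Module.IsTorsionFree P S := by
    rw [← faithfulSMul_iff_algebraMap_injective] at hinj
    infer_instance
  have key : ∀ u h : S, u * h = algebraMap P S g →
      Polynomial.aeval h (∑ i ∈ Finset.range ((minpoly P u).natDegree + 1),
        Polynomial.C ((minpoly P u).coeff i * g ^ i) *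
          Polynomial.X ^ ((minpoly P u).natDegree - i)) = 0 := by
    intro u h huh
    have h1 := minpoly.aeval P u
    rw [Polynomial.aeval_eq_sum_range] at h1
    have h2 := congrArg (· * h ^ (minpoly P u).natDegree) h1
    simp only [zero_mul, Finset.sum_mul] at h2
    rw [map_sum, ← h2]
    refine Finset.sum_congr rfl fun i hi => ?_
    have hi' : i ≤ (minpoly P u).natDegree := by
      have := Finset.mem_range.1 hi; omega
    have h3 : h ^ (minpoly P u).natDegree = h ^ i * h ^ ((minpoly P u).natDegree - i) := by
      rw [← pow_add]; congr 1; omega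
    rw [h3, map_mul, map_pow, Polynomial.aeval_X, Polynomial.aeval_C, map_mul, map_pow, ← huh,
      Algebra.smul_def]
    ring
  have hcoeff : ∀ q : P[X], ∀ j, j ≤ q.natDegree →
      (∑ i ∈ Finset.range (q.natDegree + 1), Polynomial.C (q.coeff i * g ^ i) *
          Polynomial.X ^ (q.natDegree - i)).coeff j
        = q.coeff (q.natDegree - j) * g ^ (q.natDegree - j) := by
    intro q j hj
    rw [Polynomial.finsetSum_coeff, Finset.sum_eq_single (q.natDegree - j)]
    · rw [Polynomial.coeff_C_mul, Polynomial.coeff_X_pow, if_pos (by omega), mul_one]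
    · intro i hi hne
      have := Finset.mem_range.1 hi
      rw [Polynomial.coeff_C_mul, Polynomial.coeff_X_pow, if_neg (by omega), mul_zero]
    · intro hh; exact absurd (Finset.mem_range.2 (by omega)) hh
  have hdeg : ∀ q : P[X],
      (∑ i ∈ Finset.range (q.natDegree + 1), Polynomial.C (q.coeff i * g ^ i) *
          Polynomial.X ^ (q.natDegree - i)).natDegree ≤ q.natDegree := by
    intro q
    refine Polynomial.natDegree_sum_le_of_forall_le _ _ fun i hi => ?_
    exact (Polynomial.natDegree_C_mul_X_pow_le _ _).trans (by omega)
  have main : ∀ u h : S, u * h = algebraMap P S g →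
      (minpoly P h).natDegree ≤ (minpoly P u).natDegree ∧
      minpoly P h ∣ (∑ i ∈ Finset.range ((minpoly P u).natDegree + 1),
        Polynomial.C ((minpoly P u).coeff i * g ^ i) *
          Polynomial.X ^ ((minpoly P u).natDegree - i)) ∧
       (∑ i ∈ Finset.range ((minpoly P u).natDegree + 1),
        Polynomial.C ((minpoly P u).coeff i * g ^ i) *
          Polynomial.X ^ ((minpoly P u).natDegree - i)) ≠ 0 := by
    intro u h huh
    have h0 := hcoeff (minpoly P u) 0 (Nat.zero_le _)
    have hd := minpoly.isIntegrallyClosed_dvd (Algebra.IsIntegral.isIntegral (R := P) h)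
      (key u h huh)
    have hne : (∑ i ∈ Finset.range ((minpoly P u).natDegree + 1),
        Polynomial.C ((minpoly P u).coeff i * g ^ i) *
          Polynomial.X ^ ((minpoly P u).natDegree - i)) ≠ 0 := by
      intro h00
      rw [h00] at h0
      have hm := minpoly.monic (Algebra.IsIntegral.isIntegral (R := P) u)
      rw [Nat.sub_zero, Polynomial.coeff_natDegree, hm.leadingCoeff, one_mul] at h0
      exact pow_ne_zero _ hg h0.symm
    exact ⟨(Polynomial.natDegree_le_of_dvd hd hne).trans (hdeg _), hd, hne⟩
  obtain ⟨h1, ⟨s, hs⟩, hne⟩ := main u h huh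
  obtain ⟨h2, -, -⟩ := main h u (by rw [mul_comm]; exact huh)
  have hmu := minpoly.monic (Algebra.IsIntegral.isIntegral (R := P) u)
  have hmh := minpoly.monic (Algebra.IsIntegral.isIntegral (R := P) h)
  have hs0 : s ≠ 0 := by rintro rfl; rw [mul_zero] at hs; exact hne hs
  have hsd : s.natDegree = 0 := by
    have := hdeg (minpoly P u)
    rw [hs, hmh.natDegree_mul' hs0] at this
    omega
  rw [Polynomial.eq_C_of_natDegree_eq_zero hsd] at hs
  have c0 := hcoeff (minpoly P u) 0 (Nat.zero_le _)
  have cm := hcoeff (minpoly P u) _ le_rfl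
  rw [hs, Polynomial.coeff_mul_C, Nat.sub_zero, Polynomial.coeff_natDegree, hmu.leadingCoeff,
    one_mul] at c0
  rw [hs, Polynomial.coeff_mul_C, Nat.sub_self, pow_zero, mul_one, le_antisymm h2 h1,
    Polynomial.coeff_natDegree, hmh.leadingCoeff, one_mul] at cm
  rw [← c0, ← cm]
  exact Dvd.intro_left _ rfl

/-- A domain containing a polynomial ring in `d` variables and integral over the image of one in `s`
variables has `d ≤ s`, by transcendence degree. -/
theorem aux_le_of_integral {k C : Type*} [Field k] [CommRing C] [IsDomain C] [Algebra k C]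
    {d s : ℕ} (φ : MvPolynomial (Fin d) k →ₐ[k] C) (hφ : Function.Injective φ)
    (g : MvPolynomial (Fin s) k →ₐ[k] C) (hg : g.IsIntegral) : d ≤ s := by
  have h1 := lift_trdeg_le_of_injective φ hφ
  have : Algebra.IsAlgebraic (Algebra.adjoin k (Set.range fun i => g (MvPolynomial.X i))) C := by
    constructor
    intro x
    refine IsIntegral.isAlgebraic ?_
    obtain ⟨p, hp, hpx⟩ := hg x
    let f : MvPolynomial (Fin s) k →ₐ[k]
        Algebra.adjoin k (Set.range fun i => g (MvPolynomial.X i)) :=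
      MvPolynomial.aeval fun i => ⟨g (MvPolynomial.X i), Algebra.subset_adjoin ⟨i, rfl⟩⟩
    have hf : (Algebra.adjoin k (Set.range fun i => g (MvPolynomial.X i))).val.comp f = g := by
      ext i; simp [f]
    refine ⟨p.map f.toRingHom, hp.map _, ?_⟩
    rw [Polynomial.eval₂_map]
    have h0 : (algebraMap (Algebra.adjoin k (Set.range fun i => g (MvPolynomial.X i))) C).comp
        f.toRingHom = g.toRingHom := congrArg AlgHom.toRingHom hf
    rw [h0]
    exact hpx
  have h2 := Algebra.IsAlgebraic.trdeg_le_cardinalMk k (A := C) (Set.range fun i => g (MvPolynomial.X i))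
  have h3 : Cardinal.mk (Set.range fun i => g (MvPolynomial.X i)) ≤ (s : Cardinal) := by
    have := Cardinal.mk_range_le_lift (f := fun i => g (MvPolynomial.X i))
    simpa using this
  have h4 := h2.trans h3
  rw [MvPolynomial.trdeg_of_isDomain] at h1
  have h5 := h1.trans (Cardinal.lift_le.2 h4)
  simpa using h5

/-- A form of Krull's principal ideal theorem for affine domains: if the affine domain `C` contains a
polynomial ring in `d` variables and `u` is a nonzero nonunit, then `C ⧸ (u)` contains `d - 1`
algebraically independent elements. Over a Noether normalization `P`, the constant term `p` of the
minimal polynomial of `u` is not constant, so it involves some variable `j`. The other variables stay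
independent modulo `u`: a relation would be a polynomial free of `j` divisible by `u` in `C`, and by
`aux_dvd_pow` a power of it would be divisible by `p`. -/
theorem aux_algInd_quot {k C : Type*} [Field k] [CommRing C] [IsDomain C] [Algebra k C]
    [Algebra.FiniteType k C] {d : ℕ} (φ : MvPolynomial (Fin d) k →ₐ[k] C)
    (hφ : Function.Injective φ) (u : C) (hu0 : u ≠ 0) (hu : ¬ IsUnit u) :
    ∃ z : Fin (d - 1) → C,
      AlgebraicIndependent k (fun i => Ideal.Quotient.mk (Ideal.span {u}) (z i)) := by
  obtain ⟨s, g, hginj, hgint⟩ := exists_integral_inj_algHom_of_fg k C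
  have hds := aux_le_of_integral φ hφ g hgint
  let _ : Algebra (MvPolynomial (Fin s) k) C := g.toRingHom.toAlgebra
  have : Algebra.IsIntegral (MvPolynomial (Fin s) k) C := ⟨hgint⟩
  have : Module.IsTorsionFree (MvPolynomial (Fin s) k) C := by
    have := (faithfulSMul_iff_algebraMap_injective (MvPolynomial (Fin s) k) C).2 hginj
    infer_instance
  have hui := Algebra.IsIntegral.isIntegral (R := MvPolynomial (Fin s) k) u
  set p := (minpoly (MvPolynomial (Fin s) k) u).coeff 0 with hp
  have hp0 : p ≠ 0 := by
    intro h0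
    have h1 := minpoly.aeval (MvPolynomial (Fin s) k) u
    have h2 := Polynomial.divX_mul_X_add (minpoly (MvPolynomial (Fin s) k) u)
    rw [← hp, h0, map_zero, add_zero] at h2
    rw [← h2, map_mul, Polynomial.aeval_X] at h1
    have h3 := minpoly.isIntegrallyClosed_dvd hui ((mul_eq_zero.1 h1).resolve_right hu0)
    have h4 : (minpoly (MvPolynomial (Fin s) k) u).divX ≠ 0 := by
      intro h
      rw [h, zero_mul] at h2
      exact (minpoly.monic hui).ne_zero h2.symm
    have h5 := Polynomial.natDegree_le_of_dvd h3 h4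
    rw [Polynomial.natDegree_divX_eq_natDegree_tsub_one] at h5
    have := minpoly.natDegree_pos hui
    omega
  have hpu : ¬ IsUnit p := by
    intro h
    apply hu
    have h1 := minpoly.aeval (MvPolynomial (Fin s) k) u
    rw [← Polynomial.divX_mul_X_add (minpoly (MvPolynomial (Fin s) k) u), map_add, map_mul,
      Polynomial.aeval_X, Polynomial.aeval_C] at h1
    have h2 : IsUnit (algebraMap (MvPolynomial (Fin s) k) C p) := h.map _
    rw [← hp, add_eq_zero_iff_eq_neg] at h1
    exact isUnit_of_mul_isUnit_right (h1 ▸ h2.neg)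
  obtain ⟨j, hj⟩ : ∃ j, p.degreeOf j ≠ 0 := by
    by_contra! hall
    have h1 : p.vars = ∅ :=
      Finset.eq_empty_of_forall_notMem fun i hi =>
        MvPolynomial.mem_vars_iff_degreeOf_ne_zero.1 hi (hall i)
    have h2 := MvPolynomial.vars_eq_empty_iff_eq_C.1 h1
    refine hpu (MvPolynomial.isUnit_iff_eq_C_of_isReduced.2 ⟨_, ?_, h2⟩)
    refine isUnit_iff_ne_zero.2 fun h => hp0 ?_
    rw [h2, h, map_zero]
  obtain ⟨emb⟩ : Nonempty (Fin (d - 1) ↪ {i : Fin s // i ≠ j}) := by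
    apply Function.Embedding.nonempty_of_card_le
    simp
    omega
  refine ⟨fun i => g (MvPolynomial.X (emb i).1), ?_⟩
  rw [algebraicIndependent_iff]
  intro q hq
  by_contra hq0
  set G := MvPolynomial.rename (fun i => (emb i).1) q with hG
  have hinj : Function.Injective (fun i => (emb i).1) := Subtype.val_injective.comp emb.injective
  have hG0 : G ≠ 0 := fun h => hq0 (MvPolynomial.rename_injective _ hinj (by rw [map_zero]; exact h))
  have hGj : G.degreeOf j = 0 := by
    by_contra hne
    have := MvPolynomial.mem_vars_iff_degreeOf_ne_zero.2 hne
    obtain ⟨i, -, hi⟩ := Finset.mem_image.1 (MvPolynomial.vars_rename _ _ this)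
    exact (emb i).2 hi
  have hmem : g G ∈ Ideal.span {u} := by
    rw [← Ideal.Quotient.eq_zero_iff_mem, ← hq]
    have : ((Ideal.Quotient.mkₐ k (Ideal.span {u})).comp (g.comp
      (MvPolynomial.rename (fun i => (emb i).1)))) = MvPolynomial.aeval
      (fun i => Ideal.Quotient.mk (Ideal.span {u}) (g (MvPolynomial.X (emb i).1))) := by
      ext i; simp
    rw [← this]; rfl
  obtain ⟨h, hh⟩ := Ideal.mem_span_singleton'.1 hmem
  obtain ⟨r, hr⟩ := aux_dvd_pow hginj u h G hG0 (by rw [mul_comm]; exact hh)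
  have hr0 : r ≠ 0 := by
    rintro rfl
    rw [mul_zero] at hr
    exact pow_ne_zero _ hG0 hr
  have := congrArg (MvPolynomial.degreeOf j) hr
  rw [MvPolynomial.degreeOf_pow_eq _ _ _ hG0, MvPolynomial.degreeOf_mul_eq hp0 hr0, hGj] at this
  omega

/-! ### Growth of filtrations -/

/-- A multiplicative filtration that contains `r` algebraically independent elements grows at least
like `n ^ r`, since it contains the monomials in these elements. -/
theorem aux_count {k Q : Type*} [Field k] [CommRing Q] [Algebra k Q] (V : ℕ → Submodule k Q)
    (hmono : Monotone V) (hmul : ∀ m n, V m * V n ≤ V (m + n)) (hone : 1 ∈ V 0)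
    [∀ m, FiniteDimensional k (V m)] {r : ℕ} (z : Fin r → Q) (hz : AlgebraicIndependent k z)
    (hzV : ∀ i, ∃ m, z i ∈ V m) :
    ∃ N, 0 < N ∧ ∀ n, n ^ r ≤ Module.finrank k (V (N * n)) := by
  choose M hM using hzV
  set N₀ := ∑ i, M i with hN₀
  have hzN : ∀ i, z i ∈ V N₀ := fun i =>
    hmono (Finset.single_le_sum (fun _ _ => Nat.zero_le _) (Finset.mem_univ i)) (hM i)
  have hpow : ∀ i e, z i ^ e ∈ V (N₀ * e) := by
    intro i e
    induction e with
    | zero => simpa using hone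
    | succ e ih =>
      rw [pow_succ, mul_add_one]
      exact hmul _ _ (Submodule.mul_mem_mul ih (hzN i))
  have hprod : ∀ (e : Fin r → ℕ) (s : Finset (Fin r)),
      ∏ i ∈ s, z i ^ e i ∈ V (∑ i ∈ s, N₀ * e i) := by
    intro e s
    induction s using Finset.cons_induction with
    | empty => simpa using hone
    | cons a s ha ih =>
      rw [Finset.prod_cons, Finset.sum_cons]
      exact hmul _ _ (Submodule.mul_mem_mul (hpow _ _) ih)
  refine ⟨N₀ * r + 1, Nat.succ_pos _, fun n => ?_⟩
  have hlin : LinearIndependent k (fun e : Fin r → Fin n => ∏ i, z i ^ (e i : ℕ)) := by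
    have h1 := (MvPolynomial.basisMonomials (Fin r) k).linearIndependent.map'
      (MvPolynomial.aeval z).toLinearMap (LinearMap.ker_eq_bot.2 hz)
    have h2 := h1.comp (fun e : Fin r → Fin n => Finsupp.equivFunOnFinite.symm
      (fun i => (e i : ℕ))) (by
        intro e e' h
        have := Finsupp.equivFunOnFinite.symm.injective h
        funext i
        exact Fin.ext (congrFun this i))
    have h3 : ((MvPolynomial.aeval z).toLinearMap ∘ MvPolynomial.basisMonomials (Fin r) k) ∘
        (fun e : Fin r → Fin n => Finsupp.equivFunOnFinite.symm (fun i => (e i : ℕ))) =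
        fun e : Fin r → Fin n => ∏ i, z i ^ (e i : ℕ) := by
      funext e
      simp [MvPolynomial.aeval_monomial, Finsupp.prod_fintype]
    rw [← h3]
    exact h2
  have hmem : ∀ e : Fin r → Fin n, ∏ i, z i ^ (e i : ℕ) ∈ V ((N₀ * r + 1) * n) := by
    intro e
    refine hmono ?_ (hprod (fun i => e i) Finset.univ)
    calc ∑ i, N₀ * (e i : ℕ) ≤ ∑ i : Fin r, N₀ * n :=
          Finset.sum_le_sum fun i _ => Nat.mul_le_mul_left _ (e i).2.le
      _ = N₀ * r * n := by simp; ring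
      _ ≤ _ := by nlinarith
  have h3 : LinearIndependent k (fun e : Fin r → Fin n =>
      (⟨∏ i, z i ^ (e i : ℕ), hmem e⟩ : V ((N₀ * r + 1) * n))) :=
    LinearIndependent.of_comp (V ((N₀ * r + 1) * n)).subtype hlin
  simpa using h3.fintype_card_le_finrank

theorem aux_finrank_restrict (k : Type*) [Field k] (d N : ℕ) :
    Module.finrank k (MvPolynomial.restrictTotalDegree (Fin d) k N) ≤ (N + 1) ^ d := by
  refine (Submodule.finrank_mono
    (MvPolynomial.restrictTotalDegree_le_restrictDegree (σ := Fin d) k N)).trans ?_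
  have hb := Module.finrank_eq_nat_card_basis (MvPolynomial.basisRestrictSupport k
    {n : Fin d →₀ ℕ | ∀ i, n i ≤ N})
  refine (le_of_eq hb).trans ?_
  have : Nat.card (Fin d → Fin (N + 1)) = (N + 1) ^ d := by simp
  rw [← this]
  refine Nat.card_le_card_of_injective (fun (f : {n : Fin d →₀ ℕ | ∀ i, n i ≤ N}) i =>
    (⟨f.1 i, Nat.lt_succ_of_le (f.2 i)⟩ : Fin (N + 1))) ?_
  intro f f' h
  apply Subtype.ext
  ext i
  exact congrArg Fin.val (congrFun h i)

/-- A finite algebra over a polynomial ring in `d` variables has a filtration `T` of growth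
`O(N ^ d)`, in which multiplication by a given finite-dimensional subspace `W` raises the index by
a bounded amount. -/
theorem aux_growth {k R : Type*} [Field k] [CommRing R] [Algebra k R] {d : ℕ}
    (g : MvPolynomial (Fin d) k →ₐ[k] R) (hg : g.Finite) (W : Submodule k R) (hW : W.FG) :
    ∃ (T : ℕ → Submodule k R) (G δ δ₀ : ℕ), Monotone T ∧ (∀ N, FiniteDimensional k (T N)) ∧
      (∀ N, Module.finrank k (T N) ≤ G * (N + 1) ^ d) ∧ (∀ N, W * T N ≤ T (N + δ)) ∧
      (1 ∈ T δ₀) := by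
  let _ : Algebra (MvPolynomial (Fin d) k) R := g.toRingHom.toAlgebra
  have hfin : Module.Finite (MvPolynomial (Fin d) k) R := hg
  obtain ⟨G, hG⟩ := hfin.fg_top
  let L : ∀ N, (G → MvPolynomial.restrictTotalDegree (Fin d) k N) →ₗ[k] R := fun N =>
    ∑ γ : G, (LinearMap.mulRight k (γ : R)) ∘ₗ g.toLinearMap ∘ₗ
      (MvPolynomial.restrictTotalDegree (Fin d) k N).subtype ∘ₗ LinearMap.proj γ
  have hL : ∀ N p, L N p = ∑ γ : G, g (p γ) * γ := by
    intro N p; simp [L]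
  have hmem : ∀ N (p : MvPolynomial (Fin d) k) (γ : G), p.totalDegree ≤ N →
      g p * γ ∈ LinearMap.range (L N) := by
    classical
    intro N p γ hp
    refine ⟨Pi.single γ ⟨p, (MvPolynomial.mem_restrictTotalDegree _ _ _).2 hp⟩, ?_⟩
    rw [hL, Finset.sum_eq_single γ]
    · simp
    · intro b _ hb; simp [Pi.single_eq_of_ne hb]
    · simp
  have hmono : Monotone fun N => LinearMap.range (L N) := by
    rintro M N hMN _ ⟨p, rfl⟩
    rw [hL]
    exact Submodule.sum_mem _ fun γ _ => hmem _ _ _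
      (((MvPolynomial.mem_restrictTotalDegree _ _ _).1 (p γ).2).trans hMN)
  have hmulg : ∀ N δ (p : MvPolynomial (Fin d) k) x, p.totalDegree ≤ N →
      x ∈ LinearMap.range (L δ) → g p * x ∈ LinearMap.range (L (N + δ)) := by
    rintro N δ p _ hp ⟨q, rfl⟩
    rw [hL, Finset.mul_sum]
    refine Submodule.sum_mem _ fun γ _ => ?_
    rw [← mul_assoc, ← map_mul]
    refine hmem _ _ _ ((MvPolynomial.totalDegree_mul _ _).trans (add_le_add hp ?_))
    exact (MvPolynomial.mem_restrictTotalDegree _ _ _).1 (q γ).2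
  have hex : ∀ x : R, ∃ N, x ∈ LinearMap.range (L N) := by
    intro x
    have hx : x ∈ Submodule.span (MvPolynomial (Fin d) k) (G : Set R) := hG ▸ Submodule.mem_top
    induction hx using Submodule.span_induction with
    | mem x h => exact ⟨0, by simpa using hmem 0 1 ⟨x, h⟩ (by simp)⟩
    | zero => exact ⟨0, Submodule.zero_mem _⟩
    | add x y _ _ hx hy =>
      obtain ⟨M, hM⟩ := hx
      obtain ⟨N, hN⟩ := hy
      exact ⟨max M N, Submodule.add_mem _ (hmono (le_max_left _ _) hM)
        (hmono (le_max_right _ _) hN)⟩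
    | smul p x _ hx =>
      obtain ⟨N, hN⟩ := hx
      exact ⟨p.totalDegree + N, hmulg _ _ _ _ le_rfl hN⟩
  obtain ⟨S, hS⟩ := hW
  choose e he using hex
  obtain ⟨δ, hδ⟩ : ∃ δ, ∀ x ∈ S, ∀ γ : G, x * γ ∈ LinearMap.range (L δ) := by
    refine ⟨∑ x ∈ S, ∑ γ : G, e (x * γ), fun x hx γ => hmono ?_ (he (x * γ))⟩
    exact (Finset.single_le_sum (f := fun γ : G => e (x * γ)) (fun _ _ => Nat.zero_le _)
      (Finset.mem_univ γ)).trans (Finset.single_le_sum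
        (f := fun x => ∑ γ : G, e (x * γ)) (fun _ _ => Nat.zero_le _) hx)
  refine ⟨fun N => LinearMap.range (L N), G.card, δ, e 1, hmono, fun N => inferInstance, ?_, ?_,
    he 1⟩
  · intro N
    refine (LinearMap.finrank_range_le _).trans ?_
    rw [Module.finrank_pi_fintype]
    simp only [Finset.sum_const, Finset.card_univ, Fintype.card_coe, smul_eq_mul]
    exact Nat.mul_le_mul_left _ (aux_finrank_restrict k d N)
  · intro N
    rw [← hS, Submodule.mul_le]
    rintro x hx _ ⟨p, rfl⟩
    induction hx using Submodule.span_induction with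
    | mem x h =>
      rw [hL, Finset.mul_sum]
      refine Submodule.sum_mem _ fun γ _ => ?_
      rw [mul_left_comm]
      exact hmulg _ _ _ _ ((MvPolynomial.mem_restrictTotalDegree _ _ _).1 (p γ).2) (hδ x h γ)
    | zero => rw [zero_mul]; exact Submodule.zero_mem _
    | add x y _ _ hx hy => rw [add_mul]; exact Submodule.add_mem _ hx hy
    | smul a x _ hx => rw [smul_mul_assoc]; exact Submodule.smul_mem _ _ hx

/-! ### The Hilbert function of a standard graded domain -/

section Graded

variable {k : Type*} [Field k] {R : Type*} [CommRing R] [Algebra k R] {𝒜 : ℕ → Submodule k R}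

theorem aux_fg (hSG : IsStandardGraded k 𝒜) (n : ℕ) : (𝒜 n).FG := by
  induction n with
  | zero => rw [hSG.1]; exact Submodule.fg_span_singleton _
  | succ n ih => rw [hSG.2.1]; exact hSG.2.2.mul ih

theorem aux_mul (hSG : IsStandardGraded k 𝒜) (m n : ℕ) : 𝒜 (m + n) = 𝒜 m * 𝒜 n := by
  induction m with
  | zero => rw [zero_add, hSG.1, ← Submodule.one_eq_span, one_mul]
  | succ m ih => rw [show m + 1 + n = (m + n) + 1 by ring, hSG.2.1, ih, ← mul_assoc, ← hSG.2.1]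

variable [GradedAlgebra 𝒜]

theorem aux_finiteType (hSG : IsStandardGraded k 𝒜) : Algebra.FiniteType k R := by
  obtain ⟨S, hS⟩ := hSG.2.2
  refine ⟨⟨S, ?_⟩⟩
  have h1 : ∀ n, 𝒜 n ≤ Subalgebra.toSubmodule (Algebra.adjoin k (S : Set R)) := by
    intro n
    induction n with
    | zero =>
      rw [hSG.1, Submodule.span_le]
      rintro _ rfl
      exact one_mem (Algebra.adjoin k (S : Set R))
    | succ n ih =>
      rw [hSG.2.1, Submodule.mul_le]
      intro a ha b hb
      refine mul_mem (S := Subalgebra k R) ?_ (ih hb)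
      rw [← hS] at ha
      exact Algebra.span_le_adjoin k _ ha
  rw [eq_top_iff]
  rintro x -
  classical
  rw [← DirectSum.sum_support_decompose 𝒜 x]
  exact sum_mem fun i _ => h1 i (SetLike.coe_mem _)

/-- The Noether normalization of `R` has `d = dim R` variables. -/
theorem aux_noether [IsDomain R] (hSG : IsStandardGraded k 𝒜) {d : ℕ}
    (hdim : ringKrullDim R = (d : WithBot ℕ∞)) :
    ∃ g : MvPolynomial (Fin d) k →ₐ[k] R, Function.Injective g ∧ g.Finite := by
  have := aux_finiteType hSG
  obtain ⟨s, g, hg, hfin⟩ := exists_finite_inj_algHom_of_fg k R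
  let _ : Algebra (MvPolynomial (Fin s) k) R := g.toRingHom.toAlgebra
  have : Algebra.IsIntegral (MvPolynomial (Fin s) k) R := ⟨hfin.to_isIntegral⟩
  have h := aux_ringKrullDim_eq (P := MvPolynomial (Fin s) k) (S := R) hg
  rw [hdim, MvPolynomial.ringKrullDim_of_isNoetherianRing, ringKrullDim_eq_zero_of_field] at h
  have : d = s := by
    simp only [Nat.card_eq_fintype_card, Fintype.card_fin, zero_add] at h
    exact_mod_cast h
  subst this
  exact ⟨g, hg, hfin⟩

theorem aux_exists_linear [IsDomain R] (hSG : IsStandardGraded k 𝒜) {d : ℕ} (hd : 2 ≤ d)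
    (hdim : ringKrullDim R = (d : WithBot ℕ∞)) : ∃ l ∈ 𝒜 1, l ≠ 0 := by
  by_contra! hall
  have h0 : ∀ n, 𝒜 (n + 1) = ⊥ := by
    intro n
    rw [hSG.2.1, (Submodule.eq_bot_iff _).2 hall, Submodule.bot_mul]
  have hsurj : Function.Surjective (algebraMap k R) := by
    intro x
    classical
    have hx : x ∈ 𝒜 0 := by
      rw [← DirectSum.sum_support_decompose 𝒜 x]
      refine sum_mem fun i _ => ?_
      cases i with
      | zero => exact SetLike.coe_mem _
      | succ n =>
        have := SetLike.coe_mem (DirectSum.decompose 𝒜 x (n + 1))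
        rw [(Submodule.mem_bot k).1 ((h0 n).le this)]
        exact zero_mem _
    rw [hSG.1] at hx
    obtain ⟨a, rfl⟩ := Submodule.mem_span_singleton.1 hx
    exact ⟨a, Algebra.algebraMap_eq_smul_one a⟩
  have := ringKrullDim_le_of_surjective _ hsurj
  rw [hdim, ringKrullDim_eq_zero_of_field] at this
  have : d ≤ 0 := by exact_mod_cast this
  omega

/-- The Hilbert function of `R` is `O(n ^ (d - 1))`. The sum of its first `n` values is `O(n ^ d)` by
`aux_growth`, and multiplication by a nonzero linear form shows that it is monotone. -/
theorem aux_hilbert_bound [IsDomain R] (hSG : IsStandardGraded k 𝒜) {d : ℕ} (hd : 2 ≤ d)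
    (hdim : ringKrullDim R = (d : WithBot ℕ∞)) :
    ∃ K : ℕ, ∀ n, Module.finrank k (𝒜 n) ≤ K * (n + 1) ^ (d - 1) := by
  obtain ⟨g, -, hg⟩ := aux_noether hSG hdim
  obtain ⟨l, hl, hl0⟩ := aux_exists_linear hSG hd hdim
  obtain ⟨T, G, δ, δ₀, hmono, hfd, hrank, hmul, hone⟩ := aux_growth g hg (𝒜 1) hSG.2.2
  have hfd' : ∀ n, FiniteDimensional k (𝒜 n) := fun n =>
    Module.Finite.iff_fg.2 (aux_fg hSG n)
  have hle : ∀ n, 𝒜 n ≤ T (n * δ + δ₀) := by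
    intro n
    induction n with
    | zero =>
      rw [hSG.1, Submodule.span_le, zero_mul, zero_add]
      rintro _ rfl
      exact hone
    | succ n ih =>
      rw [hSG.2.1, show (n + 1) * δ + δ₀ = (n * δ + δ₀) + δ by ring]
      exact (mul_le_mul_right ih _).trans (hmul _)
  have hrmono : Monotone fun n => Module.finrank k (𝒜 n) := by
    refine monotone_nat_of_le_succ fun n => ?_
    have h1 : ∀ x : 𝒜 n, (LinearMap.mulLeft k l ∘ₗ (𝒜 n).subtype) x ∈ 𝒜 (n + 1) := fun x => by
      rw [hSG.2.1]; exact Submodule.mul_mem_mul hl x.2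
    refine LinearMap.finrank_le_finrank_of_injective
      (f := (LinearMap.mulLeft k l ∘ₗ (𝒜 n).subtype).codRestrict (𝒜 (n + 1)) h1) ?_
    intro x y hxy
    have := congrArg Subtype.val hxy
    exact Subtype.ext (mul_left_cancel₀ hl0 this)
  have hsum : ∀ n, ∑ i : Fin (n + 1), Module.finrank k (𝒜 i) ≤
      Module.finrank k (T (n * δ + δ₀)) := by
    intro n
    have := hfd (n * δ + δ₀)
    rw [← Module.finrank_pi_fintype k]
    let L : (∀ i : Fin (n + 1), 𝒜 i) →ₗ[k] R :=
      ∑ i : Fin (n + 1), (𝒜 i).subtype ∘ₗ LinearMap.proj i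
    have hL : ∀ f, L f = ∑ i, (f i : R) := fun f => by simp [L]
    refine LinearMap.finrank_le_finrank_of_injective (f := L.codRestrict (T (n * δ + δ₀)) ?_) ?_
    · intro f
      rw [hL]
      refine sum_mem fun i _ => hmono ?_ (hle i (f i).2)
      have := i.2
      gcongr
      omega
    · rw [injective_iff_map_eq_zero]
      intro f hf
      have hf' : ∑ i, (f i : R) = 0 := by rw [← hL]; exact congrArg Subtype.val hf
      funext j
      have h2 := congrArg (GradedAlgebra.proj 𝒜 j) hf'
      rw [map_sum, map_zero, Finset.sum_eq_single j] at h2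
      · rw [GradedAlgebra.proj_apply, DirectSum.decompose_of_mem_same 𝒜 (f j).2] at h2
        exact Subtype.ext h2
      · intro i _ hij
        rw [GradedAlgebra.proj_apply,
          DirectSum.decompose_of_mem_ne 𝒜 (f i).2 (fun h => hij (Fin.ext h))]
      · simp
  refine ⟨G * (2 * δ + δ₀ + 1) ^ d, fun n => ?_⟩
  have h1 : (n + 1) * Module.finrank k (𝒜 n) ≤
      ∑ i : Fin (2 * n + 1), Module.finrank k (𝒜 i) := by
    rw [Fin.sum_univ_eq_sum_range (fun i => Module.finrank k (𝒜 i)) (2 * n + 1),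
      show 2 * n + 1 = n + (n + 1) by ring, Finset.sum_range_add]
    refine le_trans ?_ (Nat.le_add_left _ _)
    have := Finset.card_nsmul_le_sum (Finset.range (n + 1))
      (fun i => Module.finrank k (𝒜 (n + i))) (Module.finrank k (𝒜 n))
      fun i _ => hrmono (Nat.le_add_right _ _)
    rwa [Finset.card_range, smul_eq_mul] at this
  have h2 := h1.trans ((hsum (2 * n)).trans (hrank _))
  have h3 : 2 * n * δ + δ₀ + 1 ≤ (2 * δ + δ₀ + 1) * (n + 1) := by nlinarith
  have h4 := h2.trans (Nat.mul_le_mul_left G (Nat.pow_le_pow_left h3 d))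
  obtain ⟨e, rfl⟩ : ∃ e, d = e + 1 := ⟨d - 1, by omega⟩
  rw [mul_pow, pow_succ (n + 1)] at h4
  refine le_of_mul_le_mul_left (a := n + 1) ?_ (Nat.succ_pos n)
  rw [Nat.add_sub_cancel]
  refine h4.trans (le_of_eq (by ring))

end Graded

/-! ### The diagonal algebra -/

section Diag

open scoped Pointwise

variable {k : Type*} [Field k] {R : Type*} [CommRing R] [Algebra k R] {𝒜 : ℕ → Submodule k R}

theorem aux_comp_zero (I : Ideal R) (hSG : IsStandardGraded k 𝒜) :
    idealComp k 𝒜 (I ^ 0) 0 = 1 := by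
  rw [idealComp, hSG.1, Submodule.one_eq_span]
  simp

theorem aux_comp_fg (hSG : IsStandardGraded k 𝒜) (I : Ideal R) (n : ℕ) :
    FiniteDimensional k (idealComp k 𝒜 I n) := by
  have : FiniteDimensional k (𝒜 n) := Module.Finite.iff_fg.2 (aux_fg hSG n)
  exact Submodule.finiteDimensional_inf_right _ _

variable [GradedAlgebra 𝒜]

theorem aux_gen_mul {I J : Ideal R} {p q : ℕ} (hI : GeneratedInDegLE k 𝒜 I p)
    (hJ : GeneratedInDegLE k 𝒜 J q) : GeneratedInDegLE k 𝒜 (I * J) (p + q) := by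
  obtain ⟨s, rfl, hs⟩ := hI
  obtain ⟨t, rfl, ht⟩ := hJ
  refine ⟨s * t, Ideal.span_mul_span' s t, ?_⟩
  rintro _ ⟨a, ha, b, hb, rfl⟩
  obtain ⟨i, hi, hai⟩ := hs a ha
  obtain ⟨j, hj, hbj⟩ := ht b hb
  exact ⟨i + j, by omega, SetLike.mul_mem_graded hai hbj⟩

theorem aux_gen_pow {I : Ideal R} {p : ℕ} (hI : GeneratedInDegLE k 𝒜 I p) (n : ℕ) :
    GeneratedInDegLE k 𝒜 (I ^ n) (p * n) := by
  induction n with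
  | zero =>
    refine ⟨{1}, by simp, ?_⟩
    rintro _ rfl
    exact ⟨0, le_rfl, SetLike.one_mem_graded 𝒜⟩
  | succ n ih =>
    rw [pow_succ, mul_add_one]
    exact aux_gen_mul ih hI

/-- In degrees at least the generating degrees, the graded pieces of a product of ideals are spanned by
products of graded pieces. -/
theorem aux_comp_mul (hSG : IsStandardGraded k 𝒜) {I J : Ideal R} {p q p' q' : ℕ}
    (hI : GeneratedInDegLE k 𝒜 I p) (hJ : GeneratedInDegLE k 𝒜 J q) (hp : p ≤ p') (hq : q ≤ q') :
    idealComp k 𝒜 (I * J) (p' + q') ≤ idealComp k 𝒜 I p' * idealComp k 𝒜 J q' := by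
  obtain ⟨s, rfl, hs⟩ := hI
  obtain ⟨t, rfl, ht⟩ := hJ
  have key : ∀ x ∈ Ideal.span (s * t), ∀ r : R,
      (DirectSum.decompose 𝒜 (r * x) (p' + q') : R) ∈
        idealComp k 𝒜 (Ideal.span s) p' * idealComp k 𝒜 (Ideal.span t) q' := by
    intro x hx
    induction hx using Submodule.span_induction with
    | mem x h =>
      obtain ⟨a, ha, b, hb, rfl⟩ := h
      intro r
      obtain ⟨i, hi, hai⟩ := hs a ha
      obtain ⟨j, hj, hbj⟩ := ht b hb
      have hab : a * b ∈ 𝒜 (i + j) := SetLike.mul_mem_graded hai hbj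
      change (DirectSum.decompose 𝒜 (r * (a * b)) (p' + q') : R) ∈ _
      rw [DirectSum.coe_decompose_mul_of_right_mem_of_le 𝒜 hab (by omega)]
      have hr : (DirectSum.decompose 𝒜 r (p' + q' - (i + j)) : R) ∈ 𝒜 (p' - i) * 𝒜 (q' - j) := by
        rw [← aux_mul hSG, show p' - i + (q' - j) = p' + q' - (i + j) by omega]
        exact SetLike.coe_mem _
      generalize (DirectSum.decompose 𝒜 r (p' + q' - (i + j)) : R) = w at hr ⊢
      induction hr using Submodule.mul_induction_on' with
      | mem_mul_mem u hu v hv =>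
        rw [show u * v * (a * b) = (u * a) * (v * b) by ring]
        refine Submodule.mul_mem_mul ⟨?_, ?_⟩ ⟨?_, ?_⟩
        · exact Ideal.mul_mem_left _ _ (Ideal.subset_span ha)
        · have := SetLike.mul_mem_graded (A := 𝒜) hu hai
          rwa [show p' - i + i = p' by omega] at this
        · exact Ideal.mul_mem_left _ _ (Ideal.subset_span hb)
        · have := SetLike.mul_mem_graded (A := 𝒜) hv hbj
          rwa [show q' - j + j = q' by omega] at this
      | add x hx y hy h1 h2 => rw [add_mul]; exact add_mem h1 h2
    | zero => intro r; simp
    | add x y _ _ hx hy =>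
      intro r
      rw [mul_add, DirectSum.decompose_add]
      exact add_mem (hx r) (hy r)
    | smul a x _ hx =>
      intro r
      rw [smul_eq_mul, ← mul_assoc]
      exact hx _
  rintro x ⟨hx1, hx2⟩
  have hx1' : x ∈ Ideal.span (s * t) := by rw [← Ideal.span_mul_span']; exact hx1
  have := key x hx1' 1
  rwa [one_mul, DirectSum.decompose_of_mem_same 𝒜 hx2] at this

/-- The diagonal algebra `⊕ₙ (Iⁿ)_{cn}` is generated by its piece for `n = 1`. -/
theorem aux_comp_pow (hSG : IsStandardGraded k 𝒜) {I : Ideal R} {D c : ℕ}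
    (hI : GeneratedInDegLE k 𝒜 I D) (hc : D ≤ c) (n : ℕ) :
    idealComp k 𝒜 (I ^ n) (c * n) ≤ idealComp k 𝒜 I c ^ n := by
  induction n with
  | zero => rw [mul_zero, aux_comp_zero I hSG, pow_zero]
  | succ n ih =>
    rw [pow_succ, pow_succ, mul_add_one]
    exact (aux_comp_mul hSG (aux_gen_pow hI n) hI (Nat.mul_le_mul_right n hc) hc).trans
      (mul_le_mul_left ih _)

/-- The `(c,1)`-diagonal subalgebra `⊕ₙ (Iⁿ)_{cn}`, realised inside `R[X]`: the `n`-th coefficient is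
required to lie in `(Iⁿ)_{cn}`. -/
def diagAlg (𝒜 : ℕ → Submodule k R) [GradedAlgebra 𝒜] (I : Ideal R) (c : ℕ) :
    Subalgebra k R[X] where
  carrier := {p | ∀ n, p.coeff n ∈ idealComp k 𝒜 (I ^ n) (c * n)}
  mul_mem' := by
    intro p q hp hq n
    rw [Polynomial.coeff_mul]
    refine sum_mem fun x hx => ?_
    rw [← Finset.HasAntidiagonal.mem_antidiagonal.1 hx, pow_add, mul_add]
    exact ⟨Ideal.mul_mem_mul (hp _).1 (hq _).1, SetLike.mul_mem_graded (hp _).2 (hq _).2⟩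
  add_mem' := by
    intro p q hp hq n
    rw [Polynomial.coeff_add]
    exact add_mem (hp n) (hq n)
  algebraMap_mem' := by
    intro a n
    rw [Polynomial.algebraMap_apply, Polynomial.coeff_C]
    split_ifs with h
    · subst h
      refine ⟨by simp, ?_⟩
      rw [mul_zero]
      exact SetLike.algebraMap_mem_graded 𝒜 a
    · exact zero_mem _

theorem mem_diagAlg {I : Ideal R} {c : ℕ} {p : R[X]} :
    p ∈ diagAlg 𝒜 I c ↔ ∀ n, p.coeff n ∈ idealComp k 𝒜 (I ^ n) (c * n) := Iff.rfl

theorem aux_monomial_mem {I : Ideal R} {c n : ℕ} {a : R}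
    (ha : a ∈ idealComp k 𝒜 (I ^ n) (c * n)) : monomial n a ∈ diagAlg 𝒜 I c := by
  intro m
  rw [Polynomial.coeff_monomial]
  split_ifs with h
  · subst h; exact ha
  · exact zero_mem _

theorem aux_diag_le (hSG : IsStandardGraded k 𝒜) {I : Ideal R} {D c : ℕ}
    (hI : GeneratedInDegLE k 𝒜 I D) (hc : D ≤ c) (S : Set R)
    (hS : Submodule.span k S = idealComp k 𝒜 I c) :
    diagAlg 𝒜 I c ≤ Algebra.adjoin k ((fun r : R => (monomial 1 r : R[X])) '' S) := by
  have h1 : ∀ r ∈ idealComp k 𝒜 I c, (monomial 1 r : R[X]) ∈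
      Algebra.adjoin k ((fun r : R => (monomial 1 r : R[X])) '' S) := by
    intro r hr
    rw [← hS] at hr
    induction hr using Submodule.span_induction with
    | mem x h => exact Algebra.subset_adjoin ⟨x, h, rfl⟩
    | zero => rw [map_zero]; exact zero_mem _
    | add x y _ _ hx hy => rw [map_add]; exact add_mem hx hy
    | smul a x _ hx => rw [← Polynomial.smul_monomial]; exact Subalgebra.smul_mem _ hx a
  have h2 : ∀ n, ∀ r ∈ idealComp k 𝒜 I c ^ n, (monomial n r : R[X]) ∈
      Algebra.adjoin k ((fun r : R => (monomial 1 r : R[X])) '' S) := by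
    intro n
    induction n with
    | zero =>
      intro r hr
      rw [pow_zero] at hr
      obtain ⟨a, rfl⟩ := Submodule.mem_one.1 hr
      exact Subalgebra.algebraMap_mem _ a
    | succ n ih =>
      intro r hr
      rw [pow_succ] at hr
      induction hr using Submodule.mul_induction_on' with
      | mem_mul_mem u hu v hv =>
        rw [← Polynomial.monomial_mul_monomial]
        exact mul_mem (ih u hu) (h1 v hv)
      | add x hx y hy h1 h2 => rw [map_add]; exact add_mem h1 h2
  intro p hp
  rw [← Polynomial.sum_monomial_eq p]
  exact sum_mem fun n _ => h2 n _ (aux_comp_pow hSG hI hc n (hp n))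

theorem aux_diag_finiteType (hSG : IsStandardGraded k 𝒜) {I : Ideal R} {D c : ℕ}
    (hI : GeneratedInDegLE k 𝒜 I D) (hc : D ≤ c) : Algebra.FiniteType k (diagAlg 𝒜 I c) := by
  classical
  obtain ⟨S, hS⟩ := Module.Finite.iff_fg.1 (aux_comp_fg hSG I c)
  rw [← Subalgebra.fg_iff_finiteType]
  refine ⟨S.image (fun r : R => (monomial 1 r : R[X])), ?_⟩
  rw [Finset.coe_image]
  refine le_antisymm ?_ (aux_diag_le hSG hI hc S hS)
  rw [Algebra.adjoin_le_iff]
  rintro _ ⟨r, hr, rfl⟩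
  refine aux_monomial_mem ?_
  rw [pow_one, mul_one, ← hS]
  exact Submodule.subset_span hr

end Diag

/-! ### The quotient attached to a non-integral element -/

/-- If `x ∈ A[x⁻¹]` then `x` is integral over `A`: multiply an expression of `x` as a polynomial in
`x⁻¹` by a power of `x`. -/
theorem aux_integral_of_mem_adjoin_inv {A K : Type*} [CommRing A] [Field K] [Algebra A K] (x : K)
    (hx0 : x ≠ 0) (hx : x ∈ Algebra.adjoin A {x⁻¹}) : IsIntegral A x := by
  rw [Algebra.adjoin_singleton_eq_range_aeval] at hx
  obtain ⟨p, hp⟩ := hx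
  have hp' : aeval x⁻¹ p = x := hp
  set m := p.natDegree with hm
  refine ⟨X ^ (m + 1) - ∑ j ∈ Finset.range (m + 1), (C (p.coeff j) * X ^ (m - j) : A[X]),
    ?_, ?_⟩
  · refine monic_X_pow_sub ((degree_le_of_natDegree_le ?_).trans_lt
      (WithBot.coe_lt_coe.2 (Nat.lt_succ_self m)))
    refine natDegree_sum_le_of_forall_le _ _ fun j _ => ?_
    exact (natDegree_C_mul_X_pow_le (p.coeff j) (m - j)).trans (Nat.sub_le m j)
  · rw [← aeval_def, map_sub, map_pow, aeval_X, map_sum, sub_eq_zero]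
    have h1 : x ^ (m + 1) = x ^ m * aeval x⁻¹ p := by rw [hp', pow_succ]
    rw [h1, aeval_eq_sum_range, Finset.mul_sum, ← hm]
    refine Finset.sum_congr rfl fun j hj => ?_
    have hj' : j ≤ m := by have := Finset.mem_range.1 hj; omega
    rw [map_mul, aeval_C, map_pow, aeval_X, Algebra.smul_def, pow_sub₀ _ hx0 hj', inv_pow]
    ring

theorem aux_aeval_divX {A B : Type*} [CommRing A] [CommRing B] [Algebra A B] (u : B) (p : A[X]) :
    aeval u p = u * aeval u p.divX + algebraMap A B (p.coeff 0) := by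
  conv_lhs => rw [← divX_mul_X_add p]
  rw [map_add, map_mul, aeval_X, aeval_C, mul_comm]

/-- Let `x` be an element of a domain `S` that is not integral over an affine subalgebra `A` containing
a polynomial ring in `d` variables. Then `A` has a quotient `Q` with `d - 1` algebraically independent
elements that kills every `a ∈ A` with `a x ^ i ∈ A + A x + ⋯ + A x ^ (i - 1)` for some `i`. Namely
`Q = A[x⁻¹] ⧸ (x⁻¹)`: here `x⁻¹` is not a unit because `x` is not integral, and dividing the
relation by `x ^ i` exhibits `a` as a multiple of `x⁻¹`. -/
theorem aux_quotient.{u, v} {k : Type u} {S : Type v} [Field k] [CommRing S] [IsDomain S] [Algebra k S]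
    (A : Subalgebra k S) [Algebra.FiniteType k A] {d : ℕ} (φ : MvPolynomial (Fin d) k →ₐ[k] A)
    (hφ : Function.Injective φ) (x : S) (hx : ¬ IsIntegral A x) :
    ∃ (Q : Type v) (_ : CommRing Q) (_ : Algebra k Q) (π : A →ₐ[k] Q) (z : Fin (d - 1) → Q),
      Function.Surjective π ∧ AlgebraicIndependent k z ∧
      ∀ (i : ℕ) (a : A) (b : ℕ → A),
        (a : S) * x ^ i = ∑ j ∈ Finset.range i, (b j : S) * x ^ j → π a = 0 := by
  have hx0 : x ≠ 0 := by rintro rfl; exact hx isIntegral_zero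
  set ξ : FractionRing S := algebraMap S (FractionRing S) x with hξ
  have hinj : Function.Injective (algebraMap S (FractionRing S)) :=
    IsFractionRing.injective S (FractionRing S)
  have hξ0 : ξ ≠ 0 := fun h => hx0 (hinj (by rw [map_zero]; exact h))
  let L := Algebra.adjoin A {ξ⁻¹}
  have : Algebra.FiniteType A L :=
    (Subalgebra.fg_iff_finiteType L).1
      ⟨({ξ⁻¹} : Finset (FractionRing S)), by rw [Finset.coe_singleton]⟩
  have : Algebra.FiniteType k L := Algebra.FiniteType.trans (S := A) inferInstance inferInstance
  let u : L := ⟨ξ⁻¹, Algebra.subset_adjoin rfl⟩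
  have hu0 : u ≠ 0 := fun h => inv_ne_zero hξ0 (congrArg Subtype.val h)
  have hu : ¬ IsUnit u := by
    intro h
    obtain ⟨v, hv⟩ := h.exists_right_inv
    have h1 : ξ⁻¹ * (v : FractionRing S) = 1 := congrArg Subtype.val hv
    have h2 : ξ = v := by rw [inv_mul_eq_one₀ hξ0] at h1; exact h1
    have h3 := aux_integral_of_mem_adjoin_inv (A := A) ξ hξ0 (by
      have := v.2
      rw [← h2] at this
      exact this)
    exact hx ((isIntegral_algebraMap_iff hinj).1 h3)
  have hAC : Function.Injective (algebraMap A L) := by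
    intro a b hab
    have h1 : algebraMap S (FractionRing S) a = algebraMap S (FractionRing S) b :=
      congrArg Subtype.val hab
    exact Subtype.ext (hinj h1)
  obtain ⟨z, hz⟩ := aux_algInd_quot ((IsScalarTower.toAlgHom k A L).comp φ) (hAC.comp hφ) u hu0 hu
  refine ⟨L ⧸ Ideal.span {u}, inferInstance, inferInstance,
    (Ideal.Quotient.mkₐ k (Ideal.span {u})).comp (IsScalarTower.toAlgHom k A L), _, ?_, hz, ?_⟩
  · intro q
    obtain ⟨⟨y, hy⟩, rfl⟩ := Ideal.Quotient.mk_surjective q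
    have hy' : y ∈ Algebra.adjoin A {ξ⁻¹} := hy
    rw [Algebra.adjoin_singleton_eq_range_aeval] at hy'
    obtain ⟨p, hp⟩ := hy'
    refine ⟨p.coeff 0, ?_⟩
    change Ideal.Quotient.mk _ (algebraMap A L (p.coeff 0)) = _
    rw [Ideal.Quotient.mk_eq_mk_iff_sub_mem, Ideal.mem_span_singleton]
    refine ⟨- aeval u p.divX, ?_⟩
    have h1 : (⟨y, hy⟩ : L) = aeval u p := by
      apply Subtype.ext
      rw [← Subalgebra.coe_val, ← aeval_algHom_apply]
      exact hp.symm
    rw [h1, aux_aeval_divX u p]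
    ring
  · intro i a b hab
    change Ideal.Quotient.mk _ (algebraMap A L a) = 0
    rw [Ideal.Quotient.eq_zero_iff_mem, Ideal.mem_span_singleton]
    refine ⟨∑ j ∈ Finset.range i, algebraMap A L (b j) * u ^ (i - j - 1), ?_⟩
    apply Subtype.ext
    have h1 := congrArg (algebraMap S (FractionRing S)) hab
    simp only [map_mul, map_pow, map_sum, ← hξ] at h1
    have h2 : algebraMap S (FractionRing S) a =
        (∑ j ∈ Finset.range i, algebraMap S (FractionRing S) (b j) * ξ ^ j) * (ξ ^ i)⁻¹ := by
      rw [← h1, mul_assoc, mul_inv_cancel₀ (pow_ne_zero _ hξ0), mul_one]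
    have h3 : ((u * ∑ j ∈ Finset.range i, algebraMap A L (b j) * u ^ (i - j - 1) : L) :
        FractionRing S) = ξ⁻¹ * ∑ j ∈ Finset.range i,
          algebraMap S (FractionRing S) (b j) * ξ⁻¹ ^ (i - j - 1) := by
      rw [← Subalgebra.coe_val, map_mul, map_sum]
      simp only [map_mul, map_pow]
      rfl
    rw [h3]
    change algebraMap S (FractionRing S) a = _
    rw [h2, Finset.sum_mul, Finset.mul_sum]
    refine Finset.sum_congr rfl fun j hj => ?_
    have hj' := Finset.mem_range.1 hj
    have h4 : ξ ^ i = ξ ^ j * ξ ^ (i - j - 1) * ξ := by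
      rw [← pow_add, ← pow_succ]; congr 1; omega
    rw [h4, inv_pow]
    field_simp

/-! ### The embedding of the ring in the diagonal algebra -/

section Embed

variable {k : Type*} [Field k] {R : Type*} [CommRing R] [Algebra k R] {𝒜 : ℕ → Submodule k R}

theorem aux_ne_bot [IsDomain R] {I : Ideal R} (h : 0 < idealHeight I) : I ≠ ⊥ := by
  rintro rfl
  refine h.ne' (le_antisymm ?_ bot_le)
  refine (iInf₂_le (⊥ : PrimeSpectrum R) bot_le).trans ?_
  rw [Order.height_bot]

variable [GradedAlgebra 𝒜]

/-- A nonzero ideal generated in degrees at most `D` has a nonzero homogeneous element of every degree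
`e ≥ D`: multiply a generator by a power of a linear form. -/
theorem aux_exists_elt [IsDomain R] (hSG : IsStandardGraded k 𝒜) {d : ℕ} (hd : 2 ≤ d)
    (hdim : ringKrullDim R = (d : WithBot ℕ∞)) {I : Ideal R} (hI0 : I ≠ ⊥) {D e : ℕ}
    (hI : GeneratedInDegLE k 𝒜 I D) (he : D ≤ e) : ∃ g ∈ idealComp k 𝒜 I e, g ≠ 0 := by
  obtain ⟨l, hl, hl0⟩ := aux_exists_linear hSG hd hdim
  obtain ⟨s, rfl, hs⟩ := hI
  obtain ⟨y, hy, hy0⟩ : ∃ y ∈ s, y ≠ 0 := by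
    by_contra! h
    exact hI0 (Ideal.span_eq_bot.2 h)
  obtain ⟨i, hi, hyi⟩ := hs y hy
  refine ⟨l ^ (e - i) * y, ⟨Ideal.mul_mem_left _ _ (Ideal.subset_span hy), ?_⟩,
    mul_ne_zero (pow_ne_zero _ hl0) hy0⟩
  have := SetLike.mul_mem_graded (SetLike.pow_mem_graded (A := 𝒜) (e - i) hl) hyi
  rwa [smul_eq_mul, mul_one, show e - i + i = e by omega] at this

/-- If `I` has a nonzero element `g` of degree `c`, then `R` embeds in the diagonal algebra of `I` for
`c + 1`, a form `r` of degree `m` being sent to `r gᵐ Xᵐ`. -/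
theorem aux_embed [IsDomain R] {I : Ideal R} {c : ℕ} (g : R)
    (hg : g ∈ idealComp k 𝒜 I c) (hg0 : g ≠ 0) :
    ∃ ψ : R →ₐ[k] diagAlg 𝒜 I (c + 1), Function.Injective ψ := by
  classical
  let f : ∀ i, 𝒜 i →ₗ[k] R[X] := fun i =>
    (Polynomial.monomial i).restrictScalars k ∘ₗ LinearMap.mulRight k (g ^ i) ∘ₗ (𝒜 i).subtype
  let ψ₀ : (DirectSum ℕ fun i => 𝒜 i) →ₐ[k] R[X] := DirectSum.toAlgebra k (fun i => 𝒜 i) f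
    (by
      change monomial 0 ((1 : R) * g ^ 0) = 1
      simp)
    (by
      intro i j x y
      change monomial (i + j) ((x * y : R) * g ^ (i + j)) =
        monomial i ((x : R) * g ^ i) * monomial j ((y : R) * g ^ j)
      rw [monomial_mul_monomial, pow_add]
      congr 1
      ring)
  let ψ₁ : R →ₐ[k] R[X] := ψ₀.comp (DirectSum.decomposeAlgEquiv 𝒜).toAlgHom
  have h1 : ∀ i, ∀ r ∈ 𝒜 i, ψ₁ r = monomial i (r * g ^ i) := by
    intro i r hr
    change ψ₀ (DirectSum.decompose 𝒜 r) = _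
    rw [DirectSum.decompose_of_mem 𝒜 hr]
    exact DirectSum.toAddMonoid_of (fun i => (f i).toAddMonoidHom) i ⟨r, hr⟩
  have h2 : ∀ r n, (ψ₁ r).coeff n = DirectSum.decompose 𝒜 r n * g ^ n := by
    intro r n
    conv_lhs => rw [← DirectSum.sum_support_decompose 𝒜 r, map_sum, Polynomial.finsetSum_coeff]
    rw [Finset.sum_congr rfl fun i _ => by rw [h1 i _ (SetLike.coe_mem _), coeff_monomial]]
    simp only [Finset.sum_ite_eq', DFinsupp.mem_support_toFun]
    split_ifs with h
    · rfl
    · rw [not_not] at h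
      rw [h]; simp
  refine ⟨ψ₁.codRestrict _ ?_, ?_⟩
  · intro r n
    rw [h2]
    refine ⟨Ideal.mul_mem_left _ _ (Ideal.pow_mem_pow hg.1 n), ?_⟩
    have := SetLike.mul_mem_graded (A := 𝒜) (SetLike.coe_mem (DirectSum.decompose 𝒜 r n))
      (SetLike.pow_mem_graded n hg.2)
    rwa [show n + n • c = (c + 1) * n by rw [smul_eq_mul]; ring] at this
  · rw [injective_iff_map_eq_zero]
    intro r hr
    have hr' : ψ₁ r = 0 := congrArg Subtype.val hr
    rw [← DirectSum.sum_support_decompose 𝒜 r]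
    refine Finset.sum_eq_zero fun i _ => ?_
    have h3 := h2 r i
    rw [hr', coeff_zero] at h3
    exact (mul_eq_zero.1 h3.symm).resolve_right (pow_ne_zero _ hg0)

end Embed

/-! ### The gap between the Hilbert functions -/

/-- If `π` vanishes on every vector that `f` sends into `F`, then adding the range of `f` to `F` raises
the dimension by at least the rank of `π`. -/
theorem aux_finrank_sup {k V M Q : Type*} [Field k] [AddCommGroup V] [Module k V]
    [AddCommGroup M] [Module k M] [AddCommGroup Q] [Module k Q] [FiniteDimensional k V]
    (f : V →ₗ[k] M) (π : V →ₗ[k] Q) (F : Submodule k M) [FiniteDimensional k F]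
    (h : ∀ v, f v ∈ F → π v = 0) :
    Module.finrank k F + Module.finrank k (LinearMap.range π) ≤
      Module.finrank k (F ⊔ LinearMap.range f : Submodule k M) := by
  have h1 := LinearMap.finrank_range_add_finrank_ker π
  have h2 := LinearMap.finrank_range_add_finrank_ker (F.mkQ ∘ₗ f)
  have h3 : LinearMap.ker (F.mkQ ∘ₗ f) ≤ LinearMap.ker π := by
    intro v hv
    rw [LinearMap.mem_ker, LinearMap.comp_apply, Submodule.mkQ_apply,
      Submodule.Quotient.mk_eq_zero] at hv
    exact h v hv
  have h4 := Submodule.finrank_mono h3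
  have h5 := LinearMap.finrank_range_add_finrank_ker (F.mkQ.domRestrict (F ⊔ LinearMap.range f))
  have h6 : LinearMap.range (F.mkQ ∘ₗ f) ≤
      LinearMap.range (F.mkQ.domRestrict (F ⊔ LinearMap.range f)) := by
    rintro _ ⟨v, rfl⟩
    exact ⟨⟨f v, Submodule.mem_sup_right ⟨v, rfl⟩⟩, rfl⟩
  have h7 := Submodule.finrank_mono h6
  have h8 : LinearMap.ker (F.mkQ.domRestrict (F ⊔ LinearMap.range f)) =
      Submodule.comap (F ⊔ LinearMap.range f).subtype F := by
    ext v; simp [LinearMap.domRestrict_apply]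
  rw [h8, (Submodule.comapSubtypeEquivOfLe (le_sup_left :
    F ≤ F ⊔ LinearMap.range f)).finrank_eq] at h5
  omega

theorem aux_finrank_sum {k M : Type*} [Field k] [AddCommGroup M] [Module k M]
    (W : ℕ → Submodule k M) [∀ i, FiniteDimensional k (W i)] (n : ℕ) :
    FiniteDimensional k (∑ i ∈ Finset.range n, W i : Submodule k M) ∧
    Module.finrank k (∑ i ∈ Finset.range n, W i : Submodule k M) ≤
      ∑ i ∈ Finset.range n, Module.finrank k (W i) := by
  induction n with
  | zero =>
    simp only [Finset.range_zero, Finset.sum_empty, Submodule.zero_eq_bot]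
    exact ⟨Module.Finite.bot k M, (finrank_bot k M).le⟩
  | succ n ih =>
    rw [Finset.sum_range_succ, Finset.sum_range_succ]
    have := ih.1
    exact ⟨inferInstanceAs (FiniteDimensional k (_ ⊔ _ : Submodule k M)),
      (Submodule.finrank_add_le_finrank_add_finrank _ _).trans (Nat.add_le_add_right ih.2 _)⟩

theorem aux_mem_sum {k M : Type*} [Field k] [AddCommGroup M] [Module k M]
    (W : ℕ → Submodule k M) (n : ℕ) (x : M) (hx : x ∈ ∑ i ∈ Finset.range n, W i) :
    ∃ w : ℕ → M, (∀ i, w i ∈ W i) ∧ x = ∑ i ∈ Finset.range n, w i := by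
  induction n generalizing x with
  | zero =>
    refine ⟨fun _ => 0, fun i => zero_mem _, ?_⟩
    simpa using hx
  | succ n ih =>
    rw [Finset.sum_range_succ] at hx
    obtain ⟨y, hy, v, hv, rfl⟩ := Submodule.mem_sup.1 hx
    obtain ⟨w, hw, rfl⟩ := ih y hy
    classical
    refine ⟨Function.update w n v, fun i => ?_, ?_⟩
    · by_cases hi : i = n
      · subst hi; simpa using hv
      · rw [Function.update_of_ne hi]; exact hw i
    · rw [Finset.sum_range_succ, Function.update_self]
      congr 1
      refine Finset.sum_congr rfl fun i hi => ?_
      rw [Function.update_of_ne (by have := Finset.mem_range.1 hi; omega)]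

section Gap

variable {k : Type*} [Field k] {R : Type*} [CommRing R] [Algebra k R] {𝒜 : ℕ → Submodule k R}
  [GradedAlgebra 𝒜]

/-- The restriction of an algebra map `π` on the diagonal algebra to its `n`-th graded piece
`(Iⁿ)_{cn}`, embedded as `a ↦ a Xⁿ`. -/
noncomputable def piece {I : Ideal R} {c : ℕ} {Q : Type*} [CommRing Q] [Algebra k Q]
    (π : diagAlg 𝒜 I c →ₐ[k] Q) (n : ℕ) : idealComp k 𝒜 (I ^ n) (c * n) →ₗ[k] Q where
  toFun a := π ⟨monomial n (a : R), aux_monomial_mem a.2⟩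
  map_add' a b := by
    rw [← map_add]
    congr 1
    exact Subtype.ext (map_add (monomial n) (a : R) b)
  map_smul' t a := by
    rw [RingHom.id_apply, ← map_smul]
    congr 1
    exact Subtype.ext (Polynomial.smul_monomial t n (a : R)).symm

/-- A quotient of the diagonal algebra with `r` algebraically independent elements has at least `n ^ r`
dimensions in the pieces up to a linear bound in `n`. -/
theorem aux_piece_count (hSG : IsStandardGraded k 𝒜) {I : Ideal R} {c : ℕ} {Q : Type*} [CommRing Q]
    [Algebra k Q] (π : diagAlg 𝒜 I c →ₐ[k] Q) (hπ : Function.Surjective π) {r : ℕ}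
    (z : Fin r → Q) (hz : AlgebraicIndependent k z) :
    ∃ N, 0 < N ∧ ∀ n, n ^ r ≤
      ∑ i ∈ Finset.range (N * n + 1), Module.finrank k (LinearMap.range (piece π i)) := by
  have hfd : ∀ i, FiniteDimensional k (idealComp k 𝒜 (I ^ i) (c * i)) := fun i =>
    aux_comp_fg hSG _ _
  have hfd' : ∀ i, FiniteDimensional k (LinearMap.range (piece π i)) := fun i => inferInstance
  have hmono : Monotone fun M =>
      (∑ i ∈ Finset.range (M + 1), LinearMap.range (piece π i) : Submodule k Q) := by
    refine monotone_nat_of_le_succ fun n => ?_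
    rw [Finset.sum_range_succ _ (n + 1)]
    exact le_sup_left
  have hle : ∀ {i M}, i ≤ M → LinearMap.range (piece π i) ≤
      ∑ i ∈ Finset.range (M + 1), LinearMap.range (piece π i) := by
    intro i M h
    refine le_trans ?_ (hmono h)
    change _ ≤ ∑ i ∈ Finset.range (i + 1), LinearMap.range (piece π i)
    rw [Finset.sum_range_succ]
    exact le_sup_right
  have hmul : ∀ i j, LinearMap.range (piece π i) * LinearMap.range (piece π j) ≤
      LinearMap.range (piece π (i + j)) := by
    intro i j
    rw [Submodule.mul_le]
    rintro _ ⟨a, rfl⟩ _ ⟨b, rfl⟩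
    refine ⟨⟨a * b, ?_⟩, ?_⟩
    · rw [pow_add, mul_add]
      exact ⟨Ideal.mul_mem_mul a.2.1 b.2.1, SetLike.mul_mem_graded a.2.2 b.2.2⟩
    · change π _ = π _ * π _
      rw [← map_mul]
      congr 1
      exact Subtype.ext (monomial_mul_monomial i j (a : R) (b : R)).symm
  have h0 : ∀ M, FiniteDimensional k
    (∑ i ∈ Finset.range (M + 1), LinearMap.range (piece π i) : Submodule k Q) :=
      fun M => (aux_finrank_sum _ _).1
  suffices h : ∃ N, 0 < N ∧ ∀ n, n ^ r ≤ Module.finrank k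
      (∑ i ∈ Finset.range (N * n + 1), LinearMap.range (piece π i) : Submodule k Q) by
    obtain ⟨N, hN, h⟩ := h
    exact ⟨N, hN, fun n => (h n).trans (aux_finrank_sum _ _).2⟩
  refine aux_count
    (fun M => (∑ i ∈ Finset.range (M + 1), LinearMap.range (piece π i) : Submodule k Q)) hmono ?_ ?_
    z hz ?_
  · intro m n
    rw [Finset.sum_mul_sum]
    refine Finset.sum_induction _ (fun W => W ≤ _) (fun _ _ => sup_le) bot_le fun i hi => ?_
    refine Finset.sum_induction _ (fun W => W ≤ _) (fun _ _ => sup_le) bot_le fun j hj => ?_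
    have := Finset.mem_range.1 hi
    have := Finset.mem_range.1 hj
    exact (hmul i j).trans (hle (by omega))
  · refine hle le_rfl ⟨⟨1, ?_⟩, ?_⟩
    · refine ⟨by simp, ?_⟩
      rw [mul_zero]
      exact SetLike.one_mem_graded 𝒜
    · rw [← map_one π]
      exact congrArg π (Subtype.ext rfl)
  · intro j
    obtain ⟨p, hp⟩ := hπ (z j)
    refine ⟨(p : R[X]).natDegree, ?_⟩
    have hc : ∀ i, (p : R[X]).coeff i ∈ idealComp k 𝒜 (I ^ i) (c * i) := mem_diagAlg.1 p.2
    have h1 : p = ∑ i ∈ Finset.range ((p : R[X]).natDegree + 1),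
        (⟨monomial i ((p : R[X]).coeff i), aux_monomial_mem (hc i)⟩ : diagAlg 𝒜 I c) := by
      apply Subtype.ext
      have h2 := map_sum (diagAlg 𝒜 I c).val
        (fun i => (⟨monomial i ((p : R[X]).coeff i), aux_monomial_mem (hc i)⟩ : diagAlg 𝒜 I c))
        (Finset.range ((p : R[X]).natDegree + 1))
      exact ((p : R[X]).as_sum_range' _ (Nat.lt_succ_self _)).trans h2.symm
    have h3 := congrArg π h1
    rw [map_sum] at h3
    rw [← hp, h3]
    refine sum_mem fun i hi => hle (Nat.lt_succ_iff.1 (Finset.mem_range.1 hi)) ?_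
    exact ⟨⟨_, hc i⟩, rfl⟩

/-- Filter `(Jⁿ)_{cn}` by the subspaces `∑_{j < i} (I^(n-j))_{c(n-j)} b ^ j`. If `π` kills the elements
`a` with `a b ^ i ∈ A + ⋯ + A b ^ (i - 1)`, then the step from `i` to `i + 1` has dimension at least
that of the image of the piece `n - i` under `π`, and the first nonzero step is `(Iⁿ)_{cn}`. -/
theorem aux_filtration (hSG : IsStandardGraded k 𝒜) {I J : Ideal R} (hIJ : I ≤ J) {c : ℕ}
    {Q : Type*} [CommRing Q] [Algebra k Q] (π : diagAlg 𝒜 I c →ₐ[k] Q) (b : R)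
    (hb : b ∈ idealComp k 𝒜 J c)
    (hπ : ∀ (i : ℕ) (a : diagAlg 𝒜 I c) (e : ℕ → diagAlg 𝒜 I c),
      (a : R[X]) * monomial 1 b ^ i = ∑ j ∈ Finset.range i, (e j : R[X]) * monomial 1 b ^ j →
        π a = 0) (n : ℕ) :
    compLen k 𝒜 (I ^ n) (c * n) +
      ∑ j ∈ Finset.range n, Module.finrank k (LinearMap.range (piece π j)) ≤
        compLen k 𝒜 (J ^ n) (c * n) := by
  have hfd : ∀ i, FiniteDimensional k (idealComp k 𝒜 (I ^ i) (c * i)) := fun i =>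
    aux_comp_fg hSG _ _
  have hfdJ : FiniteDimensional k (idealComp k 𝒜 (J ^ n) (c * n)) := aux_comp_fg hSG _ _
  let f : ∀ i, idealComp k 𝒜 (I ^ (n - i)) (c * (n - i)) →ₗ[k] R := fun i =>
    LinearMap.mulRight k (b ^ i) ∘ₗ (idealComp k 𝒜 (I ^ (n - i)) (c * (n - i))).subtype
  have hfi : ∀ i, FiniteDimensional k (LinearMap.range (f i)) := fun i => inferInstance
  have hstep : ∀ i ≤ n, Module.finrank k
        (∑ j ∈ Finset.range i, LinearMap.range (f j) : Submodule k R) +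
      Module.finrank k (LinearMap.range (piece π (n - i))) ≤
      Module.finrank k (∑ j ∈ Finset.range (i + 1), LinearMap.range (f j) : Submodule k R) := by
    intro i hi
    rw [Finset.sum_range_succ]
    have := (aux_finrank_sum (fun j => LinearMap.range (f j)) i).1
    refine aux_finrank_sup (f i) (piece π (n - i)) _ ?_
    intro a ha
    obtain ⟨w, hw, hw'⟩ := aux_mem_sum _ _ _ ha
    choose e he using hw
    refine hπ i _ (fun j => ⟨monomial (n - j) (e j : R), aux_monomial_mem (e j).2⟩) ?_
    have h2 : ∀ (j : ℕ) (y : R), j ≤ n → (monomial (n - j) y : R[X]) * monomial 1 b ^ j =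
        monomial n (y * b ^ j) := by
      intro j y hj
      rw [monomial_pow, monomial_mul_monomial]
      congr 2
      omega
    change (monomial (n - i) (a : R) : R[X]) * monomial 1 b ^ i = _
    rw [h2 i _ hi, show (a : R) * b ^ i = _ from hw', map_sum]
    refine Finset.sum_congr rfl fun j hj => ?_
    rw [h2 j _ (by have := Finset.mem_range.1 hj; omega), ← he j]
    rfl
  have hind : ∀ i ≤ n, compLen k 𝒜 (I ^ n) (c * n) +
      ∑ j ∈ Finset.range i, Module.finrank k (LinearMap.range (piece π (n - 1 - j))) ≤
      Module.finrank k (∑ j ∈ Finset.range (i + 1), LinearMap.range (f j) : Submodule k R) := by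
    intro i
    induction i with
    | zero =>
      intro _
      have h0 : (∑ j ∈ Finset.range (0 + 1), LinearMap.range (f j) : Submodule k R) =
          idealComp k 𝒜 (I ^ n) (c * n) := by
        rw [zero_add, Finset.sum_range_one]
        ext y
        constructor
        · rintro ⟨a, rfl⟩
          change (a : R) * b ^ 0 ∈ _
          rw [pow_zero, mul_one]
          exact a.2
        · intro hy
          exact ⟨⟨y, hy⟩, by change y * b ^ 0 = y; rw [pow_zero, mul_one]⟩
      rw [h0]
      simp [compLen]
    | succ i ih =>
      intro hi
      have h1 := ih (by omega)
      have h2 := hstep (i + 1) hi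
      rw [Finset.sum_range_succ, show n - 1 - i = n - (i + 1) by omega]
      omega
  have h1 := hind n le_rfl
  rw [Finset.sum_range_reflect (fun j => Module.finrank k (LinearMap.range (piece π j))) n] at h1
  refine h1.trans (Submodule.finrank_mono ?_)
  refine Finset.sum_induction _ (fun W => W ≤ _) (fun _ _ => sup_le) bot_le fun i hi => ?_
  have hi' := Finset.mem_range.1 hi
  rintro _ ⟨a, rfl⟩
  change (a : R) * b ^ i ∈ idealComp k 𝒜 (J ^ n) (c * n)
  refine ⟨?_, ?_⟩
  · rw [show J ^ n = J ^ (n - i) * J ^ i by rw [← pow_add]; congr 1; omega]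
    exact Ideal.mul_mem_mul (Ideal.pow_right_mono hIJ _ a.2.1) (Ideal.pow_mem_pow hb.1 i)
  · have := SetLike.mul_mem_graded (A := 𝒜) a.2.2 (SetLike.pow_mem_graded i hb.2)
    rwa [show c * (n - i) + i • c = c * n by
      rw [smul_eq_mul, mul_comm i c, ← mul_add]; congr 1; omega] at this

end Gap

/-! ### Density functions and integrality -/

/-- The upper bound `M` and the lower bound `0` keep the real-valued `limsup`s away from their junk
values. -/
theorem aux_limsup_lt {p q : ℕ → ℝ} {ε M : ℝ} (hε : 0 < ε) (hp : ∀ n, 0 ≤ p n)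
    (hq : ∀ᶠ n in atTop, q n ≤ M) (h : ∀ᶠ n in atTop, p n + ε ≤ q n) :
    limsup p atTop < limsup q atTop := by
  have hbdd : IsBoundedUnder (· ≤ ·) atTop q := isBoundedUnder_of_eventually_le hq
  have h1 : ∀ᶠ n in atTop, q n < limsup q atTop + ε / 2 :=
    eventually_lt_of_limsup_lt (by linarith) hbdd
  have h2 : limsup p atTop ≤ limsup q atTop - ε / 2 := by
    refine limsup_le_of_le ?_ ?_
    · exact (isBoundedUnder_of_eventually_ge (Eventually.of_forall hp)).isCoboundedUnder_le
    · filter_upwards [h1, h] with n h3 h4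
      linarith
  linarith

section Main

variable {k : Type*} [Field k] {R : Type*} [CommRing R] [IsDomain R] [Algebra k R]
  {𝒜 : ℕ → Submodule k R} [GradedAlgebra 𝒜]

/-- A gap of order `m ^ (d - 1)` between the Hilbert functions of the two diagonal algebras makes the
density functions differ at `c`. -/
theorem aux_density_lt (hSG : IsStandardGraded k 𝒜) {d : ℕ} (hd : 2 ≤ d)
    (hdim : ringKrullDim R = (d : WithBot ℕ∞)) {I J : Ideal R} {c N : ℕ} (hN : 0 < N)
    (h : ∀ m, 0 < m → compLen k 𝒜 (I ^ m) (c * m) + ((m - 1) / N) ^ (d - 1) ≤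
      compLen k 𝒜 (J ^ m) (c * m)) :
    adicDensity k 𝒜 I d (c : ℝ) < adicDensity k 𝒜 J d (c : ℝ) := by
  obtain ⟨K, hK⟩ := aux_hilbert_bound hSG hd hdim
  have hfl : ∀ n : ℕ, ⌊(c : ℝ) * (n : ℝ)⌋₊ = c * n := fun n => by
    rw [← Nat.cast_mul, Nat.floor_natCast]
  unfold adicDensity
  simp only [hfl]
  have hN' : (0 : ℝ) < N := by exact_mod_cast hN
  refine aux_limsup_lt (ε := (d.factorial : ℝ) * (1 / (2 * N)) ^ (d - 1))
    (M := (d.factorial : ℝ) * (K * (c + 1) ^ (d - 1))) (by positivity)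
    (fun n => by positivity) ?_ ?_
  · filter_upwards [eventually_gt_atTop 0] with n hn
    have hn' : (0 : ℝ) < n := by exact_mod_cast hn
    rw [mul_div_assoc]
    refine mul_le_mul_of_nonneg_left ?_ (by positivity)
    rw [div_le_iff₀ (by positivity), mul_assoc, ← mul_pow]
    have hfd : FiniteDimensional k (𝒜 (c * n)) := Module.Finite.iff_fg.2 (aux_fg hSG _)
    have h1 : compLen k 𝒜 (J ^ n) (c * n) ≤ K * ((c + 1) * n) ^ (d - 1) := by
      refine (Submodule.finrank_mono inf_le_right).trans ((hK _).trans ?_)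
      gcongr
      rw [add_mul, one_mul]
      omega
    exact_mod_cast h1
  · filter_upwards [eventually_ge_atTop (2 * N)] with n hn
    have hn0 : 0 < n := by omega
    have hn' : (0 : ℝ) < n := by exact_mod_cast hn0
    rw [mul_div_assoc, mul_div_assoc, ← mul_add]
    refine mul_le_mul_of_nonneg_left ?_ (by positivity)
    have h2 : (1 / (2 * N) : ℝ) ≤ ((n - 1) / N : ℕ) / (n : ℝ) := by
      have h3 : n ≤ (n - 1) / N * (2 * N) := by
        have h4 := Nat.div_add_mod (n - 1) N
        have h5 := Nat.mod_lt (n - 1) hN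
        have h6 : (n - 1) / N * (2 * N) = 2 * (N * ((n - 1) / N)) := by ring
        omega
      rw [div_le_div_iff₀ (by positivity) hn', one_mul]
      exact_mod_cast h3
    have h7 := pow_le_pow_left₀ (by positivity) h2 (d - 1)
    have h8 : (compLen k 𝒜 (I ^ n) (c * n) : ℝ) + (((n - 1) / N : ℕ) : ℝ) ^ (d - 1) ≤
        compLen k 𝒜 (J ^ n) (c * n) := by exact_mod_cast h n hn0
    have h9 := div_le_div_of_nonneg_right h8 (pow_pos hn' (d - 1)).le
    rw [add_div, ← div_pow] at h9
    linarith

/-- The degree-one generators of the diagonal algebra of `J` are integral over that of `I`. -/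
theorem aux_integral_monomial (hSG : IsStandardGraded k 𝒜) {d : ℕ} (hd : 2 ≤ d)
    (hdim : ringKrullDim R = (d : WithBot ℕ∞)) {I J : Ideal R} (hI0 : I ≠ ⊥) (hIJ : I ≤ J)
    {D c : ℕ} (hDI : GeneratedInDegLE k 𝒜 I D) (hc : D < c)
    (hf : adicDensity k 𝒜 I d (c : ℝ) = adicDensity k 𝒜 J d (c : ℝ)) {b : R}
    (hb : b ∈ idealComp k 𝒜 J c) : IsIntegral (diagAlg 𝒜 I c) (monomial 1 b : R[X]) := by
  by_contra hx
  obtain ⟨e, rfl⟩ : ∃ e, c = e + 1 := ⟨c - 1, by omega⟩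
  obtain ⟨g, hg, hg0⟩ := aux_exists_elt hSG hd hdim hI0 hDI (Nat.lt_succ_iff.1 hc)
  obtain ⟨ψ, hψ⟩ := aux_embed g hg hg0
  obtain ⟨φ, hφ, -⟩ := aux_noether hSG hdim
  have := aux_diag_finiteType hSG hDI hc.le
  obtain ⟨Q, _, _, π, z, hπ, hz, hrel⟩ := aux_quotient (diagAlg 𝒜 I (e + 1)) (ψ.comp φ)
    (hψ.comp hφ) _ hx
  obtain ⟨N, hN, hcount⟩ := aux_piece_count hSG π hπ z hz
  refine (aux_density_lt hSG hd hdim hN fun m hm => ?_).ne hf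
  refine le_trans (Nat.add_le_add_left ((hcount _).trans ?_) _)
    (aux_filtration hSG hIJ π b hb hrel m)
  refine Finset.sum_le_sum_of_subset (Finset.range_mono ?_)
  have := Nat.mul_div_le (m - 1) N
  omega

end Main

/-- If the adic density functions of `I` and `J` agree at an integer
`c > 𝐝`, then every element of the diagonal subalgebra `B = ⊕ₙ (Jⁿ)_{cn}` is integral
over `A = ⊕ₙ (Iⁿ)_{cn}` (the diagonal subalgebras are realised inside `R[t]`:
a polynomial `p` lies in `A` iff its `n`-th coefficient lies in `(Iⁿ)_{cn}` for all `n`). -/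
theorem statement0
    (k : Type*) [Field k] (R : Type*) [CommRing R] [IsDomain R] [IsNoetherianRing R]
    [Algebra k R] (𝒜 : ℕ → Submodule k R) [GradedAlgebra 𝒜]
    (hSG : IsStandardGraded k 𝒜)
    (d : ℕ) (hd : 2 ≤ d) (hdim : ringKrullDim R = (d : WithBot ℕ∞))
    (I J : Ideal R) (hIhom : I.IsHomogeneous 𝒜) (hJhom : J.IsHomogeneous 𝒜) (hIJ : I ≤ J)
    (hht0 : 0 < idealHeight I) (hhtIJ : idealHeight I ≤ idealHeight J)
    (hhtJ : idealHeight J < (d : ℕ∞))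
    (D : ℕ) (hDI : GeneratedInDegLE k 𝒜 I D) (hDJ : GeneratedInDegLE k 𝒜 J D)
    (c : ℕ) (hc : D < c)
    (hf : adicDensity k 𝒜 I d (c : ℝ) = adicDensity k 𝒜 J d (c : ℝ)) :
    ∀ b : Polynomial R, (∀ n : ℕ, b.coeff n ∈ idealComp k 𝒜 (J ^ n) (c * n)) →
      ∃ m : ℕ, 0 < m ∧ ∃ a : ℕ → Polynomial R,
        (∀ i, 1 ≤ i → i ≤ m → ∀ n : ℕ, (a i).coeff n ∈ idealComp k 𝒜 (I ^ n) (c * n)) ∧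
        b ^ m + ∑ i ∈ Finset.Icc 1 m, a i * b ^ (m - i) = 0 := by
  intro b hb
  have hint : IsIntegral (diagAlg 𝒜 I c) b := by
    have h1 : diagAlg 𝒜 J c ≤
        (integralClosure (diagAlg 𝒜 I c) R[X]).restrictScalars k := by
      refine (aux_diag_le hSG hDJ hc.le _ (Submodule.span_eq _)).trans ?_
      rw [Algebra.adjoin_le_iff]
      rintro _ ⟨r, hr, rfl⟩
      exact aux_integral_monomial hSG hd hdim (aux_ne_bot hht0) hIJ hDI hc hf hr
    exact h1 hb
  obtain ⟨p, hp, hpb⟩ := hint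
  have hpb' : aeval b p = 0 := hpb
  refine ⟨p.natDegree, ?_, fun i => (p.coeff (p.natDegree - i) : R[X]),
    fun i _ _ => (p.coeff (p.natDegree - i)).2, ?_⟩
  · rw [Nat.pos_iff_ne_zero]
    intro h0
    rw [hp.natDegree_eq_zero.1 h0, map_one] at hpb'
    exact one_ne_zero hpb'
  · rw [aeval_eq_sum_range, Finset.sum_range_succ, ← Finset.sum_range_reflect,
      coeff_natDegree, hp.leadingCoeff, one_smul, add_comm] at hpb'
    rw [← hpb']
    congr 1
    rw [← Finset.Ico_add_one_right_eq_Icc, Finset.sum_Ico_eq_sum_range, Nat.add_sub_cancel]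
    refine Finset.sum_congr rfl fun i _ => ?_
    rw [show p.natDegree - 1 - i = p.natDegree - (1 + i) by omega]
    rfl
end

section
/- If c > 𝐝 is an integer with f_{{Iⁿ}}(c) = f_{{Jⁿ}}(c), then (J̄)_c = (Ī)_c, i.e., the degree-c homogeneous components of the integral closures of J and I coincide. -/
/-!
Write `V = I_c` and `W = J_c`. Since `c` is at least the generating degrees, `(Iⁿ)_{cn} = Vⁿ` and
`(Jⁿ)_{cn} = Wⁿ` (`idealComp_pow`), so the density functions at `c` only see the growth of the
dimensions of the powers of `V ⊆ W`. The theorem follows from two facts.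

* If some `w ∈ W` is not integral over the algebra `k[V]`, then
  `dim Wⁿ - dim Vⁿ ≥ ε n ^ (d - 1)` for some `ε > 0` and all `n ≥ 1` (`exists_gap`); as the densities
  are finite, the density of `J` at `c` is then strictly larger than that of `I` (`adicDensity_lt`).
* If every `w ∈ W` is integral over `k[V]`, then a form `r` of degree `c` integral over `J` satisfies
  an equation whose `i`-th coefficient lies in `(Jⁱ)_{ci} = Wⁱ`, so it is integral over `k[W]`, hence
  over `k[V]`; the components of suitable degree of the new equation have coefficients in `Vⁱ ⊆ Iⁱ`
  (`isIntOverIdeal_trans`).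

For the first fact, work in the fraction field of `R` and put `E = k[V, w⁻¹]`, `f = w⁻¹`. If `f` were
a unit of `E`, then `w ∈ k[V, w⁻¹]` would be integral over `k[V]`. The algebra `k[V]` has growth of
order `d`, because multiplication by a nonzero element of `I` of degree less than `c` embeds copies of
the graded pieces of `R` (`exists_lower_growth_idealComp`). By Noether normalization of `E` and the
norm-like constant coefficient of the minimal polynomial of `f`, the quotient `E / f` still has growth
of order `d - 1` (`growth_quotient`); it is generated by the image `V'` of `V`. With `U = V + k w`, the
chain `Vᴺ = U⁰Vᴺ ⊆ U¹Vᴺ⁻¹ ⊆ ⋯ ⊆ Uᴺ ⊆ Wᴺ` gains at least `dim V'ʲ` at the step from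
`Uᴺ⁻ʲ⁻¹Vʲ⁺¹` to `Uᴺ⁻ʲVʲ`, since `UⁱVᴺ⁻ⁱ ⊆ wⁱE`. Summing over `j < N` gives the
dimension of `(k + V')ᴺ⁻¹`, which is at least a positive multiple of `N ^ (d - 1)` (`growth_gap`).
-/

open Filter Polynomial MeasureTheory

/-! ### Krull dimension and growth of finitely generated algebras -/

theorem ringKrullDim_eq_of_integral_injective {A B : Type*} [CommRing A] [CommRing B] [Algebra A B]
    [IsDomain B] [Algebra.IsIntegral A B] (hinj : Function.Injective (algebraMap A B)) :
    ringKrullDim A = ringKrullDim B := by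
  have : FaithfulSMul A B := (faithfulSMul_iff_algebraMap_injective A B).2 hinj
  apply le_antisymm
  · refine iSup_le fun l => ?_
    obtain ⟨P, hP, hPl⟩ := Ideal.exists_ideal_over_prime_of_isIntegral_of_isDomain
      (R := A) (S := B) l.head.asIdeal (by
        rw [(RingHom.injective_iff_ker_eq_bot _).1 hinj]; exact bot_le)
    have : P.LiesOver (RelSeries.head l).asIdeal := ⟨hPl.symm⟩
    obtain ⟨L, hL, -⟩ := Ideal.exists_ltSeries_of_hasGoingUp l P
    rw [← hL]
    exact Order.LTSeries.length_le_krullDim L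
  · refine Order.krullDim_le_of_strictMono (PrimeSpectrum.comap (algebraMap A B)) ?_
    intro p q hpq
    exact Ideal.IsIntegral.comap_lt_comap (I := p.asIdeal) (J := q.asIdeal) hpq

section Growth

variable {k : Type*} [Field k]

theorem finrank_restrictDegree (σ : Type*) [Fintype σ] (n : ℕ) :
    Module.finrank k (MvPolynomial.restrictDegree σ k n) = (n + 1) ^ Fintype.card σ := by
  classical
  have e : {f : σ →₀ ℕ | ∀ a, f a ≤ n} ≃ (σ → Fin (n + 1)) :=
    { toFun := fun f a => ⟨f.1 a, Nat.lt_succ_of_le (f.2 a)⟩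
      invFun := fun g => ⟨Finsupp.equivFunOnFinite.symm fun a => (g a : ℕ),
        fun a => Nat.le_of_lt_succ (g a).2⟩
      left_inv := fun f => by ext a; simp
      right_inv := fun g => by ext a; simp }
  have b := MvPolynomial.basisRestrictSupport k {f : σ →₀ ℕ | ∀ a, f a ≤ n}
  have := Module.finrank_eq_nat_card_basis b
  rw [Nat.card_congr e] at this
  rw [MvPolynomial.restrictDegree, this]
  simp

theorem restrictDegree_mul_le (σ : Type*) (m n : ℕ) :
    MvPolynomial.restrictDegree σ k m * MvPolynomial.restrictDegree σ k n ≤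
      MvPolynomial.restrictDegree σ k (m + n) := by
  classical
  rw [Submodule.mul_le]
  intro p hp q hq
  rw [MvPolynomial.mem_restrictDegree] at *
  intro s hs i
  obtain ⟨a, ha, b, hb, rfl⟩ := Finset.mem_add.1 (MvPolynomial.support_mul p q hs)
  exact add_le_add (hp a ha i) (hq b hb i)

theorem one_le_restrictDegree (σ : Type*) (m : ℕ) :
    1 ≤ MvPolynomial.restrictDegree σ k m := by
  classical
  rw [Submodule.one_le, MvPolynomial.mem_restrictDegree]
  intro s hs i
  rw [MvPolynomial.mem_support_iff, MvPolynomial.coeff_one] at hs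
  have : s = 0 := by by_contra h; exact hs (if_neg fun h' => h h'.symm)
  simp [this]

theorem restrictDegree_pow_le (σ : Type*) (m n : ℕ) :
    MvPolynomial.restrictDegree σ k m ^ n ≤ MvPolynomial.restrictDegree σ k (m * n) := by
  induction n with
  | zero => simpa using one_le_restrictDegree (k := k) σ 0
  | succ n ih =>
    rw [pow_succ, Nat.mul_succ]
    exact (mul_le_mul' ih le_rfl).trans (restrictDegree_mul_le σ _ _)

theorem restrictDegree_mono (σ : Type*) {m n : ℕ} (h : m ≤ n) :
    MvPolynomial.restrictDegree σ k m ≤ MvPolynomial.restrictDegree σ k n :=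
  MvPolynomial.restrictSupport_mono _ fun _ hf i => (hf i).trans h

theorem finite_mul {B : Type*} [CommRing B] [Algebra k B] (P Q : Submodule k B)
    [Module.Finite k P] [Module.Finite k Q] : Module.Finite k ↥(P * Q) :=
  Module.Finite.iff_fg.2 (Submodule.FG.mul (Module.Finite.iff_fg.1 ‹_›) (Module.Finite.iff_fg.1 ‹_›))

theorem finite_pow {B : Type*} [CommRing B] [Algebra k B] (P : Submodule k B)
    [Module.Finite k P] (n : ℕ) : Module.Finite k ↥(P ^ n) :=
  Module.Finite.iff_fg.2 (Submodule.FG.pow (Module.Finite.iff_fg.1 ‹_›) n)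

theorem finrank_mul_le' {B : Type*} [CommRing B] [Algebra k B] (P Q : Submodule k B)
    [Module.Finite k P] [Module.Finite k Q] :
    Module.finrank k ↥(P * Q) ≤ Module.finrank k P * Module.finrank k Q := by
  rw [← Submodule.mulMap_range, ← Module.finrank_tensorProduct]
  exact LinearMap.finrank_range_le _

/-- A finitely generated algebra which is finite over a polynomial ring in `e` variables grows
at most like a polynomial of degree `e`. -/
theorem growth_upper {B : Type*} [CommRing B] [Algebra k B] {e : ℕ}
    (g : MvPolynomial (Fin e) k →ₐ[k] B) (hg : g.Finite)
    (X : Submodule k B) [Module.Finite k X] :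
    ∃ C : ℕ, ∀ n : ℕ, Module.finrank k ↥(X ^ n) ≤ C * (n + 1) ^ e := by
  classical
  have hg' : g.toRingHom.Finite := hg
  algebraize [g.toRingHom]
  obtain ⟨S, hS⟩ := (Module.Finite.fg_top : (⊤ : Submodule (MvPolynomial (Fin e) k) B).FG)
  let F : Submodule k B := Submodule.span k (insert 1 (S : Set B))
  let Y : ℕ → Submodule k B := fun m => (MvPolynomial.restrictDegree (Fin e) k m).map g.toLinearMap
  have hYmono : ∀ {m n : ℕ}, m ≤ n → Y m ≤ Y n := fun h => Submodule.map_mono (restrictDegree_mono _ h)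
  have hYmul : ∀ m n, Y m * Y n ≤ Y (m + n) := fun m n => by
    simp only [Y]
    rw [← Submodule.map_mul]
    exact Submodule.map_mono (restrictDegree_mul_le _ _ _)
  have hFfin : Module.Finite k F :=
    Module.Finite.iff_fg.2 (Submodule.fg_span (S.finite_toSet.insert 1))
  -- the subspaces `Y m * F` exhaust `B`
  have hex : ∀ b : B, ∃ m, b ∈ Y m * F := by
    intro b
    have hb : b ∈ Submodule.span (MvPolynomial (Fin e) k) (S : Set B) := by rw [hS]; trivial
    induction hb using Submodule.span_induction with
    | mem x hx =>
      refine ⟨0, ?_⟩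
      have h1 : (1 : B) ∈ Y 0 :=
        ⟨1, Submodule.one_le.1 (one_le_restrictDegree _ 0), map_one g⟩
      simpa using Submodule.mul_mem_mul h1
        (Submodule.subset_span (Set.mem_insert_of_mem _ hx) : x ∈ F)
    | zero => exact ⟨0, zero_mem _⟩
    | add x y _ _ hx hy =>
      obtain ⟨a, ha⟩ := hx
      obtain ⟨c, hc⟩ := hy
      refine ⟨max a c, add_mem ?_ ?_⟩
      · exact mul_le_mul' (hYmono (le_max_left a c)) le_rfl ha
      · exact mul_le_mul' (hYmono (le_max_right a c)) le_rfl hc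
    | smul t x _ hx =>
      obtain ⟨a, ha⟩ := hx
      obtain ⟨m, hm⟩ : ∃ m, t ∈ MvPolynomial.restrictDegree (Fin e) k m := by
        refine ⟨t.totalDegree, ?_⟩
        exact MvPolynomial.restrictTotalDegree_le_restrictDegree _ _ _
          ((MvPolynomial.mem_restrictTotalDegree _ _ _).2 le_rfl)
      refine ⟨m + a, ?_⟩
      have h1 : g t * x ∈ Y m * (Y a * F) := Submodule.mul_mem_mul ⟨t, hm, rfl⟩ ha
      rw [← mul_assoc] at h1
      exact mul_le_mul' (hYmul m a) le_rfl h1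
  have hexZ : ∀ Z : Submodule k B, Z.FG → ∃ m, Z ≤ Y m * F := by
    rintro Z ⟨s, rfl⟩
    induction s using Finset.induction_on with
    | empty => exact ⟨0, by simp⟩
    | insert a s _ ih =>
      obtain ⟨m, hm⟩ := ih
      obtain ⟨n, hn⟩ := hex a
      refine ⟨max m n, ?_⟩
      rw [Submodule.span_le, Finset.coe_insert, Set.insert_subset_iff]
      refine ⟨mul_le_mul' (hYmono (le_max_right m n)) le_rfl hn, ?_⟩
      exact (Submodule.subset_span.trans hm).trans (mul_le_mul' (hYmono (le_max_left m n)) le_rfl)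
  have hXF := finite_mul X F
  obtain ⟨s, hs⟩ := hexZ (X * F) (Module.Finite.iff_fg.1 hXF)
  have key : ∀ n, X ^ n * F ≤ Y (s * n) * F := by
    intro n
    induction n with
    | zero =>
      have : (1 : Submodule k B) ≤ Y 0 := by
        rw [Submodule.one_le]
        exact ⟨1, Submodule.one_le.1 (one_le_restrictDegree _ 0), map_one g⟩
      simpa using mul_le_mul' this (le_refl F)
    | succ n ih =>
      calc X ^ (n + 1) * F = X * (X ^ n * F) := by rw [pow_succ']; ring
        _ ≤ X * (Y (s * n) * F) := mul_le_mul' le_rfl ih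
        _ = Y (s * n) * (X * F) := by ring
        _ ≤ Y (s * n) * (Y s * F) := mul_le_mul' le_rfl hs
        _ = (Y (s * n) * Y s) * F := by ring
        _ ≤ Y (s * (n + 1)) * F := mul_le_mul' (hYmul _ _) le_rfl
  have h1F : (1 : Submodule k B) ≤ F :=
    Submodule.one_le.2 (Submodule.subset_span (Set.mem_insert _ _))
  refine ⟨(s + 1) ^ e * Module.finrank k F, fun n => ?_⟩
  have hYfin : Module.Finite k (Y (s * n)) := inferInstanceAs
    (Module.Finite k ↥((MvPolynomial.restrictDegree (Fin e) k (s * n)).map g.toLinearMap))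
  have := finite_mul (Y (s * n)) F
  calc Module.finrank k ↥(X ^ n) ≤ Module.finrank k ↥(Y (s * n) * F) := by
        apply Submodule.finrank_mono
        refine le_trans ?_ (key n)
        simpa using mul_le_mul' (le_refl (X ^ n)) h1F
    _ ≤ Module.finrank k (Y (s * n)) * Module.finrank k F := finrank_mul_le' _ _
    _ ≤ (s * n + 1) ^ e * Module.finrank k F := by
        gcongr
        refine (Submodule.finrank_map_le _ _).trans ?_
        rw [finrank_restrictDegree, Fintype.card_fin]
    _ ≤ ((s + 1) * (n + 1)) ^ e * Module.finrank k F := by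
        gcongr
        nlinarith
    _ = _ := by rw [mul_pow]; ring

theorem prod_mem_prod' {B ι : Type*} [CommRing B] [Algebra k B] (s : Finset ι)
    (P : ι → Submodule k B) (x : ι → B) (h : ∀ i, x i ∈ P i) : ∏ i ∈ s, x i ∈ ∏ i ∈ s, P i := by
  classical
  induction s using Finset.induction_on with
  | empty => simpa using Submodule.one_le.1 (le_refl (1 : Submodule k B))
  | insert a s ha ih =>
    rw [Finset.prod_insert ha, Finset.prod_insert ha]
    exact Submodule.mul_mem_mul (h a) ih

/-- If `X` contains `1` and generates `B`, the image of the polynomials with exponents at most `n`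
lies in a power of `X` whose exponent is linear in `n`. -/
theorem box_le_pow {B : Type*} [CommRing B] [Algebra k B] {e : ℕ}
    (g : MvPolynomial (Fin e) k →ₐ[k] B) (X : Submodule k B) (h1 : 1 ≤ X)
    (hX : ∀ b : B, ∃ n, b ∈ X ^ n) :
    ∃ s : ℕ, ∀ n : ℕ, (MvPolynomial.restrictDegree (Fin e) k n).map g.toLinearMap ≤ X ^ (s * n) := by
  have hmono : ∀ {m n : ℕ}, m ≤ n → X ^ m ≤ X ^ n := fun h => pow_le_pow_right' h1 h
  choose t ht using fun i : Fin e => hX (g (MvPolynomial.X i))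
  refine ⟨∑ i, t i, fun n => ?_⟩
  rw [MvPolynomial.restrictDegree, MvPolynomial.restrictSupport_eq_span, Submodule.map_span,
    Submodule.span_le]
  rintro _ ⟨_, ⟨m, hm, rfl⟩, rfl⟩
  have h2 : g (MvPolynomial.monomial m 1) = ∏ i, g (MvPolynomial.X i) ^ m i := by
    rw [MvPolynomial.monomial_eq, Finsupp.prod_fintype _ _ (by simp)]
    simp
  have h3 : ∏ i, g (MvPolynomial.X i) ^ m i ∈ ∏ i, X ^ (t i * n) := by
    refine prod_mem_prod' _ _ _ fun i => ?_
    refine hmono (Nat.mul_le_mul_left _ (hm i)) ?_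
    rw [pow_mul]
    exact Submodule.pow_mem_pow _ (ht i) _
  rw [Finset.prod_pow_eq_pow_sum, ← Finset.sum_mul] at h3
  simpa [h2] using h3

end Growth

/-! ### Growth modulo a nonunit -/

/-- For an integral extension of a normal domain `T`, a nonzero nonunit `f` upstairs has a nonzero
nonunit `a` downstairs (the constant coefficient of its minimal polynomial) such that `a` divides
a power of each element of `T` that `f` divides. -/
theorem exists_nonunit_dvd_pow {T E : Type*} [CommRing T] [IsDomain T] [IsIntegrallyClosed T]
    [CommRing E] [IsDomain E] [Algebra T E] [FaithfulSMul T E] [Algebra.IsIntegral T E]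
    (f : E) (hf0 : f ≠ 0) (hfu : ¬ IsUnit f) :
    ∃ a : T, a ≠ 0 ∧ ¬ IsUnit a ∧ ∀ (t : T) (x : E), algebraMap T E t = f * x → ∃ s, a ∣ t ^ s := by
  have hint : IsIntegral T f := Algebra.IsIntegral.isIntegral f
  refine ⟨(minpoly T f).coeff 0, ?_, ?_, ?_⟩
  · intro h0
    -- otherwise a polynomial of smaller degree would annihilate `f`
    have h := Polynomial.X_mul_divX_add (minpoly T f)
    rw [h0, map_zero, add_zero] at h
    have h2 := minpoly.aeval T f
    rw [← h, map_mul, aeval_X, mul_eq_zero, or_iff_right hf0] at h2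
    have hne : (minpoly T f).divX ≠ 0 := by
      intro h3
      rw [h3, mul_zero] at h
      exact minpoly.ne_zero hint h.symm
    have h4 := natDegree_le_of_dvd (minpoly.isIntegrallyClosed_dvd hint h2) hne
    have h5 : (minpoly T f).natDegree = (minpoly T f).divX.natDegree + 1 := by
      conv_lhs => rw [← h, natDegree_X_mul hne]
    omega
  · intro hu
    apply hfu
    have h := minpoly.aeval T f
    rw [← Polynomial.X_mul_divX_add (minpoly T f)] at h
    simp only [map_add, map_mul, aeval_X, aeval_C] at h
    have h2 : IsUnit (f * -(aeval f) (minpoly T f).divX) := by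
      have : f * -(aeval f) (minpoly T f).divX = algebraMap T E ((minpoly T f).coeff 0) := by
        linear_combination -h
      rw [this]
      exact hu.map _
    exact isUnit_of_mul_isUnit_left h2
  · intro t x htx
    obtain ⟨m, hm, hmx⟩ : IsIntegral T x := Algebra.IsIntegral.isIntegral x
    -- `f` is a root of the polynomial with coefficients `mⱼ tʲ` in complementary degrees
    let G : T[X] := ∑ j ∈ Finset.range (m.natDegree + 1),
      C (m.coeff j * t ^ j) * X ^ (m.natDegree - j)
    have hG : aeval f G = 0 := by
      have h1 : f ^ m.natDegree * eval₂ (algebraMap T E) x m = 0 := by rw [hmx, mul_zero]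
      rw [← h1, eval₂_eq_sum_range, Finset.mul_sum]
      simp only [G, map_sum, map_mul, aeval_C, map_pow, aeval_X]
      refine Finset.sum_congr rfl fun j hj => ?_
      have hj' : j ≤ m.natDegree := Nat.lt_succ_iff.1 (Finset.mem_range.1 hj)
      obtain ⟨i, hi⟩ := Nat.exists_eq_add_of_le hj'
      rw [hi, htx, Nat.add_sub_cancel_left]
      ring
    obtain ⟨q, hq⟩ := minpoly.isIntegrallyClosed_dvd hint hG
    refine ⟨m.natDegree, q.coeff 0, ?_⟩
    rw [← mul_coeff_zero, ← hq]
    simp only [G, finsetSum_coeff, coeff_C_mul, coeff_X_pow]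
    rw [Finset.sum_eq_single m.natDegree]
    · simp [hm.coeff_natDegree]
    · intro j hj hne
      have hj' : j < m.natDegree :=
        lt_of_le_of_ne (Nat.lt_succ_iff.1 (Finset.mem_range.1 hj)) hne
      rw [if_neg (by omega), mul_zero]
    · simp

section

variable {k : Type*} [Field k]

theorem exists_degreeOf_pos {σ : Type*} (a : MvPolynomial σ k) (h0 : a ≠ 0) (hu : ¬ IsUnit a) :
    ∃ i, 0 < a.degreeOf i := by
  by_contra! h
  have h' : a.totalDegree = 0 := by
    rw [MvPolynomial.totalDegree_eq_zero_iff]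
    intro m hm i
    have := MvPolynomial.monomial_le_degreeOf i hm
    exact Nat.le_zero.1 (this.trans (h i))
  rw [MvPolynomial.totalDegree_eq_zero_iff_eq_C] at h'
  apply hu
  rw [h']
  refine IsUnit.map _ (isUnit_iff_ne_zero.2 fun h2 => h0 ?_)
  rw [h', h2, map_zero]

theorem degreeOf_dvd_le {σ : Type*} (i : σ) (a b : MvPolynomial σ k) (hb : b ≠ 0) (h : a ∣ b) :
    a.degreeOf i ≤ b.degreeOf i := by
  obtain ⟨c, rfl⟩ := h
  have ha : a ≠ 0 := by rintro rfl; simp at hb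
  have hc : c ≠ 0 := by rintro rfl; simp at hb
  rw [MvPolynomial.degreeOf_mul_eq ha hc]
  exact Nat.le_add_right _ _

theorem degreeOf_rename_val_eq_zero {σ : Type*} (i : σ) (q : MvPolynomial {j // j ≠ i} k) :
    (MvPolynomial.rename Subtype.val q).degreeOf i = 0 := by
  classical
  rw [← Nat.le_zero, MvPolynomial.degreeOf_le_iff]
  intro m hm
  obtain ⟨u, rfl, -⟩ := MvPolynomial.coeff_rename_ne_zero _ _ _ (MvPolynomial.mem_support_iff.1 hm)
  rw [Finsupp.mapDomain_of_notMem_range]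
  rintro ⟨j, hj⟩
  exact j.2 hj

theorem rename_val_mem_restrictDegree {σ : Type*} (i : σ) (q : MvPolynomial {j // j ≠ i} k) (n : ℕ)
    (hq : q ∈ MvPolynomial.restrictDegree _ k n) :
    MvPolynomial.rename Subtype.val q ∈ MvPolynomial.restrictDegree σ k n := by
  classical
  rw [MvPolynomial.mem_restrictDegree] at *
  intro m hm j
  obtain ⟨u, rfl, hu⟩ := MvPolynomial.coeff_rename_ne_zero _ _ _ (MvPolynomial.mem_support_iff.1 hm)
  by_cases hj : j = i
  · rw [Finsupp.mapDomain_of_notMem_range]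
    · exact Nat.zero_le _
    · rintro ⟨l, hl⟩
      exact l.2 (hl.trans hj)
  · have := Finsupp.mapDomain_apply (M := ℕ) (Subtype.val_injective (p := fun j => j ≠ i)) u ⟨j, hj⟩
    simp only at this
    rw [this]
    exact hq u (MvPolynomial.mem_support_iff.2 hu) _

theorem le_of_pow_bound (d e C : ℕ) (h : ∀ n : ℕ, (n + 1) ^ d ≤ C * (n + 1) ^ e) : d ≤ e := by
  by_contra! hlt
  have h1 := h C
  obtain ⟨j, rfl⟩ := Nat.exists_eq_add_of_lt hlt
  have h2 : (C + 1) ^ (e + j + 1) = ((C + 1) ^ j * (C + 1)) * (C + 1) ^ e := by ring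
  rw [h2] at h1
  have h3 := Nat.le_of_mul_le_mul_right h1 (by positivity)
  have h4 : 1 * (C + 1) ≤ (C + 1) ^ j * (C + 1) :=
    Nat.mul_le_mul_right _ (Nat.one_le_pow _ _ (Nat.succ_pos _))
  omega

/-- An algebra exhausted by the powers of a finite-dimensional subspace is of finite type. -/
theorem finiteType_of_pow {E : Type*} [CommRing E] [Algebra k E]
    (X : Submodule k E) [Module.Finite k X] (hX : ∀ b : E, ∃ n, b ∈ X ^ n) :
    Algebra.FiniteType k E := by
  obtain ⟨S, hS⟩ := Module.Finite.iff_fg.1 (‹_› : Module.Finite k X)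
  refine ⟨⟨S, ?_⟩⟩
  rw [eq_top_iff]
  intro b _
  obtain ⟨n, hn⟩ := hX b
  have hle : X ≤ Subalgebra.toSubmodule (Algebra.adjoin k (S : Set E)) := by
    rw [← hS, Submodule.span_le]
    exact Algebra.subset_adjoin
  have : ∀ n, X ^ n ≤ Subalgebra.toSubmodule (Algebra.adjoin k (S : Set E)) := by
    intro n
    induction n with
    | zero => simp
    | succ n ih =>
      rw [pow_succ, Submodule.mul_le]
      intro a ha c hc
      exact mul_mem (S := Subalgebra k E) (ih ha) (hle hc)
  exact this n hn

/-- A finitely generated domain of growth at least `n ^ d` has growth at least `n ^ (d - 1)`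
modulo any nonzero nonunit `f`: a polynomial ring in at least `d - 1` variables embeds in the quotient. -/
theorem growth_quotient {E : Type*} [CommRing E] [IsDomain E] [Algebra k E] (d : ℕ) (f : E)
    (hf0 : f ≠ 0) (hfu : ¬ IsUnit f) (X : Submodule k E) [Module.Finite k X] (h1 : 1 ≤ X)
    (hX : ∀ b : E, ∃ n, b ∈ X ^ n)
    (hd : ∃ s : ℕ, ∀ n : ℕ, (n + 1) ^ d ≤ Module.finrank k ↥(X ^ (s * n))) :
    ∃ s : ℕ, ∀ n : ℕ, (n + 1) ^ (d - 1) ≤ Module.finrank k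
      ↥((X ^ (s * n)).map (Ideal.Quotient.mkₐ k (Ideal.span {f})).toLinearMap) := by
  have := finiteType_of_pow X hX
  obtain ⟨e, g, hginj, hgfin⟩ := exists_finite_inj_algHom_of_fg k E
  have hde : d ≤ e := by
    obtain ⟨s, hs⟩ := hd
    obtain ⟨C, hC⟩ := growth_upper g hgfin X
    refine le_of_pow_bound d e (C * (s + 1) ^ e) fun n => ?_
    calc (n + 1) ^ d ≤ C * (s * n + 1) ^ e := (hs n).trans (hC _)
      _ ≤ C * ((s + 1) * (n + 1)) ^ e := by gcongr; nlinarith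
      _ = _ := by rw [mul_pow]; ring
  have hdvd : ∃ a : MvPolynomial (Fin e) k, a ≠ 0 ∧ ¬ IsUnit a ∧
      ∀ (t : MvPolynomial (Fin e) k) (x : E), g t = f * x → ∃ s, a ∣ t ^ s := by
    have hg' : g.toRingHom.Finite := hgfin
    algebraize [g.toRingHom]
    have : FaithfulSMul (MvPolynomial (Fin e) k) E :=
      (faithfulSMul_iff_algebraMap_injective _ _).2 hginj
    exact exists_nonunit_dvd_pow (T := MvPolynomial (Fin e) k) f hf0 hfu
  obtain ⟨a, ha0, hau, ha⟩ := hdvd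
  obtain ⟨i, hi⟩ := exists_degreeOf_pos a ha0 hau
  obtain ⟨s, hs⟩ := box_le_pow g X h1 hX
  refine ⟨s, fun n => ?_⟩
  let q := Ideal.Quotient.mkₐ k (Ideal.span {f})
  let ψ : MvPolynomial {j // j ≠ i} k →ₐ[k] (E ⧸ Ideal.span {f}) :=
    (q.comp g).comp (MvPolynomial.rename Subtype.val)
  have hψ : Function.Injective ψ := by
    rw [injective_iff_map_eq_zero]
    intro p hp
    have hp' : g (MvPolynomial.rename Subtype.val p) ∈ Ideal.span {f} :=
      Ideal.Quotient.eq_zero_iff_mem.1 hp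
    obtain ⟨x, hx⟩ := Ideal.mem_span_singleton.1 hp'
    obtain ⟨r, hr⟩ := ha _ _ hx
    by_contra hne
    rw [← map_pow] at hr
    have h3 := degreeOf_dvd_le i _ _ (by
      rw [Ne, map_eq_zero_iff _ (MvPolynomial.rename_injective _ Subtype.val_injective)]
      exact pow_ne_zero r hne) hr
    rw [degreeOf_rename_val_eq_zero] at h3
    omega
  calc (n + 1) ^ (d - 1) ≤ (n + 1) ^ (e - 1) := Nat.pow_le_pow_right (Nat.succ_pos n) (by omega)
    _ = Module.finrank k (MvPolynomial.restrictDegree {j // j ≠ i} k n) := by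
        rw [finrank_restrictDegree]
        simp [Fintype.card_subtype_compl]
    _ = Module.finrank k ((MvPolynomial.restrictDegree {j // j ≠ i} k n).map ψ.toLinearMap) :=
        (Submodule.equivMapOfInjective ψ.toLinearMap hψ _).finrank_eq
    _ ≤ _ := by
        have := finite_pow X (s * n)
        apply Submodule.finrank_mono
        rintro _ ⟨p, hp, rfl⟩
        exact ⟨g (MvPolynomial.rename Subtype.val p),
          hs n ⟨_, rename_val_mem_restrictDegree i p n hp, rfl⟩, rfl⟩

end

/-! ### Graded pieces of a standard graded domain -/

section Graded

open scoped Pointwise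

variable {k : Type*} [Field k] {R : Type*} [CommRing R] [Algebra k R]

theorem finrank_le_of_mul_mem [IsDomain R] {P Q : Submodule k R} [Module.Finite k Q] {f : R}
    (hf : f ≠ 0) (h : ∀ a ∈ P, f * a ∈ Q) : Module.finrank k P ≤ Module.finrank k Q := by
  refine LinearMap.finrank_le_finrank_of_injective
    (f := (LinearMap.mulLeft k f).restrict (p := P) (q := Q) h) ?_
  intro a b hab
  have := congrArg Subtype.val hab
  exact Subtype.ext (mul_left_cancel₀ hf this)

/-- The powers of `k + V` are the partial sums of the powers of `V`. -/
theorem one_sup_pow_succ (V : Submodule k R) (n : ℕ) :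
    (1 ⊔ V) ^ (n + 1) = (1 ⊔ V) ^ n ⊔ V ^ (n + 1) := by
  induction n with
  | zero => simp
  | succ n ih =>
    have h1 : (1 ⊔ V) ^ n * V ≤ (1 ⊔ V) ^ (n + 1) := by
      rw [pow_succ]; exact mul_le_mul' le_rfl le_sup_right
    have h2 : (1 ⊔ V) ^ (n + 1) * V = (1 ⊔ V) ^ n * V ⊔ V ^ (n + 2) := by
      rw [ih, Submodule.sup_mul, ← pow_succ]
    rw [pow_succ _ (n + 1), Submodule.mul_sup, mul_one, h2, ← sup_assoc, sup_eq_left.2 h1]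

theorem finite_one_sup (V : Submodule k R) [Module.Finite k V] :
    Module.Finite k ↥(1 ⊔ V) := by
  have : Module.Finite k ↥(1 : Submodule k R) := by
    rw [Submodule.one_eq_span]; infer_instance
  infer_instance

theorem finrank_one_sup_pow_le (V : Submodule k R) [Module.Finite k V] (n : ℕ) :
    Module.finrank k ↥((1 ⊔ V) ^ n) ≤ ∑ j ∈ Finset.range (n + 1), Module.finrank k ↥(V ^ j) := by
  have := finite_one_sup V
  induction n with
  | zero => rw [zero_add, Finset.sum_range_one, pow_zero, pow_zero]
  | succ n ih =>
    have := finite_pow (1 ⊔ V) n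
    have := finite_pow V (n + 1)
    rw [Finset.sum_range_succ, one_sup_pow_succ]
    have := Submodule.finrank_sup_add_finrank_inf_eq ((1 ⊔ V) ^ n) (V ^ (n + 1))
    omega

variable {𝒜 : ℕ → Submodule k R}

theorem grade_add (hSG : IsStandardGraded k 𝒜) (i j : ℕ) : 𝒜 (i + j) = 𝒜 i * 𝒜 j := by
  induction i with
  | zero => rw [hSG.1, zero_add, ← Submodule.one_eq_span, one_mul]
  | succ i ih => rw [Nat.add_right_comm, hSG.2.1, ih, hSG.2.1 i, mul_assoc]

theorem grade_mul_eq_pow (hSG : IsStandardGraded k 𝒜) (i n : ℕ) : 𝒜 (i * n) = 𝒜 i ^ n := by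
  induction n with
  | zero => rw [Nat.mul_zero, pow_zero, hSG.1, Submodule.one_eq_span]
  | succ n ih => rw [Nat.mul_succ, grade_add hSG, ih, pow_succ]

theorem grade_eq_pow (hSG : IsStandardGraded k 𝒜) (n : ℕ) : 𝒜 n = 𝒜 1 ^ n := by
  rw [← grade_mul_eq_pow hSG, one_mul]

theorem grade_finite (hSG : IsStandardGraded k 𝒜) (n : ℕ) : Module.Finite k (𝒜 n) := by
  have : Module.Finite k (𝒜 1) := Module.Finite.iff_fg.2 hSG.2.2
  rw [grade_eq_pow hSG]
  exact finite_pow _ _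

theorem idealComp_finite (hSG : IsStandardGraded k 𝒜) (I : Ideal R) (n : ℕ) :
    Module.Finite k (idealComp k 𝒜 I n) := by
  have := grade_finite hSG n
  exact Submodule.finiteDimensional_of_le (S₂ := 𝒜 n) inf_le_right

theorem idealComp_mono (𝒜 : ℕ → Submodule k R) {I J : Ideal R} (h : I ≤ J) (n : ℕ) :
    idealComp k 𝒜 I n ≤ idealComp k 𝒜 J n :=
  inf_le_inf (fun _ hx => h hx) le_rfl

theorem GeneratedInDegLE.mul {M N : Ideal R} {a b : ℕ} (hM : GeneratedInDegLE k 𝒜 M a)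
    (hN : GeneratedInDegLE k 𝒜 N b) [SetLike.GradedMonoid 𝒜] :
    GeneratedInDegLE k 𝒜 (M * N) (a + b) := by
  obtain ⟨s, rfl, hs⟩ := hM
  obtain ⟨t, rfl, ht⟩ := hN
  refine ⟨s * t, Ideal.span_mul_span' s t, ?_⟩
  rintro _ ⟨x, hx, y, hy, rfl⟩
  obtain ⟨i, hi, hxi⟩ := hs x hx
  obtain ⟨j, hj, hyj⟩ := ht y hy
  exact ⟨i + j, add_le_add hi hj, SetLike.mul_mem_graded hxi hyj⟩

theorem GeneratedInDegLE.pow {M : Ideal R} {a : ℕ} (hM : GeneratedInDegLE k 𝒜 M a)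
    [SetLike.GradedMonoid 𝒜] (n : ℕ) : GeneratedInDegLE k 𝒜 (M ^ n) (a * n) := by
  induction n with
  | zero => exact ⟨{1}, by simp, by rintro r rfl; exact ⟨0, le_rfl, SetLike.GradedOne.one_mem⟩⟩
  | succ n ih => rw [pow_succ, Nat.mul_succ]; exact ih.mul hM

theorem idealComp_mul_le [SetLike.GradedMonoid 𝒜] (M N : Ideal R) (a b : ℕ) :
    idealComp k 𝒜 M a * idealComp k 𝒜 N b ≤ idealComp k 𝒜 (M * N) (a + b) := by
  rw [Submodule.mul_le]
  rintro x ⟨hx, hx'⟩ y ⟨hy, hy'⟩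
  exact ⟨Ideal.mul_mem_mul hx hy, SetLike.mul_mem_graded hx' hy'⟩

theorem finrank_grade_mono [IsDomain R] (hSG : IsStandardGraded k 𝒜) (h1 : 𝒜 1 ≠ ⊥) :
    Monotone fun j => Module.finrank k (𝒜 j) := by
  obtain ⟨x, hx, hx0⟩ := Submodule.exists_mem_ne_zero_of_ne_bot h1
  refine monotone_nat_of_le_succ fun j => ?_
  have := grade_finite hSG (j + 1)
  refine finrank_le_of_mul_mem hx0 fun a ha => ?_
  rw [hSG.2.1]
  exact Submodule.mul_mem_mul hx ha

variable [GradedAlgebra 𝒜]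

/-- Above the generating degrees, the homogeneous components of a product of ideals are products of
homogeneous components. -/
theorem le_idealComp_mul (hSG : IsStandardGraded k 𝒜) {M N : Ideal R} {a b a' b' : ℕ}
    (hM : GeneratedInDegLE k 𝒜 M a) (hN : GeneratedInDegLE k 𝒜 N b) (ha : a ≤ a') (hb : b ≤ b') :
    idealComp k 𝒜 (M * N) (a' + b') ≤ idealComp k 𝒜 M a' * idealComp k 𝒜 N b' := by
  obtain ⟨s, rfl, hs⟩ := hM
  obtain ⟨t, rfl, ht⟩ := hN
  rintro r ⟨hr0, hr'⟩
  have hr : r ∈ Ideal.span s * Ideal.span t := hr0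
  clear hr0
  rw [Ideal.span_mul_span'] at hr
  -- the multiplier `q` makes the claim stable under multiplication by ring elements
  have key : ∀ q : R, GradedAlgebra.proj 𝒜 (a' + b') (q * r) ∈
      idealComp k 𝒜 (Ideal.span s) a' * idealComp k 𝒜 (Ideal.span t) b' := by
    clear hr'
    induction hr using Submodule.span_induction with
    | mem z hz =>
      obtain ⟨x, hx, y, hy, rfl⟩ := hz
      intro q
      obtain ⟨i, hi, hxi⟩ := hs x hx
      obtain ⟨j, hj, hyj⟩ := ht y hy
      have hxy : x * y ∈ 𝒜 (i + j) := SetLike.mul_mem_graded hxi hyj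
      have hle : i + j ≤ a' + b' := by omega
      simp only [GradedAlgebra.proj_apply]
      rw [mul_comm q, DirectSum.coe_decompose_mul_of_left_mem_of_le 𝒜 hxy hle]
      have hq := (DirectSum.decompose 𝒜 q (a' + b' - (i + j))).2
      generalize (DirectSum.decompose 𝒜 q (a' + b' - (i + j)) : R) = w at hq ⊢
      rw [show a' + b' - (i + j) = (a' - i) + (b' - j) by omega, grade_add hSG] at hq
      induction hq using Submodule.mul_induction_on' with
      | mem_mul_mem u hu v hv =>
        rw [mul_mul_mul_comm]
        refine Submodule.mul_mem_mul ⟨?_, ?_⟩ ⟨?_, ?_⟩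
        · exact Ideal.mul_mem_right _ _ (Ideal.subset_span hx)
        · have := SetLike.mul_mem_graded hxi hu
          rwa [show i + (a' - i) = a' by omega] at this
        · exact Ideal.mul_mem_right _ _ (Ideal.subset_span hy)
        · have := SetLike.mul_mem_graded hyj hv
          rwa [show j + (b' - j) = b' by omega] at this
      | add u _ v _ hu hv => rw [mul_add]; exact Submodule.add_mem _ hu hv
    | zero => intro q; simp
    | add x y _ _ hx hy =>
      intro q; rw [mul_add, map_add]; exact Submodule.add_mem _ (hx q) (hy q)
    | smul p x _ hx => intro q; rw [smul_eq_mul, ← mul_assoc]; exact hx _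
  have h1 := key 1
  rw [one_mul, GradedAlgebra.proj_apply, DirectSum.decompose_of_mem_same 𝒜 hr'] at h1
  exact h1

/-- In degrees at least the generating degree, the diagonal pieces `(Iⁿ)_{cn}` are the powers of
the single space `I_c`. -/
theorem idealComp_pow (hSG : IsStandardGraded k 𝒜) {M : Ideal R} {a c : ℕ}
    (hM : GeneratedInDegLE k 𝒜 M a) (hac : a ≤ c) (n : ℕ) :
    idealComp k 𝒜 (M ^ n) (c * n) = idealComp k 𝒜 M c ^ n := by
  induction n with
  | zero =>
    rw [pow_zero, pow_zero, Nat.mul_zero, idealComp, hSG.1, ← Submodule.one_eq_span]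
    exact inf_eq_right.2 fun x _ => by simp
  | succ n ih =>
    rw [pow_succ, pow_succ, Nat.mul_succ, ← ih]
    exact le_antisymm (le_idealComp_mul hSG (hM.pow n) hM (Nat.mul_le_mul_right n hac) hac)
      (idealComp_mul_le _ _ _ _)

theorem exists_mem_one_sup_pow (hSG : IsStandardGraded k 𝒜) (b : R) : ∃ n, b ∈ (1 ⊔ 𝒜 1) ^ n := by
  classical
  refine ⟨(DirectSum.decompose 𝒜 b).support.sup id, ?_⟩
  rw [← DirectSum.sum_support_decompose 𝒜 b]
  refine Submodule.sum_mem _ fun i hi => ?_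
  have h1 : 𝒜 i ≤ (1 ⊔ 𝒜 1) ^ i := by
    rw [grade_eq_pow hSG i]; exact pow_le_pow_left' le_sup_right i
  rw [DirectSum.sum_support_decompose 𝒜 b]
  exact pow_le_pow_right' (le_sup_left : 1 ≤ 1 ⊔ 𝒜 1) (Finset.le_sup (f := id) hi)
    (h1 (DirectSum.decompose 𝒜 b i).2)

theorem decompose_one_sup_pow (hSG : IsStandardGraded k 𝒜) {V : Submodule k R} {c : ℕ}
    (hV : V ≤ 𝒜 c) (n : ℕ) : ∀ x ∈ (1 ⊔ V) ^ n, ∀ m, c * n < m →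
      (DirectSum.decompose 𝒜 x m : R) = 0 := by
  induction n with
  | zero =>
    intro x hx m hm
    rw [pow_zero, Submodule.one_eq_span, ← hSG.1] at hx
    exact DirectSum.decompose_of_mem_ne 𝒜 hx (by omega)
  | succ n ih =>
    intro x hx m hm
    rw [one_sup_pow_succ] at hx
    obtain ⟨y, hy, z, hz, rfl⟩ := Submodule.mem_sup.1 hx
    rw [DirectSum.decompose_add, DirectSum.add_apply, Submodule.coe_add, ih y hy m
      (lt_of_le_of_lt (Nat.mul_le_mul_left c n.le_succ) hm), zero_add]
    have hz' : z ∈ 𝒜 (c * (n + 1)) := by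
      rw [grade_mul_eq_pow hSG]; exact pow_le_pow_left' hV _ hz
    exact DirectSum.decompose_of_mem_ne 𝒜 hz' (by omega)

/-- If `V` is homogeneous of positive degree, the powers of `V` are independent. -/
theorem finrank_one_sup_pow (hSG : IsStandardGraded k 𝒜) {V : Submodule k R} {c : ℕ}
    (hV : V ≤ 𝒜 c) (hc : 0 < c) (n : ℕ) :
    Module.finrank k ↥((1 ⊔ V) ^ n) = ∑ j ∈ Finset.range (n + 1), Module.finrank k ↥(V ^ j) := by
  have := grade_finite hSG c
  have : Module.Finite k V := Submodule.finiteDimensional_of_le hV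
  have := finite_one_sup V
  induction n with
  | zero => rw [zero_add, Finset.sum_range_one, pow_zero, pow_zero]
  | succ n ih =>
    have := finite_pow (1 ⊔ V) n
    have := finite_pow V (n + 1)
    rw [Finset.sum_range_succ, one_sup_pow_succ, ← ih]
    have h := Submodule.finrank_sup_add_finrank_inf_eq ((1 ⊔ V) ^ n) (V ^ (n + 1))
    have h0 : (1 ⊔ V) ^ n ⊓ V ^ (n + 1) = ⊥ := by
      rw [eq_bot_iff]
      rintro x ⟨hx, hx'⟩
      have hz' : x ∈ 𝒜 (c * (n + 1)) := by
        rw [grade_mul_eq_pow hSG]; exact pow_le_pow_left' hV _ hx'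
      have h2 := decompose_one_sup_pow hSG hV n x hx (c * (n + 1)) (by rw [Nat.mul_succ]; omega)
      rw [DirectSum.decompose_of_mem_same 𝒜 hz'] at h2
      simpa using h2
    rw [h0, finrank_bot, add_zero] at h
    exact h

variable [IsDomain R]

/-- A standard graded domain of dimension `d` is finite over a polynomial ring in `d` variables. -/
theorem exists_noether (hSG : IsStandardGraded k 𝒜) {d : ℕ}
    (hdim : ringKrullDim R = (d : WithBot ℕ∞)) :
    ∃ g : MvPolynomial (Fin d) k →ₐ[k] R, Function.Injective g ∧ g.Finite := by
  have := grade_finite hSG 1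
  have := finite_one_sup (𝒜 1)
  have := finiteType_of_pow (1 ⊔ 𝒜 1) (exists_mem_one_sup_pow hSG)
  obtain ⟨e, g, hginj, hgfin⟩ := exists_finite_inj_algHom_of_fg k R
  have hed : e = d := by
    have hg' : g.toRingHom.Finite := hgfin
    algebraize [g.toRingHom]
    have h1 := ringKrullDim_eq_of_integral_injective (A := MvPolynomial (Fin e) k) (B := R) hginj
    rw [hdim, MvPolynomial.ringKrullDim_of_isNoetherianRing, ringKrullDim_eq_zero_of_field] at h1
    simp only [zero_add, Nat.card_eq_fintype_card, Fintype.card_fin] at h1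
    exact_mod_cast h1
  subst hed
  exact ⟨g, hginj, hgfin⟩

theorem exists_lower_growth (hSG : IsStandardGraded k 𝒜) {d : ℕ}
    (hdim : ringKrullDim R = (d : WithBot ℕ∞)) :
    ∃ s : ℕ, ∀ n : ℕ, (n + 1) ^ d ≤ Module.finrank k ↥((1 ⊔ 𝒜 1) ^ (s * n)) := by
  obtain ⟨g, hginj, -⟩ := exists_noether hSG hdim
  have := grade_finite hSG 1
  have := finite_one_sup (𝒜 1)
  obtain ⟨s, hs⟩ := box_le_pow g (1 ⊔ 𝒜 1) le_sup_left (exists_mem_one_sup_pow hSG)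
  refine ⟨s, fun n => ?_⟩
  have := finite_pow (1 ⊔ 𝒜 1) (s * n)
  have h := Submodule.finrank_mono (hs n)
  rwa [← (Submodule.equivMapOfInjective g.toLinearMap hginj _).finrank_eq,
    finrank_restrictDegree, Fintype.card_fin] at h

/-- Otherwise `R = k`, which has no growth. -/
theorem grade_one_ne_bot (hSG : IsStandardGraded k 𝒜) {d : ℕ} (hd : 0 < d)
    (hdim : ringKrullDim R = (d : WithBot ℕ∞)) : 𝒜 1 ≠ ⊥ := by
  intro h
  obtain ⟨s, hs⟩ := exists_lower_growth hSG hdim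
  have h1 := hs 1
  rw [h, sup_bot_eq, one_pow, Submodule.one_eq_span] at h1
  have h2 := (finrank_span_le_card (R := k) ({(1 : R)} : Set R))
  simp only [Set.toFinset_singleton, Finset.card_singleton] at h2
  have h3 : 1 < (1 + 1) ^ d := Nat.one_lt_pow hd.ne' (by norm_num)
  omega

/-- The dimensions of the graded pieces are nondecreasing, so `(m + 1) * dim R_m` is at most the sum
of `dim R_j` for `m ≤ j ≤ 2 * m`, and the growth of the whole algebra bounds that sum. -/
theorem exists_grade_upper (hSG : IsStandardGraded k 𝒜) {d : ℕ} (hd : 0 < d)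
    (hdim : ringKrullDim R = (d : WithBot ℕ∞)) :
    ∃ C : ℕ, ∀ m : ℕ, Module.finrank k (𝒜 m) ≤ C * (m + 1) ^ (d - 1) := by
  obtain ⟨g, -, hg⟩ := exists_noether hSG hdim
  have := grade_finite hSG 1
  have := finite_one_sup (𝒜 1)
  obtain ⟨C, hC⟩ := growth_upper g hg (1 ⊔ 𝒜 1)
  refine ⟨C * 2 ^ d, fun m => ?_⟩
  have h1 := hC (2 * m)
  rw [finrank_one_sup_pow hSG le_rfl one_pos] at h1
  have h2 : (m + 1) * Module.finrank k (𝒜 m) ≤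
      ∑ j ∈ Finset.range (2 * m + 1), Module.finrank k ↥(𝒜 1 ^ j) := by
    have h3 : ∑ j ∈ Finset.Ico m (2 * m + 1), Module.finrank k (𝒜 m) ≤
        ∑ j ∈ Finset.Ico m (2 * m + 1), Module.finrank k ↥(𝒜 1 ^ j) := by
      refine Finset.sum_le_sum fun j hj => ?_
      rw [← grade_eq_pow hSG]
      exact finrank_grade_mono hSG (grade_one_ne_bot hSG hd hdim) (Finset.mem_Ico.1 hj).1
    rw [Finset.sum_const, Nat.card_Ico, smul_eq_mul, show 2 * m + 1 - m = m + 1 by omega] at h3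
    refine h3.trans (Finset.sum_le_sum_of_subset ?_)
    intro j hj
    exact Finset.mem_range.2 (Finset.mem_Ico.1 hj).2
  have h4 : (2 * m + 1) ^ d ≤ 2 ^ d * ((m + 1) ^ (d - 1) * (m + 1)) := by
    rw [← pow_succ, show d - 1 + 1 = d by omega, ← mul_pow]
    exact Nat.pow_le_pow_left (by omega) _
  have h5 : (m + 1) * Module.finrank k (𝒜 m) ≤ (m + 1) * (C * 2 ^ d * (m + 1) ^ (d - 1)) :=
    calc _ ≤ C * (2 * m + 1) ^ d := h2.trans h1
      _ ≤ C * (2 ^ d * ((m + 1) ^ (d - 1) * (m + 1))) := Nat.mul_le_mul_left _ h4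
      _ = _ := by ring
  exact Nat.le_of_mul_le_mul_left h5 (Nat.succ_pos m)

/-- The algebra generated by `I_c` has the same order of growth as `R`: multiplication by powers
of a nonzero form `f ∈ I` of degree less than `c` embeds a copy of `R_j` into `(I_c)^j`. -/
theorem exists_lower_growth_idealComp (hSG : IsStandardGraded k 𝒜) {d : ℕ} (hd : 0 < d)
    (hdim : ringKrullDim R = (d : WithBot ℕ∞)) {I : Ideal R} (hI : I ≠ ⊥) {D c : ℕ}
    (hDI : GeneratedInDegLE k 𝒜 I D) (hc : D < c) :
    ∃ s : ℕ, ∀ n : ℕ, (n + 1) ^ d ≤ Module.finrank k ↥((1 ⊔ idealComp k 𝒜 I c) ^ (s * n)) := by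
  obtain ⟨s, hs⟩ := exists_lower_growth hSG hdim
  refine ⟨s, fun n => (hs n).trans ?_⟩
  rw [finrank_one_sup_pow hSG le_rfl one_pos,
    finrank_one_sup_pow hSG (V := idealComp k 𝒜 I c) inf_le_right (by omega)]
  refine Finset.sum_le_sum fun j _ => ?_
  obtain ⟨S, rfl, hS⟩ := hDI
  obtain ⟨f, hfS, hf0⟩ : ∃ f ∈ S, f ≠ 0 := by
    by_contra! h
    exact hI (Ideal.span_eq_bot.2 h)
  obtain ⟨i, hi, hfi⟩ := hS f hfS
  set V := idealComp k 𝒜 (Ideal.span S) c with hV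
  have hfV : Submodule.span k {f} * 𝒜 (c - i) ≤ V := by
    rw [Submodule.mul_le]
    intro x hx y hy
    obtain ⟨a, rfl⟩ := Submodule.mem_span_singleton.1 hx
    rw [smul_mul_assoc]
    refine Submodule.smul_mem _ _ ⟨Ideal.mul_mem_right _ _ (Ideal.subset_span hfS), ?_⟩
    have := SetLike.mul_mem_graded hfi hy
    rwa [show i + (c - i) = c by omega] at this
  have := idealComp_finite hSG (Ideal.span S) c
  have : Module.Finite k V := this
  have := finite_pow V j
  calc Module.finrank k ↥(𝒜 1 ^ j) = Module.finrank k (𝒜 j) := by rw [← grade_eq_pow hSG]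
    _ ≤ Module.finrank k (𝒜 ((c - i) * j)) :=
        finrank_grade_mono hSG (grade_one_ne_bot hSG hd hdim)
          (Nat.le_mul_of_pos_left _ (by omega))
    _ ≤ Module.finrank k ↥(V ^ j) := by
        refine finrank_le_of_mul_mem (pow_ne_zero j hf0) fun a ha => ?_
        rw [grade_mul_eq_pow hSG] at ha
        refine pow_le_pow_left' hfV j ?_
        rw [mul_pow]
        exact Submodule.mul_mem_mul
          (Submodule.pow_mem_pow _ (Submodule.mem_span_singleton_self f) j) ha

end Graded

/-! ### Adjoining a non-integral element -/

section Blowup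

variable {k : Type*} [Field k]

theorem isIntegral_of_mem_adjoin_inv {K : Type*} [Field K] [Algebra k K] (S : Set K) {w : K}
    (hw0 : w ≠ 0) (hw : w ∈ Algebra.adjoin k (S ∪ {w⁻¹})) :
    IsIntegral (Algebra.adjoin k S) w := by
  rw [Algebra.adjoin_union_eq_adjoin_adjoin, Subalgebra.mem_restrictScalars,
    Algebra.adjoin_singleton_eq_range_aeval] at hw
  obtain ⟨p, hp⟩ := hw
  have hp : aeval w⁻¹ p = w := hp
  -- the reverse of `1 - X * p` is a monic polynomial that vanishes at `w`
  have hinv : Invertible w⁻¹ := invertibleOfNonzero (inv_ne_zero hw0)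
  have hc : (1 - X * p).coeff 0 = 1 := by simp
  refine ⟨(1 - X * p).reverse, ?_, ?_⟩
  · have h0 : (1 - X * p).natTrailingDegree = 0 :=
      Polynomial.natTrailingDegree_eq_zero.2 (Or.inr (by rw [hc]; exact one_ne_zero))
    rw [Monic, Polynomial.reverse_leadingCoeff, Polynomial.trailingCoeff, h0, hc]
  · have h1 := (Polynomial.eval₂_reverse_eq_zero_iff (algebraMap (Algebra.adjoin k S) K) w⁻¹
      (1 - X * p)).2 (by
        rw [← aeval_def, map_sub, map_mul, map_one, aeval_X, hp, inv_mul_cancel₀ hw0, sub_self])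
    rwa [invOf_eq_inv, inv_inv] at h1

theorem exists_mem_pow_of_mem_adjoin {B : Type*} [CommRing B] [Algebra k B] {S : Set B}
    {Y : Submodule k B} (h1 : 1 ≤ Y) (hS : S ⊆ Y) {b : B} (hb : b ∈ Algebra.adjoin k S) :
    ∃ n, b ∈ Y ^ n := by
  induction hb using Algebra.adjoin_induction with
  | mem x hx => exact ⟨1, by rw [pow_one]; exact hS hx⟩
  | algebraMap r => exact ⟨0, by rw [pow_zero]; exact Submodule.algebraMap_mem r⟩
  | add x y _ _ hx hy =>
    obtain ⟨m, hm⟩ := hx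
    obtain ⟨n, hn⟩ := hy
    exact ⟨max m n, Submodule.add_mem _ (pow_le_pow_right' h1 (le_max_left m n) hm)
      (pow_le_pow_right' h1 (le_max_right m n) hn)⟩
  | mul x y _ _ hx hy =>
    obtain ⟨m, hm⟩ := hx
    obtain ⟨n, hn⟩ := hy
    exact ⟨m + n, by rw [pow_add]; exact Submodule.mul_mem_mul hm hn⟩

/-- If `h` embeds `P` in `H`, and only elements killed by `q` land in `G`, then `H` is larger than
`G` by at least the dimension of the image of `P` under `q`. -/
theorem finrank_add_finrank_map_le {E F K : Type*} [AddCommGroup E] [Module k E] [AddCommGroup F]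
    [Module k F] [AddCommGroup K] [Module k K] (h : E →ₗ[k] K) (hinj : Function.Injective h)
    (q : E →ₗ[k] F) (P : Submodule k E) (G H : Submodule k K) [Module.Finite k P]
    [Module.Finite k H] (hG : G ≤ H) (hP : P.map h ≤ H) (hq : ∀ a ∈ P, h a ∈ G → q a = 0) :
    Module.finrank k G + Module.finrank k (P.map q) ≤ Module.finrank k H := by
  have : Module.Finite k G := Submodule.finiteDimensional_of_le hG
  have e1 := Submodule.finrank_sup_add_finrank_inf_eq G (P.map h)
  have e2 : Module.finrank k (G ⊔ P.map h : Submodule k K) ≤ Module.finrank k H :=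
    Submodule.finrank_mono (sup_le hG hP)
  have e3 := (Submodule.equivMapOfInjective h hinj P).finrank_eq
  have e4 := (q.domRestrict P).finrank_range_add_finrank_ker
  have e5 : LinearMap.range (q.domRestrict P) = P.map q := by
    rw [LinearMap.domRestrict, LinearMap.range_comp, Submodule.range_subtype]
  have e6 : Module.finrank k (LinearMap.ker (q.domRestrict P)) =
      Module.finrank k ((LinearMap.ker (q.domRestrict P)).map P.subtype) :=
    (Submodule.equivMapOfInjective P.subtype P.subtype_injective _).finrank_eq
  have e7 := (Submodule.equivMapOfInjective h hinj
    ((LinearMap.ker (q.domRestrict P)).map P.subtype)).finrank_eq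
  have e8 : G ⊓ P.map h ≤ ((LinearMap.ker (q.domRestrict P)).map P.subtype).map h := by
    rintro _ ⟨hx, a, ha, rfl⟩
    exact ⟨a, ⟨⟨a, ha⟩, hq a ha hx, rfl⟩, rfl⟩
  have e9 := Submodule.finrank_mono e8
  rw [e5] at e4
  omega

theorem toSubmodule_pow_le {B : Type*} [CommRing B] [Algebra k B] (E : Subalgebra k B) (n : ℕ) :
    Subalgebra.toSubmodule E ^ n ≤ Subalgebra.toSubmodule E := by
  induction n with
  | zero => rw [pow_zero, Submodule.one_le]; exact E.one_mem
  | succ n ih =>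
    rw [pow_succ]
    exact (mul_le_mul' ih le_rfl).trans (Subalgebra.mul_toSubmodule_le E E |>.trans (by simp))

/-- Adjoining to `V` an element `w` of the ambient field that is not integral over `k[V]` enlarges
`dim V ^ N` by a positive multiple of `N ^ (d - 1)`, where `d` is the order of growth of `k[V]`.
The element `f = w⁻¹` is a nonunit of `E = k[V, w⁻¹]`, so the image of `k[V]` in `E / f` still has
order of growth `d - 1`.  In the chain of spaces `U ^ i * V ^ (N - i)`, with `U = V + k w`, the
step `i + 1` gains at least the dimension of the image of `V ^ (N - i - 1)` in `E / f`. -/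
theorem growth_gap {K : Type*} [Field K] [Algebra k K] (d : ℕ) (V : Submodule k K)
    [Module.Finite k V] (w : K) (hw : ¬ IsIntegral (Algebra.adjoin k (V : Set K)) w)
    (hd : ∃ s : ℕ, ∀ n : ℕ, (n + 1) ^ d ≤ Module.finrank k ↥((1 ⊔ V) ^ (s * n))) :
    ∃ s : ℕ, 0 < s ∧ ∀ N : ℕ, 0 < N → N ^ (d - 1) + s ^ (d - 1) * Module.finrank k ↥(V ^ N) ≤
      s ^ (d - 1) * Module.finrank k ↥((V ⊔ Submodule.span k {w}) ^ N) := by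
  have hw0 : w ≠ 0 := by rintro rfl; exact hw isIntegral_zero
  set S : Set K := (V : Set K) ∪ {w⁻¹} with hS
  set E := Algebra.adjoin k S with hE
  have hwE : w⁻¹ ∈ E := Algebra.subset_adjoin (Or.inr rfl)
  have hVE : V ≤ Subalgebra.toSubmodule E := fun v hv => Algebra.subset_adjoin (Or.inl hv)
  set f : E := ⟨w⁻¹, hwE⟩ with hf
  have hf0 : f ≠ 0 := fun h => inv_ne_zero hw0 (congrArg Subtype.val h)
  -- the inverse of `f` is `w`, which cannot lie in `E`
  have hfu : ¬ IsUnit f := by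
    intro h
    obtain ⟨g, hg⟩ := h.exists_right_inv
    have hg' : w⁻¹ * (g : K) = 1 := congrArg Subtype.val hg
    have : (g : K) = w := by
      rw [← mul_one w, ← hg', mul_inv_cancel_left₀ hw0]
    have hwE' : w ∈ E := by rw [← this]; exact g.2
    exact hw (isIntegral_of_mem_adjoin_inv _ hw0 hwE')
  have hval : Function.Injective E.val.toLinearMap := Subtype.val_injective
  set VE : Submodule k E := V.comap E.val.toLinearMap with hVEdef
  have hVEmap : VE.map E.val.toLinearMap = V := by
    refine Submodule.map_comap_eq_of_le ?_
    intro v hv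
    exact ⟨⟨v, hVE hv⟩, rfl⟩
  have : Module.Finite k VE :=
    Module.Finite.of_injective (E.val.toLinearMap.restrict (p := VE) (q := V) fun x hx => hx)
      (fun a b hab => Subtype.ext (hval (by simpa using congrArg Subtype.val hab)))
  set X : Submodule k E := 1 ⊔ Submodule.span k {f} ⊔ VE with hX
  set Y : Submodule k K := 1 ⊔ Submodule.span k {w⁻¹} ⊔ V with hY
  have hXmap : X.map E.val.toLinearMap = Y := by
    rw [hX, Submodule.map_sup, Submodule.map_sup, hVEmap, Submodule.map_span, Set.image_singleton,
      Submodule.map_one]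
    rfl
  have hXpow (n : ℕ) : (X ^ n).map E.val.toLinearMap = Y ^ n := by
    rw [Submodule.map_pow, hXmap]
  have h1X : 1 ≤ X := le_sup_left.trans le_sup_left
  have h1Y : 1 ≤ Y := le_sup_left.trans le_sup_left
  have : Module.Finite k ↥(1 ⊔ Submodule.span k {f}) := finite_one_sup _
  have : Module.Finite k ↥(1 ⊔ Submodule.span k {w⁻¹}) := finite_one_sup _
  have : Module.Finite k Y := by rw [hY]; infer_instance
  have hXall (b : E) : ∃ n, b ∈ X ^ n := by
    obtain ⟨n, hn⟩ := exists_mem_pow_of_mem_adjoin (S := S) h1Y (by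
      rintro x (hx | rfl)
      · exact (le_sup_right : V ≤ Y) hx
      · exact (le_sup_left.trans' le_sup_right : Submodule.span k {w⁻¹} ≤ Y)
          (Submodule.mem_span_singleton_self _)) b.2
    refine ⟨n, ?_⟩
    rw [← hXpow] at hn
    obtain ⟨x, hx, hxb⟩ := hn
    rwa [← hval hxb]
  have hdX : ∃ s : ℕ, ∀ n : ℕ, (n + 1) ^ d ≤ Module.finrank k ↥(X ^ (s * n)) := by
    obtain ⟨s, hs⟩ := hd
    refine ⟨s, fun n => (hs n).trans ?_⟩
    rw [(Submodule.equivMapOfInjective _ hval (X ^ (s * n))).finrank_eq, hXpow]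
    have := finite_pow Y (s * n)
    exact Submodule.finrank_mono (pow_le_pow_left' (sup_le h1Y le_sup_right) _)
  obtain ⟨s, hs⟩ := growth_quotient d f hf0 hfu X h1X hXall hdX
  set q := (Ideal.Quotient.mkₐ k (Ideal.span {f})) with hq
  have hXq : X.map q.toLinearMap = 1 ⊔ VE.map q.toLinearMap := by
    have hqf : q f = 0 := Ideal.Quotient.eq_zero_iff_mem.2 (Ideal.mem_span_singleton_self f)
    have hb : Submodule.span k {q.toLinearMap f} = ⊥ := by
      rw [Submodule.span_singleton_eq_bot]; exact hqf
    rw [hX, Submodule.map_sup, Submodule.map_sup, Submodule.map_one, Submodule.map_span,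
      Set.image_singleton, hb, sup_bot_eq]
  set U := V ⊔ Submodule.span k {w} with hU
  have hUw : U ≤ Submodule.span k {w} * Subalgebra.toSubmodule E := by
    refine sup_le ?_ ?_
    · intro v hv
      have : v = w * (w⁻¹ * v) := (mul_inv_cancel_left₀ hw0 v).symm
      rw [this]
      exact Submodule.mul_mem_mul (Submodule.mem_span_singleton_self w)
        (E.mul_mem hwE (hVE hv))
    · rw [Submodule.span_singleton_le_iff_mem]
      have h1 : (1 : K) ∈ Subalgebra.toSubmodule E := E.one_mem
      simpa only [mul_one] using
        Submodule.mul_mem_mul (Submodule.mem_span_singleton_self (R := k) w) h1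
  have chain (N : ℕ) : ∀ i ≤ N, Module.finrank k ↥(V ^ N) +
      ∑ l ∈ Finset.range i, Module.finrank k ↥((VE.map q.toLinearMap) ^ (N - 1 - l)) ≤
        Module.finrank k ↥(U ^ i * V ^ (N - i)) := by
    intro i
    induction i with
    | zero =>
      intro _
      rw [Finset.sum_range_zero, add_zero, pow_zero, one_mul, Nat.sub_zero]
    | succ i ih =>
      intro hi
      rw [Finset.sum_range_succ, ← add_assoc, show N - 1 - i = N - (i + 1) by omega]
      refine (Nat.add_le_add_right (ih (by omega)) _).trans ?_
      rw [← Submodule.map_pow]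
      have := finite_pow VE (N - (i + 1))
      have := finite_pow V (N - (i + 1))
      have := finite_pow U (i + 1)
      have := finite_mul (U ^ (i + 1)) (V ^ (N - (i + 1)))
      refine finrank_add_finrank_map_le
        ((LinearMap.mulLeft k (w ^ (i + 1))).comp E.val.toLinearMap) ?_ q.toLinearMap
        (VE ^ (N - (i + 1))) _ _ ?_ ?_ ?_
      · exact (mul_right_injective₀ (pow_ne_zero _ hw0)).comp hval
      · rw [show N - i = N - (i + 1) + 1 by omega, pow_succ', ← mul_assoc, pow_succ]
        exact mul_le_mul' (mul_le_mul' le_rfl le_sup_left) le_rfl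
      · rw [Submodule.map_comp, Submodule.map_pow, hVEmap]
        rintro _ ⟨v, hv, rfl⟩
        refine Submodule.mul_mem_mul (Submodule.pow_mem_pow _ ?_ _) hv
        exact (le_sup_right : _ ≤ U) (Submodule.mem_span_singleton_self w)
      · intro a _ ha
        have ha : w ^ (i + 1) * (a : K) ∈ U ^ i * V ^ (N - i) := ha
        -- an element of `U ^ i * V ^ (N - i)` is divisible by `w ^ i` in `E`
        have h2 : U ^ i * V ^ (N - i) ≤
            Submodule.span k {w ^ i} * Subalgebra.toSubmodule E := by
          refine (mul_le_mul' (pow_le_pow_left' hUw i) (pow_le_pow_left' hVE (N - i))).trans ?_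
          rw [mul_pow, mul_assoc, Submodule.span_pow, Set.singleton_pow, ← pow_add]
          exact mul_le_mul' le_rfl (toSubmodule_pow_le _ _)
        obtain ⟨e, he, hea⟩ := Submodule.mem_span_singleton_mul.1 (h2 ha)
        have h3 : (a : K) = w⁻¹ * e := by
          rw [pow_succ, mul_assoc] at hea
          rw [mul_left_cancel₀ (pow_ne_zero i hw0) hea, inv_mul_cancel_left₀ hw0]
        refine Ideal.Quotient.eq_zero_iff_mem.2 (Ideal.mem_span_singleton.2 ⟨⟨e, he⟩, ?_⟩)
        exact Subtype.ext h3
  -- `s` may vanish, so `s + 1` serves as the positive constant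
  refine ⟨s + 1, s.succ_pos, fun N hN => ?_⟩
  have h1 := chain N N le_rfl
  rw [Nat.sub_self, pow_zero, mul_one] at h1
  have : Module.Finite k ↥(VE.map q.toLinearMap) := inferInstance
  have h2 := finrank_one_sup_pow_le (VE.map q.toLinearMap) (N - 1)
  rw [show N - 1 + 1 = N by omega, ← Finset.sum_range_reflect] at h2
  have h3 := hs ((N - 1) / (s + 1))
  have h4 : s * ((N - 1) / (s + 1)) ≤ N - 1 :=
    (Nat.mul_le_mul_right _ s.le_succ).trans (Nat.mul_div_le _ _)
  have h5 : N ≤ (s + 1) * ((N - 1) / (s + 1) + 1) := by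
    have := Nat.lt_mul_div_succ (N - 1) (s.succ_pos)
    rw [Nat.succ_eq_add_one] at this
    omega
  rw [Submodule.map_pow, hXq] at h3
  have := finite_one_sup (VE.map q.toLinearMap)
  have := finite_pow (1 ⊔ VE.map q.toLinearMap) (N - 1)
  have h6 := h3.trans (Submodule.finrank_mono (pow_le_pow_right' le_sup_left h4))
  calc N ^ (d - 1) + (s + 1) ^ (d - 1) * Module.finrank k ↥(V ^ N)
      ≤ (s + 1) ^ (d - 1) * ((N - 1) / (s + 1) + 1) ^ (d - 1) +
        (s + 1) ^ (d - 1) * Module.finrank k ↥(V ^ N) := by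
        rw [← mul_pow]; exact Nat.add_le_add_right (Nat.pow_le_pow_left h5 _) _
    _ ≤ (s + 1) ^ (d - 1) * Module.finrank k ↥(U ^ N) := by
        rw [← mul_add]
        exact Nat.mul_le_mul_left _ (by omega)

end Blowup

/-! ### Integral dependence over ideals -/

section Integrality

theorem exists_equation_of_isIntegral {A B : Type*} [CommRing A] [CommRing B] [Nontrivial B]
    [Algebra A B] {x : B} (hx : IsIntegral A x) :
    ∃ n : ℕ, 0 < n ∧ ∃ b : ℕ → A,
      x ^ n + ∑ i ∈ Finset.Icc 1 n, algebraMap A B (b i) * x ^ (n - i) = 0 := by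
  obtain ⟨p, hp, hpx⟩ := hx
  have hpx : aeval x p = 0 := hpx
  refine ⟨p.natDegree, ?_, fun i => p.coeff (p.natDegree - i), ?_⟩
  · refine Nat.pos_of_ne_zero fun h => ?_
    rw [hp.natDegree_eq_zero.1 h, map_one] at hpx
    exact one_ne_zero hpx
  · rw [aeval_eq_sum_range, Finset.sum_range_succ, hp.coeff_natDegree, one_smul] at hpx
    rw [← hpx, add_comm]
    congr 1
    refine Finset.sum_nbij' (fun i => p.natDegree - i) (fun i => p.natDegree - i) ?_ ?_ ?_ ?_ ?_
    · intro i hi; simp only [Finset.mem_Icc, Finset.mem_range] at *; omega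
    · intro i hi; simp only [Finset.mem_Icc, Finset.mem_range] at *; omega
    · intro i hi; simp only [Finset.mem_Icc] at *; omega
    · intro i hi; simp only [Finset.mem_range] at *; omega
    · intro i _; rw [Algebra.smul_def]

theorem isIntegral_of_equation {A B : Type*} [CommRing A] [CommRing B]
    [Algebra A B] {x : B} {n : ℕ} (b : ℕ → A)
    (h : x ^ n + ∑ i ∈ Finset.Icc 1 n, algebraMap A B (b i) * x ^ (n - i) = 0) :
    IsIntegral A x := by
  refine ⟨X ^ n + ∑ i ∈ Finset.Icc 1 n, C (b i) * X ^ (n - i), ?_, ?_⟩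
  · rcases subsingleton_or_nontrivial A with hA | hA
    · exact Subsingleton.elim _ _
    · refine (monic_X_pow n).add_of_left ?_
      rw [degree_X_pow, ← mem_degreeLT]
      refine Submodule.sum_mem _ fun i hi => mem_degreeLT.2 ?_
      refine (degree_C_mul_X_pow_le _ _).trans_lt (Nat.cast_lt.2 ?_)
      rw [Finset.mem_Icc] at hi
      omega
  · simp only [eval₂_add, eval₂_pow, eval₂_X, eval₂_finsetSum, eval₂_mul, eval₂_C]
    exact h

variable {R : Type*} [CommRing R]

theorem IsIntOverIdeal.mono {I J : Ideal R} (h : I ≤ J) {r : R} (hr : IsIntOverIdeal I r) :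
    IsIntOverIdeal J r := by
  obtain ⟨n, hn, a, ha, he⟩ := hr
  exact ⟨n, hn, a, fun i h1 h2 => Ideal.pow_right_mono h i (ha i h1 h2), he⟩

/-- Integrality of `r` over `I` is integrality of `r t` over the Rees algebra `R[It]`. -/
theorem isIntOverIdeal_iff [Nontrivial R] {I : Ideal R} {r : R} :
    IsIntOverIdeal I r ↔ IsIntegral (reesAlgebra I) (monomial 1 r) := by
  constructor
  · rintro ⟨n, hn, a, ha, he⟩
    have ha' (i : ℕ) : monomial i (if i ∈ Finset.Icc 1 n then a i else 0) ∈ reesAlgebra I := by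
      rw [reesAlgebra.monomial_mem]
      split_ifs with h
      · rw [Finset.mem_Icc] at h; exact ha i h.1 h.2
      · exact Ideal.zero_mem _
    refine isIntegral_of_equation (n := n) (fun i => ⟨_, ha' i⟩) ?_
    have h2 : ∀ i ∈ Finset.Icc 1 n, algebraMap (reesAlgebra I) R[X] ⟨_, ha' i⟩ *
        (monomial 1 r) ^ (n - i) = monomial n (a i * r ^ (n - i)) := by
      intro i hi
      change monomial i _ * _ = _
      rw [if_pos hi, monomial_pow, monomial_mul_monomial, one_mul,
        Nat.add_sub_cancel' (Finset.mem_Icc.1 hi).2]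
    rw [Finset.sum_congr rfl h2, monomial_pow, one_mul, ← map_sum, ← map_add, he, map_zero]
  · intro h
    obtain ⟨n, hn, b, hb⟩ := exists_equation_of_isIntegral h
    refine ⟨n, hn, fun i => (b i : R[X]).coeff i, fun i _ _ => (mem_reesAlgebra_iff I _).1 (b i).2 i,
      ?_⟩
    have h1 := congrArg (fun p => Polynomial.coeff p n) hb
    simp only [coeff_add, finsetSum_coeff, coeff_zero] at h1
    rw [← h1]
    congr 1
    · rw [monomial_pow, one_mul, coeff_monomial, if_pos rfl]
    · refine Finset.sum_congr rfl fun i hi => ?_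
      have hi := (Finset.mem_Icc.1 hi).2
      change _ = ((b i : R[X]) * _).coeff n
      rw [monomial_pow, one_mul]
      conv_rhs => rw [show n = i + (n - i) by omega]
      rw [show i + (n - i) - i = n - i by omega, coeff_mul_monomial]

/-- The elements integral over an ideal form an ideal. -/
theorem isIntOverIdeal_of_mem_intCl [Nontrivial R] {I : Ideal R} {r : R} (hr : r ∈ intCl I) :
    IsIntOverIdeal I r := by
  induction hr using Submodule.span_induction with
  | mem x hx => exact hx
  | zero => rw [isIntOverIdeal_iff, map_zero]; exact isIntegral_zero
  | add x y _ _ hx hy =>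
    rw [isIntOverIdeal_iff] at *
    rw [map_add]; exact hx.add hy
  | smul q x _ hx =>
    rw [isIntOverIdeal_iff] at *
    have h : monomial 1 (q • x) = C q * monomial 1 x := by rw [C_mul_monomial, smul_eq_mul]
    rw [h]
    refine IsIntegral.mul ?_ hx
    exact isIntegral_algebraMap (R := reesAlgebra I) (A := R[X])
      (x := ⟨C q, (reesAlgebra I).algebraMap_mem q⟩)

theorem intCl_mono [Nontrivial R] {I J : Ideal R} (h : I ≤ J) : intCl I ≤ intCl J :=
  Ideal.span_mono fun _ hr => hr.mono h

variable {k : Type*} [Field k] [Algebra k R] {𝒜 : ℕ → Submodule k R} [GradedAlgebra 𝒜]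

/-- An equation of integral dependence for a form of degree `c` stays valid when the `i`-th
coefficient is replaced by its component of degree `c * i`. -/
theorem homogeneous_equation {c n : ℕ} {r : R} (hr : r ∈ 𝒜 c) (b : ℕ → R)
    (h : r ^ n + ∑ i ∈ Finset.Icc 1 n, b i * r ^ (n - i) = 0) :
    r ^ n + ∑ i ∈ Finset.Icc 1 n, (DirectSum.decompose 𝒜 (b i) (c * i) : R) * r ^ (n - i) = 0 := by
  have hpow (m : ℕ) : r ^ m ∈ 𝒜 (c * m) := by
    simpa [mul_comm] using SetLike.pow_mem_graded m hr
  have h1 := congrArg (GradedAlgebra.proj 𝒜 (c * n)) h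
  rw [map_zero, map_add, map_sum, GradedAlgebra.proj_apply,
    DirectSum.decompose_of_mem_same 𝒜 (hpow n)] at h1
  rw [← h1]
  congr 1
  refine Finset.sum_congr rfl fun i hi => ?_
  have hi := (Finset.mem_Icc.1 hi).2
  rw [GradedAlgebra.proj_apply, DirectSum.coe_decompose_mul_of_right_mem_of_le 𝒜 (hpow (n - i))
    (Nat.mul_le_mul_left c (Nat.sub_le n i)), ← Nat.mul_sub, Nat.sub_sub_self hi]

/-- The part of `k[V]` in degree `c * i` is `V ^ i` when `V` consists of forms of degree `c`. -/
theorem decompose_mem_pow (hSG : IsStandardGraded k 𝒜) {V : Submodule k R} {c : ℕ} (hc : 0 < c)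
    (hV : V ≤ 𝒜 c) {a : R} (ha : a ∈ Algebra.adjoin k (V : Set R)) (i : ℕ) :
    (DirectSum.decompose 𝒜 a (c * i) : R) ∈ V ^ i := by
  obtain ⟨m, hm⟩ := exists_mem_pow_of_mem_adjoin (Y := 1 ⊔ V) le_sup_left
    (fun v hv => (le_sup_right : V ≤ 1 ⊔ V) hv) ha
  clear ha
  have hV0 (n : ℕ) {z : R} (hz : z ∈ V ^ n) : (DirectSum.decompose 𝒜 z (c * i) : R) ∈ V ^ i := by
    have hz' : z ∈ 𝒜 (c * n) := by
      rw [grade_mul_eq_pow hSG]; exact pow_le_pow_left' hV _ hz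
    by_cases hin : n = i
    · subst hin
      rwa [DirectSum.decompose_of_mem_same 𝒜 hz']
    · rw [DirectSum.decompose_of_mem_ne 𝒜 hz' fun h => hin (Nat.eq_of_mul_eq_mul_left hc h)]
      exact Submodule.zero_mem _
  induction m generalizing a with
  | zero => exact hV0 0 (by rwa [pow_zero] at hm ⊢)
  | succ m ih =>
    rw [one_sup_pow_succ] at hm
    obtain ⟨y, hy, z, hz, rfl⟩ := Submodule.mem_sup.1 hm
    rw [DirectSum.decompose_add, DirectSum.add_apply, Submodule.coe_add]
    exact Submodule.add_mem _ (ih hy) (hV0 _ hz)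

theorem isIntOverIdeal_of_isIntegral_adjoin [Nontrivial R] (hSG : IsStandardGraded k 𝒜)
    {I : Ideal R} {c : ℕ} (hc : 0 < c) {r : R} (hr : r ∈ 𝒜 c)
    (h : IsIntegral (Algebra.adjoin k (idealComp k 𝒜 I c : Set R)) r) : IsIntOverIdeal I r := by
  obtain ⟨n, hn, b, hb⟩ := exists_equation_of_isIntegral h
  refine ⟨n, hn, fun i => (DirectSum.decompose 𝒜 (b i : R) (c * i) : R), fun i _ _ => ?_,
    homogeneous_equation hr (fun i => (b i : R)) hb⟩
  have h1 := decompose_mem_pow hSG hc inf_le_right (b i).2 i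
  have h2 : ∀ j : ℕ, idealComp k 𝒜 I c ^ j ≤ (I ^ j).restrictScalars k := by
    intro j
    induction j with
    | zero => intro x _; simp
    | succ j ih =>
      rw [pow_succ, pow_succ, Submodule.mul_le]
      intro x hx y hy
      exact Ideal.mul_mem_mul (ih hx) hy.1
  exact h2 i h1

theorem GeneratedInDegLE.decompose_mem {I : Ideal R} {D : ℕ} (h : GeneratedInDegLE k 𝒜 I D)
    {r : R} (hr : r ∈ I) (i : ℕ) : (DirectSum.decompose 𝒜 r i : R) ∈ I := by
  obtain ⟨s, rfl, hs⟩ := h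
  have hh : (Ideal.span s).IsHomogeneous 𝒜 :=
    Ideal.homogeneous_span 𝒜 s fun x hx => by
      obtain ⟨i, _, hi⟩ := hs x hx
      exact ⟨i, hi⟩
  exact hh i hr

/-- If every element of `J_c` is integral over `k[I_c]`, then forms of degree `c` integral over `J`
are integral over `I`. -/
theorem isIntOverIdeal_trans [Nontrivial R] (hSG : IsStandardGraded k 𝒜)
    {I J : Ideal R} {D c : ℕ} (hDJ : GeneratedInDegLE k 𝒜 J D) (hc : D < c)
    (hW : ∀ w ∈ idealComp k 𝒜 J c, IsIntegral (Algebra.adjoin k (idealComp k 𝒜 I c : Set R)) w)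
    {r : R} (hr : r ∈ 𝒜 c) (h : IsIntOverIdeal J r) : IsIntOverIdeal I r := by
  refine isIntOverIdeal_of_isIntegral_adjoin hSG (by omega) hr ?_
  set A := Algebra.adjoin k (idealComp k 𝒜 I c : Set R)
  obtain ⟨n, hn, b, hb, he⟩ := h
  have he := homogeneous_equation hr b he
  have hWE : idealComp k 𝒜 J c ≤
      Subalgebra.toSubmodule ((integralClosure A R).restrictScalars k) := hW
  have hmem (i : ℕ) (hi : i ∈ Finset.Icc 1 n) :
      (DirectSum.decompose 𝒜 (b i) (c * i) : R) ∈ integralClosure A R := by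
    rw [Finset.mem_Icc] at hi
    have h1 : (DirectSum.decompose 𝒜 (b i) (c * i) : R) ∈ idealComp k 𝒜 (J ^ i) (c * i) :=
      ⟨(hDJ.pow i).decompose_mem (hb i hi.1 hi.2) _, SetLike.coe_mem _⟩
    rw [idealComp_pow hSG hDJ hc.le] at h1
    exact toSubmodule_pow_le _ i (pow_le_pow_left' hWE i h1)
  classical
  have hint : IsIntegral (integralClosure A R) r := by
    refine isIntegral_of_equation (n := n) (fun i =>
      if hi : i ∈ Finset.Icc 1 n then ⟨_, hmem i hi⟩ else 0) ?_
    rw [← he]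
    congr 1
    refine Finset.sum_congr rfl fun i hi => ?_
    rw [dif_pos hi]
    rfl
  exact isIntegral_trans r hint

end Integrality

/-! ### Comparison of the density functions -/

section Density

variable {k : Type*} [Field k] {R : Type*} [CommRing R] [IsDomain R] [Algebra k R]
  {𝒜 : ℕ → Submodule k R} [GradedAlgebra 𝒜]

theorem ne_bot_of_idealHeight_pos {I : Ideal R} (h : 0 < idealHeight I) : I ≠ ⊥ := by
  rintro rfl
  have h1 : idealHeight (⊥ : Ideal R) ≤ Order.height (⊥ : PrimeSpectrum R) :=
    iInf₂_le (f := fun (p : PrimeSpectrum R) (_ : p ∈ {p : PrimeSpectrum R | ⊥ ≤ p.asIdeal}) =>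
      Order.height p) ⊥ (bot_le : (⊥ : Ideal R) ≤ _)
  rw [Order.height_bot] at h1
  exact absurd h (not_lt.2 h1)

/-- If some `w ∈ J_c` were not integral over `k[I_c]`, the dimension of `(Jⁿ)_{cn}` would exceed
that of `(Iⁿ)_{cn}` by a positive multiple of `n ^ (d - 1)`. -/
theorem exists_gap (hSG : IsStandardGraded k 𝒜) {d : ℕ} (hd : 2 ≤ d)
    (hdim : ringKrullDim R = (d : WithBot ℕ∞)) {I J : Ideal R} (hI : I ≠ ⊥) (hIJ : I ≤ J)
    {D c : ℕ} (hDI : GeneratedInDegLE k 𝒜 I D) (hDJ : GeneratedInDegLE k 𝒜 J D) (hc : D < c)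
    {w : R} (hwJ : w ∈ idealComp k 𝒜 J c)
    (hw : ¬ IsIntegral (Algebra.adjoin k (idealComp k 𝒜 I c : Set R)) w) :
    ∃ s : ℕ, 0 < s ∧ ∀ n : ℕ, 0 < n → n ^ (d - 1) + s ^ (d - 1) * compLen k 𝒜 (I ^ n) (c * n) ≤
      s ^ (d - 1) * compLen k 𝒜 (J ^ n) (c * n) := by
  set V := idealComp k 𝒜 I c with hV
  set W := idealComp k 𝒜 J c with hW
  have : Module.Finite k V := idealComp_finite hSG I c
  have : Module.Finite k W := idealComp_finite hSG J c
  set ι := IsScalarTower.toAlgHom k R (FractionRing R) with hι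
  have hιinj : Function.Injective ι := IsFractionRing.injective R (FractionRing R)
  have hιinj' : Function.Injective ι.toLinearMap := hιinj
  have hfin (P : Submodule k R) : Module.finrank k (P.map ι.toLinearMap) = Module.finrank k P :=
    (Submodule.equivMapOfInjective _ hιinj' P).finrank_eq.symm
  obtain ⟨s, hs⟩ := exists_lower_growth_idealComp hSG (by omega) hdim hI hDI hc
  obtain ⟨t, ht, hgap⟩ := growth_gap (K := FractionRing R) d (V.map ι.toLinearMap) (ι w)
    (by
      intro hint
      apply hw
      have e1 : Algebra.adjoin k ((V.map ι.toLinearMap : Submodule k (FractionRing R)) :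
          Set (FractionRing R)) = (Algebra.adjoin k (V : Set R)).map ι := by
        rw [AlgHom.map_adjoin]; rfl
      rw [e1] at hint
      let e := (Algebra.adjoin k (V : Set R)).equivMapOfInjective ι hιinj
      have h2 := IsIntegral.map_of_comp_eq (T := Algebra.adjoin k (V : Set R))
        (e.symm : _ →+* Algebra.adjoin k (V : Set R)) (RingHom.id (FractionRing R)) (by
          ext x
          obtain ⟨y, rfl⟩ := e.surjective x
          simp [e]
          rfl) hint
      exact (isIntegral_algHom_iff (IsScalarTower.toAlgHom (Algebra.adjoin k (V : Set R)) R
        (FractionRing R)) hιinj).1 h2)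
    ⟨s, fun n => (hs n).trans (by
      rw [← Submodule.map_one ι, ← Submodule.map_sup, ← Submodule.map_pow, hfin])⟩
  refine ⟨t, ht, fun n hn => ?_⟩
  have h1 := hgap n hn
  rw [← Submodule.map_pow, hfin] at h1
  have h2 : (V.map ι.toLinearMap ⊔ Submodule.span k {ι w}) ^ n ≤ (W ^ n).map ι.toLinearMap := by
    rw [Submodule.map_pow]
    refine pow_le_pow_left' (sup_le (Submodule.map_mono (idealComp_mono 𝒜 hIJ c)) ?_) n
    rw [Submodule.span_singleton_le_iff_mem]
    exact ⟨w, hwJ, rfl⟩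
  have := finite_pow W n
  have h3 := Submodule.finrank_mono h2
  rw [hfin] at h3
  rw [compLen, compLen, idealComp_pow hSG hDI hc.le, idealComp_pow hSG hDJ hc.le]
  exact h1.trans (Nat.mul_le_mul_left _ h3)

/-- A gap of order `n ^ (d - 1)` makes the inequality of densities strict, because the density
sequences are bounded: the real `limsup` is not a junk value. -/
theorem adicDensity_lt (hSG : IsStandardGraded k 𝒜) {d : ℕ} (hd : 2 ≤ d)
    (hdim : ringKrullDim R = (d : WithBot ℕ∞)) {I J : Ideal R} {c s : ℕ} (hs : 0 < s)
    (hgap : ∀ n : ℕ, 0 < n → n ^ (d - 1) + s ^ (d - 1) * compLen k 𝒜 (I ^ n) (c * n) ≤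
      s ^ (d - 1) * compLen k 𝒜 (J ^ n) (c * n)) :
    adicDensity k 𝒜 I d (c : ℝ) < adicDensity k 𝒜 J d (c : ℝ) := by
  obtain ⟨C, hC⟩ := exists_grade_upper hSG (by omega) hdim
  have hfloor (n : ℕ) : ⌊(c : ℝ) * (n : ℝ)⌋₊ = c * n := by
    rw [← Nat.cast_mul, Nat.floor_natCast]
  simp only [adicDensity, hfloor]
  have hbd (M : Ideal R) (n : ℕ) (hn : 0 < n) :
      (Nat.factorial d : ℝ) * compLen k 𝒜 (M ^ n) (c * n) / (n : ℝ) ^ (d - 1) ≤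
        Nat.factorial d * (C * (c + 1) ^ (d - 1)) := by
    have hn' : (0 : ℝ) < (n : ℝ) ^ (d - 1) := by positivity
    rw [div_le_iff₀ hn', mul_assoc]
    refine mul_le_mul_of_nonneg_left ?_ (by positivity)
    have := grade_finite hSG (c * n)
    have h1 : compLen k 𝒜 (M ^ n) (c * n) ≤ Module.finrank k (𝒜 (c * n)) :=
      Submodule.finrank_mono inf_le_right
    have h2 : (c * n + 1) ^ (d - 1) ≤ (c + 1) ^ (d - 1) * n ^ (d - 1) := by
      rw [← mul_pow]; exact Nat.pow_le_pow_left (by nlinarith) _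
    have h3 := h1.trans ((hC (c * n)).trans (Nat.mul_le_mul_left C h2))
    rw [← mul_assoc] at h3
    exact_mod_cast h3
  have hbdd (M : Ideal R) : IsBoundedUnder (· ≤ ·) atTop (fun n : ℕ =>
      (Nat.factorial d : ℝ) * compLen k 𝒜 (M ^ n) (c * n) / (n : ℝ) ^ (d - 1)) :=
    ⟨_, eventually_map.2 ((eventually_gt_atTop 0).mono fun n hn => hbd M n hn)⟩
  have hcobdd (M : Ideal R) : IsCoboundedUnder (· ≤ ·) atTop (fun n : ℕ =>
      (Nat.factorial d : ℝ) * compLen k 𝒜 (M ^ n) (c * n) / (n : ℝ) ^ (d - 1)) :=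
    IsBoundedUnder.isCoboundedUnder_le ⟨0, eventually_map.2 (.of_forall fun n => by positivity)⟩
  set ε : ℝ := Nat.factorial d / (s : ℝ) ^ (d - 1) with hε
  have hεpos : 0 < ε := by positivity
  refine (lt_add_of_pos_right _ hεpos).trans_le ?_
  rw [← limsup_add_const atTop _ ε (hbdd I) (hcobdd I)]
  refine limsup_le_limsup ?_ ?_ (hbdd J)
  · filter_upwards [eventually_gt_atTop 0] with n hn
    have hn' : (0 : ℝ) < (n : ℝ) ^ (d - 1) := by positivity
    have hs' : (0 : ℝ) < (s : ℝ) ^ (d - 1) := by positivity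
    have h1 : (n : ℝ) ^ (d - 1) + (s : ℝ) ^ (d - 1) * compLen k 𝒜 (I ^ n) (c * n) ≤
      (s : ℝ) ^ (d - 1) * compLen k 𝒜 (J ^ n) (c * n) := by exact_mod_cast hgap n hn
    have h2 : (Nat.factorial d : ℝ) * compLen k 𝒜 (I ^ n) (c * n) / (n : ℝ) ^ (d - 1) + ε =
        Nat.factorial d * ((n : ℝ) ^ (d - 1) + (s : ℝ) ^ (d - 1) * compLen k 𝒜 (I ^ n) (c * n)) /
          ((s : ℝ) ^ (d - 1) * (n : ℝ) ^ (d - 1)) := by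
      rw [hε]; field_simp; ring
    have h3 : (Nat.factorial d : ℝ) * compLen k 𝒜 (J ^ n) (c * n) / (n : ℝ) ^ (d - 1) =
        Nat.factorial d * ((s : ℝ) ^ (d - 1) * compLen k 𝒜 (J ^ n) (c * n)) /
          ((s : ℝ) ^ (d - 1) * (n : ℝ) ^ (d - 1)) := by
      field_simp
    rw [h2, h3]
    gcongr
  · exact IsBoundedUnder.isCoboundedUnder_le
      ⟨0, eventually_map.2 (.of_forall fun n => by positivity)⟩

end Density

/-- If `c > 𝐝` is an integer at which the adic density functions of
`I` and `J` agree, then the degree-`c` components of the integral closures coincide: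
`(J̄)_c = (Ī)_c`. -/
theorem statement2
    (k : Type*) [Field k] (R : Type*) [CommRing R] [IsDomain R] [IsNoetherianRing R]
    [Algebra k R] (𝒜 : ℕ → Submodule k R) [GradedAlgebra 𝒜]
    (hSG : IsStandardGraded k 𝒜)
    (d : ℕ) (hd : 2 ≤ d) (hdim : ringKrullDim R = (d : WithBot ℕ∞))
    (I J : Ideal R) (hIhom : I.IsHomogeneous 𝒜) (hJhom : J.IsHomogeneous 𝒜) (hIJ : I ≤ J)
    (hht0 : 0 < idealHeight I) (hhtIJ : idealHeight I ≤ idealHeight J)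
    (hhtJ : idealHeight J < (d : ℕ∞))
    (D : ℕ) (hDI : GeneratedInDegLE k 𝒜 I D) (hDJ : GeneratedInDegLE k 𝒜 J D)
    (c : ℕ) (hc : D < c)
    (hf : adicDensity k 𝒜 I d (c : ℝ) = adicDensity k 𝒜 J d (c : ℝ)) :
    idealComp k 𝒜 (intCl J) c = idealComp k 𝒜 (intCl I) c := by
  have hI : I ≠ ⊥ := ne_bot_of_idealHeight_pos hht0
  have hW : ∀ w ∈ idealComp k 𝒜 J c,
      IsIntegral (Algebra.adjoin k (idealComp k 𝒜 I c : Set R)) w := by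
    intro w hwJ
    by_contra hw
    obtain ⟨s, hs, hgap⟩ := exists_gap hSG hd hdim hI hIJ hDI hDJ hc hwJ hw
    exact (adicDensity_lt hSG hd hdim hs hgap).ne hf
  refine le_antisymm ?_ (idealComp_mono 𝒜 (intCl_mono hIJ) c)
  rintro r ⟨hr, hrc⟩
  exact ⟨Ideal.subset_span
    (isIntOverIdeal_trans hSG hDJ hc hW hrc (isIntOverIdeal_of_mem_intCl hr)), hrc⟩
end

section
/- Suppose ℓ_R(J/I) < ∞. Then there exists an integer c > 0 such that (Jⁿ)_m = (Iⁿ)_m for all integers n > 0 and all integers m ≥ cn. -/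
/-!
Let `M` be the ideal generated by the linear forms. The powers `Mᵗ J` induce a descending chain in
the Artinian module `J / I`, so `Mᴺ J ⊆ Mˢ J + I` for some `N` and every `s ≥ N`. As `Mˢ` starts in
degree `s` and `I` is homogeneous, comparing components of degree `< s` for large `s` gives
`Mᴺ J ⊆ I` (`exists_linearIdeal_pow_mul_le`), hence `M^(Nn) Jⁿ ⊆ Iⁿ` for all `n`.

Since `R` is Noetherian, `J` is generated by homogeneous elements of degree at most some `D`
(`exists_generatedInDegLE`), hence `Jⁿ` in degree at most `Dn`. As `R` is generated in degree one,
the part of `Jⁿ` in degree `m` lies in `M^(m - Dn) Jⁿ` (`mem_linearIdeal_pow_mul`). For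
`m ≥ (D + N) n` this is contained in `M^(Nn) Jⁿ ⊆ Iⁿ`.
-/

open Filter Polynomial MeasureTheory

section Helpers

open scoped Pointwise

variable {k : Type*} [Field k] {R : Type*} [CommRing R] [Algebra k R]
  {𝒜 : ℕ → Submodule k R}

/-- The ideal generated by the forms of degree one; for a standard graded algebra this is the
irrelevant ideal. -/
def linearIdeal (𝒜 : ℕ → Submodule k R) : Ideal R := Ideal.span (𝒜 1 : Set R)

theorem IsStandardGraded.mem_linearIdeal_pow (hSG : IsStandardGraded k 𝒜) (j : ℕ) :
    ∀ x ∈ 𝒜 j, x ∈ linearIdeal 𝒜 ^ j := by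
  induction j with
  | zero => intro x _; simp
  | succ j ih =>
    have h : 𝒜 1 * 𝒜 j ≤ (linearIdeal 𝒜 ^ (j + 1)).restrictScalars k := by
      refine Submodule.mul_le.2 fun a ha b hb => ?_
      rw [Submodule.restrictScalars_mem, pow_succ']
      exact Ideal.mul_mem_mul (Ideal.subset_span ha) (ih b hb)
    intro x hx
    rw [hSG.2.1 j] at hx
    exact h hx

theorem IsStandardGraded.isNoetherianRing [GradedAlgebra 𝒜] (hSG : IsStandardGraded k 𝒜) :
    IsNoetherianRing R := by
  obtain ⟨S, hS⟩ := hSG.2.2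
  have h1 : 𝒜 1 ≤ (Algebra.adjoin k (S : Set R)).toSubmodule := by
    rw [← hS]
    exact Submodule.span_le.2 Algebra.subset_adjoin
  have hj : ∀ j, 𝒜 j ≤ (Algebra.adjoin k (S : Set R)).toSubmodule := by
    intro j
    induction j with
    | zero =>
      rw [hSG.1, Submodule.span_le, Set.singleton_subset_iff]
      exact one_mem (Algebra.adjoin k (S : Set R))
    | succ j ih =>
      rw [hSG.2.1 j]
      exact Submodule.mul_le.2 fun a ha b hb =>
        mul_mem (S := Subalgebra k R) (h1 ha) (ih hb)
  have : Algebra.FiniteType k R := by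
    refine ⟨S, ?_⟩
    classical
    rw [eq_top_iff]
    intro x _
    rw [← DirectSum.sum_support_decompose 𝒜 x]
    exact sum_mem fun i _ => hj i (SetLike.coe_mem _)
  exact Algebra.FiniteType.isNoetherianRing k R

theorem GeneratedInDegLE.pow_s5 [GradedAlgebra 𝒜] {J : Ideal R} {D : ℕ}
    (h : GeneratedInDegLE k 𝒜 J D) (n : ℕ) : GeneratedInDegLE k 𝒜 (J ^ n) (D * n) := by
  obtain ⟨s, rfl, hs⟩ := h
  induction n with
  | zero =>
    refine ⟨{1}, by simp, ?_⟩
    rintro r rfl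
    exact ⟨0, by simp, SetLike.GradedOne.one_mem⟩
  | succ n ih =>
    obtain ⟨t, ht, hdeg⟩ := ih
    refine ⟨t * s, by rw [pow_succ, ht, Ideal.span_mul_span'], ?_⟩
    rintro _ ⟨a, ha, b, hb, rfl⟩
    obtain ⟨i, hi, hai⟩ := hdeg a ha
    obtain ⟨j, hj, hbj⟩ := hs b hb
    exact ⟨i + j, by rw [mul_add, mul_one]; exact add_le_add hi hj,
      SetLike.GradedMul.mul_mem hai hbj⟩

theorem exists_generatedInDegLE [GradedAlgebra 𝒜] {J : Ideal R} (hJ : J.IsHomogeneous 𝒜)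
    (hfg : J.FG) : ∃ D, GeneratedInDegLE k 𝒜 J D := by
  classical
  obtain ⟨S, hS⟩ := hfg
  set D := S.sup fun x => (DirectSum.decompose 𝒜 x).support.sup id with hD
  refine ⟨D, {r | r ∈ J ∧ ∃ i ≤ D, r ∈ 𝒜 i}, le_antisymm ?_ ?_, fun r hr => hr.2⟩
  · conv_lhs => rw [← hS]
    refine Submodule.span_le.2 fun x hx => ?_
    rw [SetLike.mem_coe, ← DirectSum.sum_support_decompose 𝒜 x]
    refine sum_mem fun i hi => Ideal.subset_span ⟨hJ i ?_, i, ?_, SetLike.coe_mem _⟩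
    · rw [← hS]
      exact Submodule.subset_span hx
    · exact (Finset.le_sup (f := id) hi).trans
        (Finset.le_sup (f := fun x => (DirectSum.decompose 𝒜 x).support.sup id) hx)
  · exact Ideal.span_le.2 fun r hr => hr.1

theorem mem_linearIdeal_pow_mul [GradedAlgebra 𝒜] (hSG : IsStandardGraded k 𝒜) {K : Ideal R}
    {E : ℕ} (hK : GeneratedInDegLE k 𝒜 K E) {m : ℕ} {x : R} (hx : x ∈ K) (hxm : x ∈ 𝒜 m) :
    x ∈ linearIdeal 𝒜 ^ (m - E) * K := by
  obtain ⟨s, rfl, hs⟩ := hK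
  -- Proving this for the degree-`m` component of every element makes the claim additive.
  have key : ∀ y ∈ Ideal.span s,
      (DirectSum.decompose 𝒜 y m : R) ∈ linearIdeal 𝒜 ^ (m - E) * Ideal.span s := by
    intro y hy
    induction hy using Submodule.closure_induction with
    | zero => simp
    | add a b _ _ ha hb =>
      rw [DirectSum.decompose_add, DirectSum.add_apply, Submodule.coe_add]
      exact add_mem ha hb
    | smul_mem a g hg =>
      obtain ⟨i, hi, hgi⟩ := hs g hg
      rw [smul_eq_mul]
      by_cases him : i ≤ m
      · rw [DirectSum.coe_decompose_mul_of_right_mem_of_le 𝒜 hgi him]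
        exact Ideal.mul_mem_mul (Ideal.pow_le_pow_right (by omega)
          (hSG.mem_linearIdeal_pow _ _ (SetLike.coe_mem _))) (Ideal.subset_span hg)
      · rw [DirectSum.coe_decompose_mul_of_right_mem_of_not_le 𝒜 hgi him]
        exact zero_mem _
  have := key x hx
  rwa [DirectSum.decompose_of_mem_same 𝒜 hxm] at this

theorem decompose_eq_zero_of_mem_linearIdeal_pow [GradedAlgebra 𝒜] {s : ℕ} :
    ∀ x ∈ linearIdeal 𝒜 ^ s, ∀ d < s, (DirectSum.decompose 𝒜 x d : R) = 0 := by
  intro x hx d hd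
  rw [linearIdeal, Ideal.span, Submodule.span_pow] at hx
  induction hx using Submodule.closure_induction with
  | zero => simp
  | add a b _ _ ha hb =>
    rw [DirectSum.decompose_add, DirectSum.add_apply, Submodule.coe_add, ha, hb, add_zero]
  | smul_mem a g hg =>
    have hgs : g ∈ 𝒜 s := by
      have : ∀ (n : ℕ) (g : R), g ∈ (𝒜 1 : Set R) ^ n → g ∈ 𝒜 n := by
        intro n
        induction n with
        | zero =>
          intro g hg
          rw [pow_zero, Set.mem_one] at hg
          rw [hg]
          exact SetLike.GradedOne.one_mem
        | succ n ih =>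
          intro g hg
          rw [pow_succ] at hg
          obtain ⟨a, ha, b, hb, rfl⟩ := hg
          exact SetLike.GradedMul.mul_mem (ih a ha) hb
      exact this s g hg
    rw [smul_eq_mul, DirectSum.coe_decompose_mul_of_right_mem_of_not_le 𝒜 hgs (by omega)]

theorem mem_of_forall_decompose_mem [GradedAlgebra 𝒜] {I : Ideal R} {x : R}
    (h : ∀ d, (DirectSum.decompose 𝒜 x d : R) ∈ I) : x ∈ I := by
  classical
  rw [← DirectSum.sum_support_decompose 𝒜 x]
  exact sum_mem fun d _ => h d

/-- A descending chain of submodules becomes constant modulo `P` when the quotient by `P` is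
Artinian. -/
theorem exists_le_sup_of_isArtinian_quotient {A M : Type*} [Ring A] [AddCommGroup M] [Module A M]
    {P : Submodule A M} (hP : IsArtinian A (M ⧸ P)) (L : ℕ → Submodule A M) (hL : Antitone L) :
    ∃ N, ∀ s, N ≤ s → L N ≤ L s ⊔ P := by
  let f : ℕ →o (Submodule A (M ⧸ P))ᵒᵈ :=
    ⟨fun t => OrderDual.toDual ((L t).map P.mkQ), fun a b hab => Submodule.map_mono (hL hab)⟩
  obtain ⟨N, hN⟩ := IsArtinian.monotone_stabilizes f
  refine ⟨N, fun s hs => ?_⟩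
  have h : (L N).map P.mkQ = (L s).map P.mkQ := hN s hs
  have h2 : L N ≤ ((L s).map P.mkQ).comap P.mkQ := h ▸ Submodule.le_comap_map _ _
  rwa [Submodule.comap_map_mkQ, sup_comm] at h2

theorem exists_ideal_le_sup {I J : Ideal R}
    (hfin : IsFiniteLength R (↥J ⧸ Submodule.comap (Submodule.subtype J) I))
    (L : ℕ → Ideal R) (hL : Antitone L) (hLJ : ∀ t, L t ≤ J) :
    ∃ N, ∀ s, N ≤ s → L N ≤ L s ⊔ I := by
  obtain ⟨N, hN⟩ := exists_le_sup_of_isArtinian_quotient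
    (isFiniteLength_iff_isNoetherian_isArtinian.1 hfin).2
    (fun t => Submodule.comap (Submodule.subtype J) (L t)) fun a b hab =>
      Submodule.comap_mono (hL hab)
  refine ⟨N, fun s hs x hx => ?_⟩
  have hx' : (⟨x, hLJ N hx⟩ : J) ∈ Submodule.comap (Submodule.subtype J) (L N) :=
    Submodule.mem_comap.2 hx
  obtain ⟨y, hy, z, hz, hyz⟩ := Submodule.mem_sup.1 (hN s hs hx')
  exact Submodule.mem_sup.2 ⟨y, hy, z, hz, congrArg Subtype.val hyz⟩

theorem exists_linearIdeal_pow_mul_le [GradedAlgebra 𝒜] {I J : Ideal R}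
    (hI : I.IsHomogeneous 𝒜)
    (hfin : IsFiniteLength R (↥J ⧸ Submodule.comap (Submodule.subtype J) I)) :
    ∃ N : ℕ, linearIdeal 𝒜 ^ N * J ≤ I := by
  obtain ⟨N, hN⟩ := exists_ideal_le_sup hfin (fun t => linearIdeal 𝒜 ^ t * J)
    (fun a b hab => Ideal.mul_mono_left (Ideal.pow_le_pow_right hab)) fun t => Ideal.mul_le_right
  refine ⟨N, fun x hx => mem_of_forall_decompose_mem (𝒜 := 𝒜) fun d => ?_⟩
  -- Any exponent that is at least `N` and exceeds `d` would do.
  have hs : N ≤ N + d + 1 := by omega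
  obtain ⟨y, hy, z, hz, hyz⟩ := Submodule.mem_sup.1 (hN _ hs hx)
  have h1 := hI d hz
  have h0 := decompose_eq_zero_of_mem_linearIdeal_pow (𝒜 := 𝒜) y
    (Ideal.mul_le_left hy) d (by omega)
  rwa [← hyz, DirectSum.decompose_add, DirectSum.add_apply, Submodule.coe_add, h0, zero_add]

end Helpers

/-- In a standard graded finitely generated algebra over a field:
if `I ⊆ J` are homogeneous ideals with `ℓ_R(J/I) < ∞`, then there is an integer
`c > 0` such that `(Jⁿ)_m = (Iⁿ)_m` for all `n > 0` and `m ≥ cn`. -/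
theorem statement5
    (k : Type*) [Field k] (R : Type*) [CommRing R] [Algebra k R]
    (𝒜 : ℕ → Submodule k R) [GradedAlgebra 𝒜]
    (hSG : IsStandardGraded k 𝒜)
    (I J : Ideal R) (hIhom : I.IsHomogeneous 𝒜) (hJhom : J.IsHomogeneous 𝒜) (hIJ : I ≤ J)
    (hfin : IsFiniteLength R (↥J ⧸ Submodule.comap (Submodule.subtype J) I)) :
    ∃ c : ℕ, 0 < c ∧ ∀ n m : ℕ, 0 < n → c * n ≤ m →
      idealComp k 𝒜 (J ^ n) m = idealComp k 𝒜 (I ^ n) m := by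
  have := hSG.isNoetherianRing
  obtain ⟨D, hD⟩ := exists_generatedInDegLE hJhom (IsNoetherian.noetherian J)
  obtain ⟨N, hN⟩ := exists_linearIdeal_pow_mul_le hIhom hfin
  refine ⟨D + N + 1, by omega, fun n m _ hm => le_antisymm ?_ ?_⟩
  · rintro x ⟨hx, hxm⟩
    refine ⟨?_, hxm⟩
    have h1 := mem_linearIdeal_pow_mul hSG (hD.pow_s5 n) hx hxm
    have hle : N * n ≤ m - D * n := by
      have : (D + N + 1) * n = D * n + N * n + n := by ring
      omega
    have h2 : linearIdeal 𝒜 ^ (m - D * n) * J ^ n ≤ I ^ n := by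
      refine (Ideal.mul_mono_left (Ideal.pow_le_pow_right hle)).trans ?_
      rw [pow_mul, ← mul_pow]
      exact Ideal.pow_right_mono hN n
    exact h2 h1
  · rintro x ⟨hx, hxm⟩
    exact ⟨Ideal.pow_right_mono hIJ n hx, hxm⟩
end
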